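/- arXiv:1502.00825 — 6 statements merged into one kernel-verified Lean document; each statement's English description precedes it below -/
import Mathlib

section
/- Let s : ℤ × ℤ → ℂ. Then s is positive semidefinite on the *-semigroup ℤ² — i.e. for every r ∈ ℕ, all ξ₁,…,ξ_r ∈ ℤ × ℤ and all c₁,…,c_r ∈ ℂ, the sum Σ_{i,j=1}^{r} c_i · conj(c_j) · s(ξ_i* + ξ_j) is a nonnegative real number, where (m,n)* := (n,m) — if and only if there exists a positive Borel measure μ on ℂ with μ({0}) = 0 such that for all (m,n) ∈ ℤ × ℤ the function z ↦ z^m · conj(z)^n (defined for z ≠ 0, using integer powers) is μ-integrable and s(m,n) = ∫_{ℂ∖{0}} z^m · conj(z)^n dμ(z). -/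
/-!
For `t` real and `‖v‖ = 1`, the monomial `z ^ m * conj z ^ n` at `z = t * v` is
`t ^ (m + n) * v ^ (m - n)`. Extended by zero to the exponents `(k, l)` with `k + l` odd, a positive
semidefinite sequence on `ℤ²` becomes a positive semidefinite sequence for the involution
`(k, l) ↦ (k, -l)`. A Fejér sum in the second exponent, at a point `v` of the circle, then leaves a
sequence on `ℤ` with positive semidefinite Hankel matrix, which is nonnegative on the Laurent
polynomials in `t` that are nonnegative for `t ≠ 0`, because these are sums of two squares.
Averaging over `v` multiplies the moment of index `(m, n)` by `N - |m - n|`; after division by `N`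
the limit `N → ∞` shows that the moment functional has nonnegative real part on every Laurent
polynomial in `z` and `conj z` with nonnegative real part on `ℂ ∖ {0}`. The real parts of the
Laurent polynomials form an adapted space in the sense of Choquet, so the functional is integration
against a measure, by the Riesz extension theorem and the Riesz–Markov–Kakutani theorem.

The converse is positivity of Gram kernels in `L²(μ)`.
-/

open Filter Finset MeasureTheory Topology
open scoped ComplexConjugate ComplexOrder CompactlySupported

section PosSemidefKernels

variable {n R : Type*} [Ring R] [PartialOrder R] [StarRing R] {M : Matrix n n R}

theorem sum_nonneg_of_posSemidef (hM : M.PosSemidef) {ι : Type*} (S : Finset ι) (ξ : ι → n)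
    (c : ι → R) : 0 ≤ ∑ i ∈ S, ∑ j ∈ S, star (c i) * M (ξ i) (ξ j) * c j := by
  refine ((hM.submatrix fun i : S => ξ i).2
    (Finsupp.equivFunOnFinite.symm fun i => c i)).trans_eq ?_
  rw [Finsupp.sum_fintype _ _ (by simp), ← sum_coe_sort S]
  refine Finset.sum_congr rfl fun i _ => ?_
  rw [Finsupp.sum_fintype _ _ fun _ => mul_zero _, ← sum_coe_sort S]
  rfl

theorem posSemidef_compression (hM : M.PosSemidef) {m ι : Type*} (S : Finset ι) (e : m → ι → n)
    (w : ι → R) :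
    (Matrix.of fun k l => ∑ i ∈ S, ∑ j ∈ S, star (w i) * M (e k i) (e l j) * w j).PosSemidef := by
  refine ⟨Matrix.IsHermitian.ext fun k l => ?_, fun x => ?_⟩
  · simp only [Matrix.of_apply, star_sum, star_mul, star_star, hM.1.apply, ← mul_assoc]
    exact sum_comm
  · have h := sum_nonneg_of_posSemidef hM (x.support ×ˢ S) (fun p => e p.1 p.2)
      (fun p => w p.2 * x p.1)
    simp only [sum_product] at h
    refine h.trans_eq (sum_congr rfl fun k _ => ?_)
    rw [sum_comm]
    refine sum_congr rfl fun l _ => ?_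
    simp only [Matrix.of_apply, mul_sum, sum_mul, star_mul, mul_assoc]

theorem posSemidef_pinching [IsOrderedAddMonoid R] (hM : M.PosSemidef) {κ : Type*} [DecidableEq κ]
    (f : n → κ) : (Matrix.of fun i j => if f i = f j then M i j else 0).PosSemidef := by
  refine ⟨Matrix.IsHermitian.ext fun i j => ?_, fun x => ?_⟩
  · simp only [Matrix.of_apply, apply_ite star, star_zero, hM.1.apply, eq_comm]
  · have h : ∀ k ∈ x.support.image f, 0 ≤ ∑ i ∈ x.support with f i = k,
        ∑ j ∈ x.support with f j = k, star (x i) * M i j * x j :=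
      fun k _ => sum_nonneg_of_posSemidef hM _ id x
    refine (sum_nonneg h).trans_eq ?_
    rw [Finsupp.sum, ← sum_fiberwise_of_maps_to (g := f) fun i hi => mem_image_of_mem f hi]
    refine sum_congr rfl fun k _ => sum_congr rfl fun i hi => ?_
    rw [Finsupp.sum, sum_filter]
    refine sum_congr rfl fun j _ => ?_
    simp only [Matrix.of_apply, (mem_filter.1 hi).2, eq_comm (a := k), mul_ite, ite_mul, mul_zero,
      zero_mul]

end PosSemidefKernels

theorem posSemidef_iff_forall_fin {n : Type*} {M : Matrix n n ℂ} :
    M.PosSemidef ↔ ∀ (r : ℕ) (ξ : Fin r → n) (c : Fin r → ℂ),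
      0 ≤ ∑ i, ∑ j, c i * conj (c j) * M (ξ i) (ξ j) := by
  refine ⟨fun hM r ξ c => ?_, fun h => ⟨Matrix.IsHermitian.ext fun i j => ?_, fun x => ?_⟩⟩
  · refine (sum_nonneg_of_posSemidef hM univ ξ (star c)).trans_eq ?_
    simp [mul_right_comm]
  · have hi := h 1 ![i] ![1]
    have hj := h 1 ![j] ![1]
    have h₁ := h 2 ![i, j] ![1, 1]
    have hI := h 2 ![i, j] ![1, Complex.I]
    -- The forms at `(1, 1)` and `(1, I)` are real: this relates the parts of `M i j` and `M j i`.
    simp only [univ_unique, Fin.default_eq_zero, Fin.isValue, Matrix.cons_val_fin_one, map_one,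
      mul_one, one_mul, sum_const, card_singleton, one_smul, Complex.nonneg_iff, Fin.sum_univ_two,
      Matrix.cons_val_zero, Matrix.cons_val_one, Complex.add_re, Complex.add_im, Complex.conj_I,
      mul_neg, neg_mul, Complex.I_mul_I, neg_neg, Complex.neg_re, Complex.mul_re, Complex.I_re,
      zero_mul, Complex.I_im, zero_sub, Complex.neg_im, Complex.mul_im, zero_add] at hi hj h₁ hI
    refine Complex.ext ?_ ?_ <;> simp <;> linarith
  · let e := x.support.equivFin
    have hsum (f : n → ℂ) : ∑ i ∈ x.support, f i = ∑ i, f (e.symm i) := by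
      rw [← sum_coe_sort, ← e.symm.sum_comp]
    refine (h #x.support (fun i => e.symm i) fun i => conj (x (e.symm i))).trans_eq ?_
    simp only [Finsupp.sum, hsum, starRingEnd_apply, star_star, mul_right_comm]

theorem posSemidef_gram_infinite {n 𝕜 H : Type*} [RCLike 𝕜] [SeminormedAddCommGroup H]
    [InnerProductSpace 𝕜 H] (v : n → H) : (Matrix.gram 𝕜 v).PosSemidef := by
  refine ⟨Matrix.isHermitian_gram 𝕜 v, fun x => ?_⟩
  calc (0 : 𝕜) ≤ inner 𝕜 (x.sum fun i c => c • v i) (x.sum fun i c => c • v i) := by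
        rw [inner_self_eq_norm_sq_to_K]
        positivity
    _ = x.sum fun i a => x.sum fun j b => star a * Matrix.gram 𝕜 v i j * b := by
        rw [Finsupp.sum_inner]
        refine Finsupp.sum_congr fun i _ => ?_
        rw [Finsupp.inner_sum]
        refine Finsupp.sum_congr fun j _ => ?_
        rw [Matrix.gram_apply, inner_smul_left, inner_smul_right, starRingEnd_apply, ← mul_assoc,
          mul_right_comm]

theorem posSemidef_integral_conj_mul {Ω n 𝕜 : Type*} [RCLike 𝕜] [MeasurableSpace Ω] {μ : Measure Ω}
    {f : n → Ω → 𝕜} (hf : ∀ i, MemLp (f i) 2 μ) :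
    (Matrix.of fun i j => ∫ ω, conj (f i ω) * f j ω ∂μ).PosSemidef := by
  convert posSemidef_gram_infinite (𝕜 := 𝕜) fun i => (hf i).toLp using 1
  ext i j
  rw [Matrix.of_apply, Matrix.gram_apply, L2.inner_def]
  refine integral_congr_ae ?_
  filter_upwards [(hf i).coeFn_toLp, (hf j).coeFn_toLp] with ω hi hj
  rw [hi, hj, RCLike.inner_apply, mul_comm]

section SumsOfTwoSquares

open Polynomial

theorem eval_nonneg_of_eval_mul_nonneg {P Q : ℝ[X]} (hP : P ≠ 0) (hP' : ∀ x, 0 ≤ P.eval x)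
    (hPQ : ∀ x, 0 ≤ (P * Q).eval x) (x : ℝ) : 0 ≤ Q.eval x := by
  have hdense : Dense {x | P.eval x ≠ 0} := (finite_setOfPred_isRoot hP).countable.dense_compl ℝ
  have hclosed : IsClosed {x | 0 ≤ Q.eval x} := isClosed_le continuous_const Q.continuous
  refine hclosed.closure_subset_iff.2 (fun y hy => ?_) (hdense x)
  exact nonneg_of_mul_nonneg_right (eval_mul (R := ℝ) ▸ hPQ y) ((hP' y).lt_of_ne' hy)

theorem sq_X_sub_C_dvd_of_nonneg {Q : ℝ[X]} (hQ : ∀ x, 0 ≤ Q.eval x) {a : ℝ} (ha : Q.IsRoot a) :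
    (X - C a) ^ 2 ∣ Q := by
  rcases eq_or_ne Q 0 with rfl | hQ0
  · exact dvd_zero _
  have hmin : IsLocalMin (fun x => Q.eval x) a :=
    Filter.Eventually.of_forall fun x => ha.eq_zero.trans_le (hQ x)
  exact (le_rootMultiplicity_iff hQ0).1 <| (one_lt_rootMultiplicity_iff_isRoot hQ0).2
    ⟨ha, hmin.hasDerivAt_eq_zero (Q.hasDerivAt a)⟩

theorem sq_add_sq_dvd_of_nonneg {Q : ℝ[X]} (hQ : ∀ x, 0 ≤ Q.eval x) {z : ℂ}
    (hz : aeval z Q = 0) : (X - C z.re) ^ 2 + C z.im ^ 2 ∣ Q := by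
  by_cases him : z.im = 0
  · have hre : Q.IsRoot z.re := by
      rw [← Complex.conj_eq_iff_im, Complex.conj_eq_iff_re] at him
      rw [← him, ← Complex.coe_algebraMap, aeval_algebraMap_apply] at hz
      simpa using hz
    simpa [him] using sq_X_sub_C_dvd_of_nonneg hQ hre
  · convert quadratic_dvd_of_aeval_eq_zero_im_ne_zero Q hz him using 1
    rw [Complex.sq_norm, Complex.normSq_apply]
    simp only [map_add, map_mul, C_ofNat]
    ring

theorem exists_eq_sq_add_sq_of_nonneg {Q : ℝ[X]} (hQ : ∀ x, 0 ≤ Q.eval x) :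
    ∃ A B : ℝ[X], Q = A ^ 2 + B ^ 2 := by
  induction hd : Q.natDegree using Nat.strong_induction_on generalizing Q with
  | _ d ih =>
  rcases le_or_gt Q.degree 0 with hdeg0 | hdeg0
  · obtain ⟨c, rfl⟩ : ∃ c, Q = C c := ⟨_, eq_C_of_degree_le_zero hdeg0⟩
    have hc : 0 ≤ c := by simpa using hQ 0
    exact ⟨C √c, 0, by rw [← C_pow, Real.sq_sqrt hc]; simp⟩
  · obtain ⟨z, hz⟩ := IsAlgClosed.exists_aeval_eq_zero ℂ Q hdeg0.ne'
    obtain ⟨S, hS⟩ := sq_add_sq_dvd_of_nonneg hQ hz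
    have hP : ((X - C z.re) ^ 2 + C z.im ^ 2).natDegree = 2 := by compute_degree!
    have hP0 : (X - C z.re) ^ 2 + C z.im ^ 2 ≠ 0 := ne_zero_of_natDegree_gt (hP.symm ▸ two_pos)
    have hdeg : S.natDegree < d := by
      rw [← hd, hS, natDegree_mul hP0 (right_ne_zero_of_mul (hS ▸ ne_zero_of_degree_gt hdeg0)), hP]
      lia
    have hSnonneg : ∀ x, 0 ≤ S.eval x :=
      eval_nonneg_of_eval_mul_nonneg hP0 (fun x => by
        simp only [eval_add, eval_pow, eval_sub, eval_X, eval_C]; positivity) fun x => hS ▸ hQ x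
    obtain ⟨A, B, hAB⟩ := ih _ hdeg hSnonneg rfl
    rw [hS]
    exact sq_add_sq_mul rfl hAB

end SumsOfTwoSquares

section Laurent

open LaurentPolynomial

theorem laurent_exists_eq_sq_add_sq_of_nonneg {p : ℝ[T;T⁻¹]}
    (hp : ∀ t : ℝˣ, 0 ≤ eval₂ (RingHom.id ℝ) t p) : ∃ A B : ℝ[T;T⁻¹], p = A ^ 2 + B ^ 2 := by
  obtain ⟨n, P, hP⟩ := exists_T_pow p
  set Q := Polynomial.X ^ n * P with hQ
  have hQp : Polynomial.toLaurent Q = p * T n ^ 2 := by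
    rw [hQ, map_mul, Polynomial.toLaurent_X_pow, hP]
    ring
  have hQnonneg : ∀ x, 0 ≤ Q.eval x := by
    refine eval_nonneg_of_eval_mul_nonneg (pow_ne_zero 2 Polynomial.X_ne_zero)
      (fun x => by simpa using sq_nonneg x) fun x => ?_
    rcases eq_or_ne x 0 with rfl | hx
    · simp
    have hQx : Q.eval x = eval₂ (RingHom.id ℝ) (Units.mk0 x hx) p * (x ^ n) ^ 2 := by
      have h := congrArg (eval₂ (RingHom.id ℝ) (Units.mk0 x hx)) hQp
      rwa [eval₂_toLaurent, Polynomial.eval₂_id, map_mul, map_pow, eval₂_T_n] at h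
    rw [Polynomial.eval_mul, hQx]
    simp only [Polynomial.eval_pow, Polynomial.eval_X]
    exact mul_nonneg (sq_nonneg x) (mul_nonneg (hp _) (sq_nonneg _))
  obtain ⟨A, B, hAB⟩ := exists_eq_sq_add_sq_of_nonneg hQnonneg
  refine ⟨Polynomial.toLaurent A * T (-n), Polynomial.toLaurent B * T (-n), ?_⟩
  rw [mul_pow, mul_pow, ← add_mul, ← map_pow, ← map_pow, ← map_add, ← hAB, hQp, mul_assoc,
    ← mul_pow, ← T_add]
  simp

theorem linearCombination_nonneg_of_hankel {ℓ : ℤ → ℂ}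
    (hℓ : (Matrix.of fun i j => ℓ (i + j)).PosSemidef) {p : ℝ[T;T⁻¹]}
    (hp : ∀ t : ℝˣ, 0 ≤ eval₂ (RingHom.id ℝ) t p) :
    0 ≤ Finsupp.linearCombination ℝ ℓ p.coeff := by
  have hsq (A : ℝ[T;T⁻¹]) : 0 ≤ Finsupp.linearCombination ℝ ℓ (A ^ 2).coeff := by
    have h := sum_nonneg_of_posSemidef hℓ A.coeff.support id fun i => (A.coeff i : ℂ)
    refine h.trans_eq ?_
    change _ = (Finsupp.linearCombination ℝ ℓ ∘ₗ
      (AddMonoidAlgebra.coeffLinearEquiv ℝ).toLinearMap) (A ^ 2)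
    rw [sq, AddMonoidAlgebra.mul_def]
    simp only [map_finsuppSum]
    refine sum_congr rfl fun i _ => sum_congr rfl fun j _ => ?_
    refine Eq.trans ?_ (Finsupp.linearCombination_single ℝ _ _).symm
    simp [mul_right_comm]
  obtain ⟨A, B, rfl⟩ := laurent_exists_eq_sq_add_sq_of_nonneg hp
  simpa using add_nonneg (hsq A) (hsq B)

theorem sum_mul_nonneg_of_hankel {ℓ : ℤ → ℂ} (hℓ : (Matrix.of fun i j => ℓ (i + j)).PosSemidef)
    {ι : Type*} {S : Finset ι} {r : ι → ℝ} {k : ι → ℤ}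
    (h : ∀ t : ℝ, t ≠ 0 → 0 ≤ ∑ i ∈ S, r i * t ^ k i) : 0 ≤ ∑ i ∈ S, r i * ℓ (k i) := by
  refine (linearCombination_nonneg_of_hankel hℓ (p := ∑ i ∈ S, C (r i) * T (k i))
    fun t => ?_).trans_eq ?_
  · simpa using h t t.ne_zero
  · rw [AddMonoidAlgebra.coeff_sum, map_sum]
    refine sum_congr rfl fun i _ => ?_
    rw [← single_eq_C_mul_T]
    exact Finsupp.linearCombination_single ℝ _ _

end Laurent

section ConstantTerm

theorem circleAverage_zpow (n : ℤ) :
    Real.circleAverage (fun z : ℂ => z ^ n) 0 1 = if n = 0 then 1 else 0 := by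
  split_ifs with hn
  · simp [hn, Real.circleAverage_const]
  · rw [Real.circleAverage_eq_circleIntegral one_ne_zero, smul_eq_zero]
    right
    refine (circleIntegral.integral_congr zero_le_one fun z hz => ?_).trans
      (circleIntegral.integral_sub_zpow_of_ne (n := n - 1) (by lia) 0 0 1)
    have hz0 : z ≠ 0 := ne_zero_of_mem_unit_sphere ⟨z, hz⟩
    simp only [sub_zero, smul_eq_mul, zpow_sub_one₀ hz0, mul_comm]

theorem circleIntegrable_zpow (n : ℤ) : CircleIntegrable (fun z : ℂ => z ^ n) 0 1 := by
  refine ContinuousOn.circleIntegrable zero_le_one ?_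
  exact (continuousOn_zpow₀ n).mono fun z hz => ne_zero_of_mem_unit_sphere ⟨z, hz⟩

theorem re_sum_filter_eq_zero_nonneg {ι : Type*} {S : Finset ι} {b : ι → ℂ} {d : ι → ℤ}
    (h : ∀ v : ℂ, ‖v‖ = 1 → 0 ≤ (∑ i ∈ S, b i * v ^ d i).re) :
    0 ≤ (∑ i ∈ S with d i = 0, b i).re := by
  have hint (i : ι) : CircleIntegrable (fun v => b i * v ^ d i) 0 1 :=
    (circleIntegrable_zpow (d i)).const_mul (b i)
  have hsum : CircleIntegrable (fun v => ∑ i ∈ S, b i * v ^ d i) 0 1 :=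
    CircleIntegrable.fun_sum S fun i _ => hint i
  have havg : Real.circleAverage (fun v => ∑ i ∈ S, b i * v ^ d i) 0 1 =
      ∑ i ∈ S with d i = 0, b i := by
    rw [Real.circleAverage_fun_sum fun i _ => hint i, sum_filter]
    refine sum_congr rfl fun i _ => ?_
    simpa only [smul_eq_mul, circleAverage_zpow, mul_ite, mul_one, mul_zero] using
      Real.circleAverage_fun_smul (a := b i) (f := fun v : ℂ => v ^ d i) (c := 0) (R := 1)
  rw [← havg, ← Complex.reCLM_apply, ← Complex.reCLM.circleAverage_comp_comm hsum]
  refine Real.circleAverage_nonneg_of_nonneg fun v hv => h v ?_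
  simpa using hv

theorem card_filter_sub_eq (N : ℕ) (d : ℤ) :
    #{p ∈ range N ×ˢ range N | (p.2 : ℤ) - p.1 = d} = N - d.natAbs := by
  rw [← card_range (N - d.natAbs)]
  refine (card_nbij' (fun m => (m + (-d).toNat, m + d.toNat)) (fun p => min p.1 p.2) ?_ ?_ ?_
    ?_).symm
  all_goals simp only [coe_filter, mem_product, mem_range, Set.MapsTo, Set.LeftInvOn, mem_coe,
    Set.mem_ofPred_eq, Prod.forall, Prod.mk.injEq]
  all_goals lia

end ConstantTerm

section MomentKernel

variable {s : ℤ × ℤ → ℂ}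

/-- The function `z ^ m * conj z ^ n` with exponent `x = (m, n)`, whose integral is the moment of
index `x`. -/
noncomputable def conjMonomial (x : ℤ × ℤ) (z : ℂ) : ℂ := z ^ x.1 * conj z ^ x.2

theorem conjMonomial_real_mul {v : ℂ} (hv : ‖v‖ = 1) {t : ℝ} (ht : t ≠ 0) (x : ℤ × ℤ) :
    conjMonomial x (t * v) = t ^ (x.1 + x.2) * v ^ (x.1 - x.2) := by
  have hv0 : v ≠ 0 := norm_ne_zero_iff.1 (hv ▸ one_ne_zero)
  rw [conjMonomial, map_mul, Complex.conj_ofReal, ← Complex.inv_eq_conj hv, mul_zpow, mul_zpow,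
    zpow_add₀ (Complex.ofReal_ne_zero.2 ht), zpow_sub₀ hv0, inv_zpow]
  ring

theorem conjMonomial_add (x y : ℤ × ℤ) {z : ℂ} (hz : z ≠ 0) :
    conjMonomial (x + y) z = conjMonomial x z * conjMonomial y z := by
  simp only [conjMonomial, Prod.fst_add, Prod.snd_add, zpow_add₀ hz,
    zpow_add₀ ((map_ne_zero (starRingEnd ℂ)).2 hz), mul_mul_mul_comm]

theorem conjMonomial_swap (x : ℤ × ℤ) (z : ℂ) :
    conjMonomial x.swap z = conj (conjMonomial x z) := by
  simp only [conjMonomial, Prod.fst_swap, Prod.snd_swap, map_mul, map_zpow₀, Complex.conj_conj,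
    mul_comm]

theorem conjMonomial_diag (k : ℤ) (z : ℂ) : conjMonomial (k, k) z = ((‖z‖ ^ 2) ^ k : ℝ) := by
  rw [conjMonomial, ← mul_zpow, Complex.mul_conj', Complex.ofReal_zpow, Complex.ofReal_pow]

theorem norm_conjMonomial (x : ℤ × ℤ) {z : ℂ} (hz : z ≠ 0) :
    ‖conjMonomial x z‖ = ‖z‖ ^ (x.1 + x.2) := by
  rw [conjMonomial, norm_mul, norm_zpow, norm_zpow, RCLike.norm_conj,
    zpow_add₀ (norm_ne_zero_iff.2 hz)]

theorem continuous_conjMonomial_units (x : ℤ × ℤ) :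
    Continuous fun z : ℂˣ => conjMonomial x z :=
  (Units.continuous_val.zpow₀ x.1 fun z => .inl z.ne_zero).mul
    ((Complex.continuous_conj.comp Units.continuous_val).zpow₀ x.2 fun z =>
      .inl ((map_ne_zero (starRingEnd ℂ)).2 z.ne_zero))

theorem linearCombination_conjMonomial_mapDomain_add (y : ℤ × ℤ) (a : ℤ × ℤ →₀ ℂ) {z : ℂ}
    (hz : z ≠ 0) :
    Finsupp.linearCombination ℂ (conjMonomial · z) (a.mapDomain (y + ·)) =
      conjMonomial y z * Finsupp.linearCombination ℂ (conjMonomial · z) a := by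
  rw [Finsupp.linearCombination_mapDomain]
  simp only [Finsupp.linearCombination_apply, Finsupp.sum, mul_sum, Function.comp_apply,
    conjMonomial_add y _ hz, smul_eq_mul, mul_left_comm]

/-- The kernel `(x, y) ↦ s (x* + y)` on the `*`-semigroup `ℤ²`. Positive semidefiniteness of the
sequence `s` is that of this matrix. -/
def momentKernel (s : ℤ × ℤ → ℂ) : Matrix (ℤ × ℤ) (ℤ × ℤ) ℂ :=
  Matrix.of fun x y => s (x.swap + y)

/-- The sequence read in polar coordinates: `(k, l)` stands for `t ^ k * v ^ l`, where `z = t * v`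
with `t` real and `‖v‖ = 1`. It is extended by zero to the pairs with `k + l` odd, which are the
functions changing sign under `(t, v) ↦ (-t, -v)`. -/
def polarExtension (s : ℤ × ℤ → ℂ) (p : ℤ × ℤ) : ℂ :=
  if 2 ∣ p.1 + p.2 then s ((p.1 + p.2) / 2, (p.1 - p.2) / 2) else 0

theorem polarExtension_add_sub (s : ℤ × ℤ → ℂ) (x : ℤ × ℤ) :
    polarExtension s (x.1 + x.2, x.1 - x.2) = s x := by
  rw [polarExtension, if_pos (by lia)]
  congr 1
  ext <;> dsimp only <;> lia

theorem posSemidef_polarExtension {s : ℤ × ℤ → ℂ} (hs : (momentKernel s).PosSemidef) :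
    (Matrix.of fun p q : ℤ × ℤ => polarExtension s (p.1 + q.1, q.2 - p.2)).PosSemidef := by
  -- When `p.1 + p.2` and `q.1 + q.2` have the same parity, the rounding errors of the two halves
  -- cancel in the exponents below.
  convert posSemidef_pinching (hs.submatrix fun p : ℤ × ℤ =>
    ((p.1 + p.2) / 2, p.1 - (p.1 + p.2) / 2)) (fun p : ℤ × ℤ => (p.1 + p.2) % 2) using 1
  ext p q
  simp only [polarExtension, momentKernel, Matrix.submatrix_apply, Matrix.of_apply, Prod.swap,
    Prod.mk_add_mk]
  refine ite_congr (propext <| by lia) (fun _ => ?_) fun _ => rfl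
  congr 1
  ext <;> dsimp only <;> lia

theorem posSemidef_hankel_of_circle (hs : (momentKernel s).PosSemidef) (N : ℕ) {v : ℂ}
    (hv : ‖v‖ = 1) :
    (Matrix.of fun k l : ℤ => ∑ p ∈ range N ×ˢ range N,
      polarExtension s (k + l, p.2 - p.1) * v ^ (p.1 - p.2 : ℤ)).PosSemidef := by
  have hv0 : v ≠ 0 := norm_ne_zero_iff.1 (hv ▸ one_ne_zero)
  convert posSemidef_compression (posSemidef_polarExtension hs) (range N)
    (fun (k : ℤ) (i : ℕ) => (k, (i : ℤ))) (fun i => v ^ (-i : ℤ)) using 1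
  ext k l
  rw [Matrix.of_apply, Matrix.of_apply, sum_product]
  refine sum_congr rfl fun i _ => sum_congr rfl fun j _ => ?_
  have hstar : star (v ^ (-i : ℤ)) = v ^ (i : ℤ) := by
    rw [star_zpow₀, ← starRingEnd_apply, ← Complex.inv_eq_conj hv, inv_zpow', neg_neg]
  rw [hstar, sub_eq_add_neg (i : ℤ), zpow_add₀ hv0, Matrix.of_apply]
  ring

theorem re_sum_circle_nonneg (hs : (momentKernel s).PosSemidef) (N : ℕ) {v : ℂ} (hv : ‖v‖ = 1)
    {a : ℤ × ℤ →₀ ℂ}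
    (ha : ∀ z : ℂ, z ≠ 0 → 0 ≤ (Finsupp.linearCombination ℂ (conjMonomial · z) a).re) :
    0 ≤ (∑ x ∈ a.support, ∑ p ∈ range N ×ˢ range N, a x *
      polarExtension s (x.1 + x.2, p.2 - p.1) * v ^ (x.1 - x.2 - (p.2 - p.1))).re := by
  have hv0 : v ≠ 0 := norm_ne_zero_iff.1 (hv ▸ one_ne_zero)
  set ℓ : ℤ → ℂ := fun k => ∑ p ∈ range N ×ˢ range N,
    polarExtension s (k, p.2 - p.1) * v ^ (p.1 - p.2 : ℤ) with hℓ_def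
  have hℓ : (Matrix.of fun k l => ℓ (k + l)).PosSemidef := posSemidef_hankel_of_circle hs N hv
  have hℓ_real (k : ℤ) : (ℓ k).im = 0 := by
    have h : conj (ℓ (k + 0)) = ℓ (0 + k) := hℓ.1.apply 0 k
    rwa [add_zero, zero_add, Complex.conj_eq_iff_im] at h
  have hray : ∀ t : ℝ, t ≠ 0 →
      0 ≤ ∑ x ∈ a.support, (a x * v ^ (x.1 - x.2)).re * t ^ (x.1 + x.2) := fun t ht => by
    refine (ha (t * v) (mul_ne_zero (Complex.ofReal_ne_zero.2 ht) hv0)).trans_eq ?_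
    rw [Finsupp.linearCombination_apply, Finsupp.sum, Complex.re_sum]
    refine sum_congr rfl fun x _ => ?_
    rw [conjMonomial_real_mul hv ht, smul_eq_mul, ← Complex.ofReal_zpow, mul_left_comm,
      Complex.re_ofReal_mul, mul_comm]
  refine (Complex.nonneg_iff.1 (sum_mul_nonneg_of_hankel hℓ hray)).1.trans_eq ?_
  simp only [Complex.re_sum]
  refine sum_congr rfl fun x _ => ?_
  rw [Complex.re_ofReal_mul, ← sub_zero (_ * (ℓ _).re), ← mul_zero (a x * v ^ (x.1 - x.2)).im,
    ← hℓ_real (x.1 + x.2), ← Complex.mul_re, hℓ_def, mul_sum, Complex.re_sum]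
  refine sum_congr rfl fun p _ => ?_
  rw [← neg_sub (p.1 : ℤ), sub_neg_eq_add, zpow_add₀ hv0]
  congr 1
  ring

theorem re_sum_fejer_nonneg (hs : (momentKernel s).PosSemidef) (N : ℕ) {a : ℤ × ℤ →₀ ℂ}
    (ha : ∀ z : ℂ, z ≠ 0 → 0 ≤ (Finsupp.linearCombination ℂ (conjMonomial · z) a).re) :
    0 ≤ (∑ x ∈ a.support, ((N - (x.1 - x.2).natAbs : ℕ) : ℂ) * (a x * s x)).re := by
  have h := re_sum_filter_eq_zero_nonneg (S := a.support ×ˢ (range N ×ˢ range N))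
    (b := fun q => a q.1 * polarExtension s (q.1.1 + q.1.2, q.2.2 - q.2.1))
    (d := fun q => q.1.1 - q.1.2 - (q.2.2 - q.2.1))
    (fun v hv => by rw [sum_product]; exact re_sum_circle_nonneg hs N hv ha)
  refine h.trans_eq (congrArg Complex.re ?_)
  rw [sum_filter, sum_product]
  refine sum_congr rfl fun x _ => ?_
  rw [← card_filter_sub_eq, card_eq_sum_ones, Nat.cast_sum, sum_mul, sum_filter]
  refine sum_congr rfl fun p _ => ?_
  dsimp only
  split_ifs with h₁ h₂ h₂
  · rw [h₂, polarExtension_add_sub, Nat.cast_one, one_mul]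
  · exact absurd (sub_eq_zero.1 h₁).symm h₂
  · exact absurd (sub_eq_zero.2 h₂.symm) h₁
  · rfl

theorem tendsto_natCast_sub_div {𝕜 : Type*} [DivisionSemiring 𝕜] [TopologicalSpace 𝕜]
    [CharZero 𝕜] [ContinuousSMul ℚ≥0 𝕜] [IsTopologicalSemiring 𝕜] [ContinuousInv₀ 𝕜] (d : ℕ) :
    Tendsto (fun N : ℕ => ((N - d : ℕ) : 𝕜) / N) atTop (𝓝 1) := by
  rw [← tendsto_add_atTop_iff_nat d]
  simpa only [Nat.add_sub_cancel, Nat.cast_add] using tendsto_natCast_div_add_atTop (d : 𝕜)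

theorem re_linearCombination_nonneg (hs : (momentKernel s).PosSemidef) {a : ℤ × ℤ →₀ ℂ}
    (ha : ∀ z : ℂ, z ≠ 0 → 0 ≤ (Finsupp.linearCombination ℂ (conjMonomial · z) a).re) :
    0 ≤ (Finsupp.linearCombination ℂ s a).re := by
  have hlim : Tendsto (fun N : ℕ => ∑ x ∈ a.support,
      ((N - (x.1 - x.2).natAbs : ℕ) : ℂ) / N * (a x * s x)) atTop
      (𝓝 (Finsupp.linearCombination ℂ s a)) := by
    rw [Finsupp.linearCombination_apply, Finsupp.sum]
    refine tendsto_finsetSum _ fun x _ => ?_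
    simpa using (tendsto_natCast_sub_div (x.1 - x.2).natAbs).mul_const (a x * s x)
  refine ge_of_tendsto ((Complex.continuous_re.tendsto _).comp hlim) (.of_forall fun N => ?_)
  refine (div_nonneg (re_sum_fejer_nonneg hs N ha) N.cast_nonneg).trans_eq ?_
  rw [← Complex.div_natCast_re, sum_div]
  simp only [Function.comp_apply, div_mul_eq_mul_div]

end MomentKernel

section FromBelow

theorem integrable_and_integral_eq_of_tendsto_of_le {X : Type*} [MeasurableSpace X] {μ : Measure X}
    {f : ℕ → X → ℝ} {F : X → ℝ} {c : ℝ} (hf : ∀ n, Integrable (f n) μ) (hf0 : ∀ n, 0 ≤ f n)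
    (hfF : ∀ n, f n ≤ F) (hlim : ∀ x, Tendsto (fun n => f n x) atTop (𝓝 (F x)))
    (hc : Tendsto (fun n => ∫ x, f n x ∂μ) atTop (𝓝 c)) :
    Integrable F μ ∧ ∫ x, F x ∂μ = c := by
  have hmeas : AEStronglyMeasurable F μ :=
    aestronglyMeasurable_of_tendsto_ae _ (fun n => (hf n).1) (.of_forall hlim)
  have hF0 : 0 ≤ F := (hf0 0).trans (hfF 0)
  have hlint : Tendsto (fun n => ∫⁻ x, ENNReal.ofReal (f n x) ∂μ) atTop (𝓝 (ENNReal.ofReal c)) := by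
    simp_rw [← fun n => ofReal_integral_eq_lintegral_ofReal (hf n) (.of_forall (hf0 n))]
    exact (ENNReal.continuous_ofReal.tendsto c).comp hc
  have hfatou : ∫⁻ x, ENNReal.ofReal (F x) ∂μ ≤ ENNReal.ofReal c := by
    rw [← hlint.liminf_eq]
    refine (lintegral_mono fun x => ?_).trans
      (lintegral_liminf_le' fun n => (hf n).1.aemeasurable.ennreal_ofReal)
    exact ((ENNReal.continuous_ofReal.tendsto _).comp (hlim x)).liminf_eq.ge
  have hF : Integrable F μ :=
    (lintegral_ofReal_ne_top_iff_integrable hmeas (.of_forall hF0)).1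
      (hfatou.trans_lt ENNReal.ofReal_lt_top).ne
  refine ⟨hF, tendsto_nhds_unique (tendsto_integral_of_dominated_convergence F (fun n => (hf n).1)
    hF (fun n => .of_forall fun x => ?_) (.of_forall hlim)) hc⟩
  rw [Real.norm_of_nonneg (hf0 n x)]
  exact hfF n x

theorem exists_compactlySupported_le_le_add_smul {X : Type*} [TopologicalSpace X] [RegularSpace X]
    [LocallyCompactSpace X] {f g : C(X, ℝ)} (hf : 0 ≤ f) (hg : 0 ≤ g)
    (hfg : f =o[cocompact X] g) {ε : ℝ} (hε : 0 < ε) :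
    ∃ h : C_c(X, ℝ), 0 ≤ h ∧ (h : C(X, ℝ)) ≤ f ∧ f ≤ (h : C(X, ℝ)) + ε • g := by
  obtain ⟨K, hK, hfK⟩ := mem_cocompact.1 (hfg.def hε)
  obtain ⟨u, huK, -, hu, hu01⟩ :=
    exists_continuous_one_zero_of_isCompact hK isClosed_empty (Set.disjoint_empty K)
  refine ⟨⟨u * f, hu.mul_right⟩, fun x => mul_nonneg (hu01 x).1 (hf x),
    fun x => mul_le_of_le_one_left (hf x) (hu01 x).2, fun x => ?_⟩
  change f x ≤ u x * f x + ε * g x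
  by_cases hx : x ∈ K
  · rw [huK hx, Pi.one_apply, one_mul, le_add_iff_nonneg_right]
    exact mul_nonneg hε.le (hg x)
  · calc f x ≤ |f x| := le_abs_self _
      _ ≤ ε * |g x| := hfK hx
      _ = ε * g x := by rw [abs_of_nonneg (show 0 ≤ g x from hg x)]
      _ ≤ u x * f x + ε * g x := le_add_of_nonneg_left (mul_nonneg (hu01 x).1 (hf x))

end FromBelow

section Adapted

variable {X E : Type*} [TopologicalSpace X] [AddCommGroup E] [Module ℝ E]

/-- Choquet's adapted spaces of continuous functions: the functions of the space are dominated by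
its nonnegative ones, these have no common zero, and each of them is negligible at infinity against
another. The space is given by a linear parametrization `φ`, so that a functional on `E` need not
factor through the range of `φ`. -/
structure IsAdapted (φ : E →ₗ[ℝ] C(X, ℝ)) : Prop where
  exists_abs_le (v : E) : ∃ w, |φ v| ≤ φ w
  exists_pos (x : X) : ∃ v, 0 ≤ φ v ∧ 0 < φ v x
  exists_isLittleO (v : E) (hv : 0 ≤ φ v) : ∃ w, 0 ≤ φ w ∧ φ v =o[cocompact X] φ w

variable {φ : E →ₗ[ℝ] C(X, ℝ)} {L : E →ₗ[ℝ] ℝ}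

theorem IsAdapted.exists_one_le (hφ : IsAdapted φ) {K : Set X} (hK : IsCompact K) :
    ∃ v, 0 ≤ φ v ∧ ∀ x ∈ K, 1 ≤ φ v x := by
  refine hK.induction_on (p := fun K => ∃ v, 0 ≤ φ v ∧ ∀ x ∈ K, 1 ≤ φ v x) ⟨0, by simp⟩ ?_ ?_
    fun x _ => ?_
  · rintro s t hst ⟨v, hv, hvt⟩
    exact ⟨v, hv, fun x hx => hvt x (hst hx)⟩
  · rintro s t ⟨v, hv, hvs⟩ ⟨w, hw, hwt⟩
    refine ⟨v + w, by rw [map_add]; exact add_nonneg hv hw, fun x hx => ?_⟩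
    rw [map_add]
    exact hx.elim (fun h => le_add_of_le_of_nonneg (hvs x h) (hw x))
      fun h => le_add_of_nonneg_of_le (hv x) (hwt x h)
  · obtain ⟨v, hv, hvx⟩ := hφ.exists_pos x
    have h2 : φ ((2 / φ v x) • v) x = 2 := by
      rw [map_smul]
      exact div_mul_cancel₀ 2 hvx.ne'
    refine ⟨_, mem_nhdsWithin_of_mem_nhds ((φ ((2 / φ v x) • v)).continuous.continuousAt.eventually
      (lt_mem_nhds (h2.symm ▸ one_lt_two))), (2 / φ v x) • v, ?_, fun y hy => hy.le⟩
    rw [map_smul]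
    exact smul_nonneg (by positivity) hv

theorem IsAdapted.exists_add_nonneg (hφ : IsAdapted φ) (f : C_c(X, ℝ)) :
    ∃ v, 0 ≤ φ v + (f : C(X, ℝ)) := by
  obtain ⟨v, hv, hvf⟩ := hφ.exists_one_le f.hasCompactSupport
  obtain ⟨C, hC⟩ := f.hasCompactSupport.exists_bound_of_continuous f.continuous
  refine ⟨|C| • v, fun x => ?_⟩
  rw [map_smul]
  change 0 ≤ |C| * φ v x + f x
  by_cases hx : x ∈ tsupport f
  · linarith [le_mul_of_one_le_right (abs_nonneg C) (hvf x hx), neg_le_of_abs_le (hC x),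
      le_abs_self C]
  · rw [image_eq_zero_of_notMem_tsupport hx, add_zero]
    exact mul_nonneg (abs_nonneg C) (hv x)

theorem IsAdapted.exists_positiveLinearMap (hφ : IsAdapted φ) (hL : ∀ v, 0 ≤ φ v → 0 ≤ L v) :
    ∃ Λ : C_c(X, ℝ) →ₚ[ℝ] ℝ, ∀ v (f : C_c(X, ℝ)), φ v ≤ (f : C(X, ℝ)) → L v ≤ Λ f := by
  let ι : C_c(X, ℝ) →ₗ[ℝ] C(X, ℝ) :=
    { toFun := fun f => f, map_add' := fun _ _ => rfl, map_smul' := fun _ _ => rfl }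
  let cone := (PointedCone.positive ℝ C(X, ℝ)).comap (φ.coprod ι)
  let p := (L ∘ₗ LinearMap.fst ℝ E C_c(X, ℝ)).toPMap (LinearMap.range (LinearMap.inl ℝ E C_c(X, ℝ)))
  have hmem (v : E) (f : C_c(X, ℝ)) : (v, f) ∈ cone ↔ 0 ≤ φ v + (f : C(X, ℝ)) := Iff.rfl
  have hp : ∀ w : p.domain, (w : E × C_c(X, ℝ)) ∈ cone → 0 ≤ p w := by
    rintro ⟨_, v, rfl⟩ hv
    exact hL v fun x => by simpa using (hmem v 0).1 hv x
  have hcofinal (w : E × C_c(X, ℝ)) : ∃ w' : p.domain, (w' : E × C_c(X, ℝ)) + w ∈ cone := by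
    obtain ⟨v, hv⟩ := hφ.exists_add_nonneg w.2
    refine ⟨⟨(v - w.1, 0), v - w.1, rfl⟩, (hmem _ _).2 ?_⟩
    simpa using hv
  obtain ⟨G, hGp, hG⟩ := riesz_extension cone p hp hcofinal
  refine ⟨PositiveLinearMap.mk₀ (G ∘ₗ LinearMap.inr ℝ E C_c(X, ℝ)) fun f hf =>
    hG _ ((hmem 0 f).2 fun x => by simpa using hf x), fun v f hvf => ?_⟩
  have hGv : G (v, 0) = L v := hGp ⟨(v, 0), v, rfl⟩
  have hnonneg : 0 ≤ G ((0, f) - (v, 0)) := hG _ ((hmem _ _).2 fun x => by simpa using hvf x)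
  rwa [map_sub, hGv, sub_nonneg] at hnonneg

variable [T2Space X] [LocallyCompactSpace X] [MeasurableSpace X] [BorelSpace X]

theorem IsAdapted.exists_measure_integral_eq (hφ : IsAdapted φ) (hL : ∀ v, 0 ≤ φ v → 0 ≤ L v) :
    ∃ μ : Measure X, ∀ v, Integrable (φ v) μ ∧ ∫ x, φ v x ∂μ = L v := by
  obtain ⟨Λ, hΛ⟩ := hφ.exists_positiveLinearMap hL
  have hΛ' (v : E) (f : C_c(X, ℝ)) (h : (f : C(X, ℝ)) ≤ φ v) : Λ f ≤ L v := by
    simpa using hΛ (-v) (-f) fun x => by simpa using h x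
  have hnonneg (v : E) (hv : 0 ≤ φ v) : Integrable (φ v) (RealRMK.rieszMeasure Λ) ∧
      ∫ x, φ v x ∂(RealRMK.rieszMeasure Λ) = L v := by
    obtain ⟨w, hw, hvw⟩ := hφ.exists_isLittleO v hv
    choose f hf0 hfv hvf using fun n : ℕ =>
      exists_compactlySupported_le_le_add_smul hv hw hvw (Nat.one_div_pos_of_nat (n := n) (α := ℝ))
    have hlim (c d : ℝ) : Tendsto (fun n : ℕ => c - 1 / ((n : ℝ) + 1) * d) atTop (𝓝 c) := by
      simpa using tendsto_const_nhds.sub (tendsto_one_div_add_atTop_nhds_zero_nat.mul_const d)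
    refine integrable_and_integral_eq_of_tendsto_of_le (f := fun n => f n)
      (fun n => (f n).integrable) hf0 hfv (fun x => ?_) ?_
    · exact tendsto_of_tendsto_of_tendsto_of_le_of_le (hlim (φ v x) (φ w x)) tendsto_const_nhds
        (fun n => sub_le_iff_le_add.2 (hvf n x)) fun n => hfv n x
    · simp_rw [RealRMK.integral_rieszMeasure]
      refine tendsto_of_tendsto_of_tendsto_of_le_of_le (hlim (L v) (L w)) tendsto_const_nhds
        (fun n => ?_) fun n => hΛ' v (f n) (hfv n)
      simpa using hΛ (v - (1 / ((n : ℝ) + 1)) • w) (f n) fun x => by simpa using hvf n x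
  refine ⟨RealRMK.rieszMeasure Λ, fun v => ?_⟩
  obtain ⟨w, hvw⟩ := hφ.exists_abs_le v
  obtain ⟨hw, hw'⟩ := hnonneg w ((abs_nonneg _).trans hvw)
  obtain ⟨hd, hd'⟩ := hnonneg (w - v) (by simpa using (le_abs_self _).trans hvw)
  rw [map_sub] at hd hd'
  have hv : φ v = fun x => φ w x - (φ w - φ v) x := funext fun x => (sub_sub_cancel _ _).symm
  rw [hv]
  exact ⟨hw.sub hd, by rw [integral_sub hw hd, hw', hd', map_sub, sub_sub_cancel]⟩

end Adapted

section Representation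

/-- The real part of a Laurent polynomial in `z` and `conj z`, given by its coefficients, as a
continuous function on `ℂ ∖ {0}`, modelled as `ℂˣ`. -/
noncomputable def reEval : (ℤ × ℤ →₀ ℂ) →ₗ[ℝ] C(ℂˣ, ℝ) where
  toFun a :=
    { toFun := fun z => (Finsupp.linearCombination ℂ (conjMonomial · z) a).re
      continuous_toFun := by
        simp only [Finsupp.linearCombination_apply, Finsupp.sum, smul_eq_mul]
        exact Complex.continuous_re.comp <| continuous_finsetSum _ fun x _ =>
          (continuous_conjMonomial_units x).const_mul (a x) }
  map_add' a b := by ext z; simp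
  map_smul' c a := by ext z; simp [LinearMap.map_smul_of_tower]

theorem reEval_apply (a : ℤ × ℤ →₀ ℂ) (z : ℂˣ) :
    reEval a z = (Finsupp.linearCombination ℂ (conjMonomial · (z : ℂ)) a).re := rfl

theorem reEval_single (x : ℤ × ℤ) (c : ℂ) (z : ℂˣ) :
    reEval (Finsupp.single x c) z = (c * conjMonomial x z).re := by
  rw [reEval_apply, Finsupp.linearCombination_single, smul_eq_mul]

theorem max_inv_le_sq_add_inv_sq {𝕜 : Type*} [Field 𝕜] [LinearOrder 𝕜] [IsStrictOrderedRing 𝕜]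
    {r : 𝕜} (hr : r ≠ 0) : max r r⁻¹ ≤ r ^ 2 + (r ^ 2)⁻¹ := by
  have hinv : r * r⁻¹ = 1 := mul_inv_cancel₀ hr
  rw [← inv_pow]
  exact max_le (by nlinarith [sq_nonneg (r⁻¹ - r), sq_nonneg (r - 1)])
    (by nlinarith [sq_nonneg (r⁻¹ - r), sq_nonneg (r⁻¹ - 1)])

theorem tendsto_norm_units_sq_add_inv_cocompact :
    Tendsto (fun z : ℂˣ => ‖(z : ℂ)‖ ^ 2 + (‖(z : ℂ)‖ ^ 2)⁻¹) (cocompact ℂˣ) atTop := by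
  refine tendsto_atTop_mono (fun z => ?_) ((tendsto_norm_cocompact_atTop (E := ℂ × ℂᵐᵒᵖ)).comp
    (Units.isClosedEmbedding_embedProduct (α := ℂ)).tendsto_cocompact)
  rw [Function.comp_apply, Units.embedProduct_apply, Prod.norm_mk, MulOpposite.norm_op,
    Units.val_inv_eq_inv_val, norm_inv]
  exact max_inv_le_sq_add_inv_sq (norm_ne_zero_iff.2 z.ne_zero)

theorem exists_abs_reEval_le (a : ℤ × ℤ →₀ ℂ) : ∃ b, |reEval a| ≤ reEval b := by
  induction a using Finsupp.induction_linear with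
  | zero => exact ⟨0, by simp⟩
  | add a a' ha ha' =>
    obtain ⟨b, hb⟩ := ha
    obtain ⟨b', hb'⟩ := ha'
    exact ⟨b + b', by simpa only [map_add] using (abs_add_le _ _).trans (add_le_add hb hb')⟩
  | single x c =>
    refine ⟨.single 0 (‖c‖ : ℂ) + .single (x.1 + x.2, x.1 + x.2) (‖c‖ : ℂ), fun z => ?_⟩
    rw [map_add]
    change |reEval _ z| ≤ reEval _ z + reEval _ z
    simp only [reEval_single, ← Prod.mk_zero_zero, conjMonomial_diag, zpow_zero,
      Complex.re_ofReal_mul, Complex.ofReal_re, ← mul_add]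
    refine (Complex.abs_re_le_norm _).trans ?_
    rw [norm_mul, norm_conjMonomial x z.ne_zero, ← zpow_natCast, ← zpow_mul, mul_comm (_ : ℤ),
      zpow_mul, zpow_natCast]
    refine mul_le_mul_of_nonneg_left ?_ (norm_nonneg c)
    nlinarith [sq_nonneg (‖(z : ℂ)‖ ^ (x.1 + x.2) - 1 / 2)]

theorem exists_reEval_isLittleO {a : ℤ × ℤ →₀ ℂ} (ha : 0 ≤ reEval a) :
    ∃ b, 0 ≤ reEval b ∧ reEval a =o[cocompact ℂˣ] reEval b := by
  let b := a.mapDomain ((1, 1) + ·) + a.mapDomain ((-1, -1) + ·)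
  have hb (z : ℂˣ) : reEval b z = (‖(z : ℂ)‖ ^ 2 + (‖(z : ℂ)‖ ^ 2)⁻¹) * reEval a z := by
    rw [reEval_apply, map_add, linearCombination_conjMonomial_mapDomain_add _ a z.ne_zero,
      linearCombination_conjMonomial_mapDomain_add _ a z.ne_zero, conjMonomial_diag,
      conjMonomial_diag, Complex.add_re, Complex.re_ofReal_mul, Complex.re_ofReal_mul, zpow_one,
      zpow_neg_one, add_mul, reEval_apply]
  refine ⟨b, fun z => ?_, ?_⟩
  · change 0 ≤ reEval b z
    rw [hb]
    exact mul_nonneg (by positivity) (ha z)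
  · have hone : (fun _ : ℂˣ => (1 : ℝ)) =o[cocompact ℂˣ]
        fun z : ℂˣ => ‖(z : ℂ)‖ ^ 2 + (‖(z : ℂ)‖ ^ 2)⁻¹ :=
      Asymptotics.isLittleO_const_left.2
        (.inr (tendsto_norm_atTop_atTop.comp tendsto_norm_units_sq_add_inv_cocompact))
    simpa only [one_mul, ← hb] using hone.mul_isBigO (Asymptotics.isBigO_refl (reEval a) _)

theorem isAdapted_reEval : IsAdapted reEval where
  exists_abs_le := exists_abs_reEval_le
  exists_pos z := ⟨.single 0 1, fun w => by simp [reEval_single, conjMonomial],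
    by simp [reEval_single, conjMonomial]⟩
  exists_isLittleO _ := exists_reEval_isLittleO

instance borelSpace_units {K : Type*} [GroupWithZero K] [TopologicalSpace K] [ContinuousInv₀ K]
    [MeasurableSpace K] [BorelSpace K] : BorelSpace Kˣ where
  measurable_eq := by
    rw [Units.isEmbedding_val₀.isInducing.eq_induced, borel_comap,
      ← BorelSpace.measurable_eq (α := K)]
    rfl

theorem exists_measure_units_integral_conjMonomial {s : ℤ × ℤ → ℂ}
    (hs : (momentKernel s).PosSemidef) :
    ∃ μ : Measure ℂˣ, ∀ x, Integrable (fun z : ℂˣ => conjMonomial x z) μ ∧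
      ∫ z : ℂˣ, conjMonomial x z ∂μ = s x := by
  obtain ⟨μ, hμ⟩ := isAdapted_reEval.exists_measure_integral_eq
    (L := Complex.reLm ∘ₗ (Finsupp.linearCombination ℂ s).restrictScalars ℝ) fun a ha =>
      re_linearCombination_nonneg hs fun z hz => ha (Units.mk0 z hz)
  refine ⟨μ, fun x => ?_⟩
  have hcoe (c : ℂ) : ⇑(reEval (.single x c)) = fun z : ℂˣ => (c * conjMonomial x z).re :=
    funext (reEval_single x c)
  obtain ⟨hre, hre'⟩ : Integrable (fun z : ℂˣ => (conjMonomial x z).re) μ ∧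
      ∫ z : ℂˣ, (conjMonomial x z).re ∂μ = (s x).re := by
    simpa [hcoe] using hμ (.single x 1)
  obtain ⟨him, him'⟩ : Integrable (fun z : ℂˣ => (conjMonomial x z).im) μ ∧
      ∫ z : ℂˣ, (conjMonomial x z).im ∂μ = (s x).im := by
    simpa [hcoe] using hμ (.single x (-Complex.I))
  have hint : Integrable (fun z : ℂˣ => conjMonomial x z) μ := Integrable.re_im_iff.1 ⟨hre, him⟩
  refine ⟨hint, ?_⟩
  calc ∫ z : ℂˣ, conjMonomial x z ∂μ
      = (∫ z : ℂˣ, (conjMonomial x z).re ∂μ : ℝ) + (∫ z : ℂˣ, (conjMonomial x z).im ∂μ : ℝ) *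
          Complex.I := (integral_re_add_im hint).symm
    _ = s x := by rw [hre', him', Complex.re_add_im]

theorem exists_measure_setIntegral_conjMonomial {s : ℤ × ℤ → ℂ}
    (hs : (momentKernel s).PosSemidef) :
    ∃ μ : Measure ℂ, μ {0} = 0 ∧ ∀ x, IntegrableOn (conjMonomial x) {0}ᶜ μ ∧
      s x = ∫ z in {0}ᶜ, conjMonomial x z ∂μ := by
  obtain ⟨μ, hμ⟩ := exists_measure_units_integral_conjMonomial hs
  have hval : MeasurableEmbedding (Units.val : ℂˣ → ℂ) :=
    Units.isOpenEmbedding_val.measurableEmbedding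
  have hpre : (Units.val : ℂˣ → ℂ) ⁻¹' {0}ᶜ = Set.univ :=
    Set.eq_univ_of_forall fun z => z.ne_zero
  refine ⟨μ.map Units.val, ?_, fun x => ⟨?_, ?_⟩⟩
  · rw [hval.map_apply, ← compl_compl {0}, Set.preimage_compl, hpre, Set.compl_univ, measure_empty]
  · rw [hval.integrableOn_map_iff, hpre, integrableOn_univ]
    exact (hμ x).1
  · rw [hval.setIntegral_map, hpre, setIntegral_univ, (hμ x).2]

theorem posSemidef_momentKernel_of_measure {s : ℤ × ℤ → ℂ} {μ : Measure ℂ}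
    (hμ : ∀ x, IntegrableOn (conjMonomial x) {0}ᶜ μ ∧ s x = ∫ z in {0}ᶜ, conjMonomial x z ∂μ) :
    (momentKernel s).PosSemidef := by
  have hmeas : MeasurableSet ({0}ᶜ : Set ℂ) := (measurableSet_singleton 0).compl
  have hmul (x y : ℤ × ℤ) : Set.EqOn (conjMonomial (x.swap + y))
      (fun z => conj (conjMonomial x z) * conjMonomial y z) {0}ᶜ := fun z hz => by
    rw [conjMonomial_add _ _ hz, conjMonomial_swap]
  have hL2 (x : ℤ × ℤ) : MemLp (conjMonomial x) 2 (μ.restrict {0}ᶜ) := by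
    refine (memLp_two_iff_integrable_sq_norm (hμ x).1.aestronglyMeasurable).2 ?_
    convert ((hμ (x.swap + x)).1.congr_fun (hmul x x) hmeas).norm using 2 with z
    rw [norm_mul, RCLike.norm_conj, sq]
  have hs : momentKernel s =
      Matrix.of fun x y => ∫ z in {0}ᶜ, conj (conjMonomial x z) * conjMonomial y z ∂μ :=
    Matrix.ext fun x y => (hμ (x.swap + y)).2.trans (setIntegral_congr_fun hmeas (hmul x y))
  exact hs ▸ posSemidef_integral_conj_mul hL2

end Representation

/-- **Bisgaard's theorem on the two-sided complex moment problem.**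
A sequence `s : ℤ × ℤ → ℂ` is positive semidefinite on the `*`-semigroup `ℤ²`
(with involution `(m,n)* = (n,m)`) if and only if there is a positive Borel
measure `μ` on `ℂ` with `μ({0}) = 0` such that
`s(m,n) = ∫_{ℂ∖{0}} z^m conj(z)^n dμ` for all `(m,n) ∈ ℤ²`. -/
theorem bisgaard_two_sided_complex_moment_problem (s : ℤ × ℤ → ℂ) :
    (∀ (r : ℕ) (ξ : Fin r → ℤ × ℤ) (c : Fin r → ℂ),
      (∑ i : Fin r, ∑ j : Fin r,
          c i * starRingEnd ℂ (c j) * s ((ξ i).swap + ξ j)).im = 0 ∧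
      0 ≤ (∑ i : Fin r, ∑ j : Fin r,
          c i * starRingEnd ℂ (c j) * s ((ξ i).swap + ξ j)).re) ↔
    ∃ μ : MeasureTheory.Measure ℂ, μ {0} = 0 ∧
      ∀ mn : ℤ × ℤ,
        MeasureTheory.IntegrableOn
          (fun z : ℂ => z ^ mn.1 * (starRingEnd ℂ z) ^ mn.2) ({0}ᶜ : Set ℂ) μ ∧
        s mn = ∫ z in ({0}ᶜ : Set ℂ), z ^ mn.1 * (starRingEnd ℂ z) ^ mn.2 ∂μ := by
  have hs : (momentKernel s).PosSemidef ↔ ∀ (r : ℕ) (ξ : Fin r → ℤ × ℤ) (c : Fin r → ℂ),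
      (∑ i, ∑ j, c i * conj (c j) * s ((ξ i).swap + ξ j)).im = 0 ∧
      0 ≤ (∑ i, ∑ j, c i * conj (c j) * s ((ξ i).swap + ξ j)).re := by
    simp only [posSemidef_iff_forall_fin, momentKernel, Matrix.of_apply, Complex.nonneg_iff,
      and_comm, eq_comm]
  rw [← hs]
  exact ⟨exists_measure_setIntegral_conjMonomial,
    fun ⟨_, _, hμ⟩ => posSemidef_momentKernel_of_measure hμ⟩
end

section
/- Let ℰ be a multiplicative set in the one-variable polynomial ring ℝ[y] and B := ℰ⁻¹ℝ[y]. Then for every linear functional L on B with L(b²) ≥ 0 for all b ∈ B there exists a positive Borel measure μ on ℝ such that μ({y ∈ ℝ : q(y) = 0}) = 0 for every q ∈ ℰ and, for every p ∈ ℝ[y] and q ∈ ℰ, the function y ↦ p(y)/q(y) is μ-integrable and L(p/q) = ∫_ℝ p(y)/q(y) dμ(y). -/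
/-!
A polynomial that is nonnegative on `ℝ` is a sum of squares, so `L` is nonnegative on quotients of
nonnegative polynomials. Riesz' extension theorem, applied on `B × C_c(ℝ, ℝ)` to the cone of pairs
`(b, f)` with `b + f ≥ 0`, then produces a positive functional on `C_c(ℝ, ℝ)`, hence a measure `μ`,
compatible with all inequalities between fractions and compactly supported functions. Finally a
fraction `h = a / d` with `a > 0` and `d ≥ 0` is the increasing limit, as `ε → 0`, of the compactly
supported functions `f_ε = h / (1 + ε h) * max 0 (1 - ε y²)`, and the bounds
`h - ε (h² + h y²) ≤ f_ε ≤ h` force `∫ f_ε ∂μ → L h`. The limit is `∞` at the zeros of `d`, which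
are therefore `μ`-null.
-/

open Filter MeasureTheory Polynomial Topology
open scoped CompactlySupported ENNReal

namespace RationalMomentProblem

section SumsOfSquares

variable {x : ℝ} {p : ℝ[X]}

lemma X_sub_C_sq_dvd_sub_C_eval_of_forall_le (h : ∀ y, p.eval x ≤ p.eval y) :
    (X - C x) ^ 2 ∣ p - C (p.eval x) := by
  rcases eq_or_ne (p - C (p.eval x)) 0 with h0 | h0
  · exact h0 ▸ dvd_zero _
  have hmin : IsLocalMin (fun y ↦ p.eval y) x := Eventually.of_forall h
  have hderiv : p.derivative.eval x = 0 := by simpa using hmin.deriv_eq_zero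
  rw [← le_rootMultiplicity_iff h0]
  exact (one_lt_rootMultiplicity_iff_isRoot h0).2 ⟨by simp, by simpa using hderiv⟩

lemma eval_nonneg_of_X_sub_C_sq_mul (h : ∀ y, 0 ≤ ((X - C x) ^ 2 * p).eval y) (y : ℝ) :
    0 ≤ p.eval y := by
  have hclosed : IsClosed {y | 0 ≤ p.eval y} := isClosed_le continuous_const p.continuous
  refine hclosed.closure_subset_iff.2 (fun z hz ↦ ?_) ((dense_compl_singleton x) y)
  have hpos : 0 < (z - x) ^ 2 := sq_pos_of_ne_zero (sub_ne_zero.2 hz)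
  exact nonneg_of_mul_nonneg_right (by simpa using h z) hpos

lemma isSumSq_C {c : ℝ} (hc : 0 ≤ c) : IsSumSq (C c) := by
  rw [← Real.mul_self_sqrt hc, C_mul]
  exact .mul_self _

theorem isSumSq_of_forall_eval_nonneg (p : ℝ[X]) (hp : ∀ y, 0 ≤ p.eval y) : IsSumSq p := by
  induction hn : p.natDegree using Nat.strong_induction_on generalizing p with
  | _ n ih =>
  obtain ⟨x, hx⟩ := p.exists_forall_norm_le
  have hmin (y : ℝ) : p.eval x ≤ p.eval y := by
    simpa [abs_of_nonneg (hp _)] using hx y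
  obtain ⟨t, ht⟩ := X_sub_C_sq_dvd_sub_C_eval_of_forall_le hmin
  rw [← sub_add_cancel p (C (p.eval x)), ht]
  refine .add ?_ (isSumSq_C (hp x))
  rcases eq_or_ne t 0 with rfl | ht0
  · simp
  have ht_nonneg : ∀ y, 0 ≤ t.eval y :=
    eval_nonneg_of_X_sub_C_sq_mul (x := x) fun y ↦ by simpa [← ht] using hmin y
  have hdeg : t.natDegree < n := by
    have h := natDegree_sub_C (p := p) (a := p.eval x)
    rw [ht, ((monic_X_sub_C x).pow 2).natDegree_mul' ht0, natDegree_pow, natDegree_X_sub_C] at h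
    lia
  rw [sq]
  exact .mul (.mul_self _) (ih _ hdeg t ht_nonneg rfl)

end SumsOfSquares

lemma map_nonneg_of_isSumSq {B : Type*} [Semiring B] [Module ℝ B] {L : B →ₗ[ℝ] ℝ}
    (hL : ∀ b, 0 ≤ L (b ^ 2)) {b : B} (hb : IsSumSq b) : 0 ≤ L b := by
  induction hb with
  | zero => simp
  | sq_add a _ ih =>
    rw [map_add, ← sq]
    exact add_nonneg (hL a) ih

section Localization

variable {A : Type*} [CommRing A] {S : Submonoid A}

lemma mk_mul_mul_self (a : A) (d : S) :
    Localization.mk (a * d) (d * d) = Localization.mk a d := by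
  rw [← Localization.mk_mul, Localization.mk_self, mul_one]

lemma mk_sub_mk_self (a b : A) (d : S) :
    Localization.mk a d - Localization.mk b d = Localization.mk (a - b) d :=
  (map_sub (Localization.mkAddMonoidHom d) a b).symm

lemma isSumSq_mk_one {a : A} (ha : IsSumSq a) : IsSumSq (Localization.mk a (1 : S)) := by
  induction ha with
  | zero => simp [Localization.mk_zero]
  | sq_add a _ ih =>
    rw [← Localization.add_mk_self, ← one_mul (1 : S), ← Localization.mk_mul, one_mul]
    exact (IsSumSq.mul_self _).add ih

lemma isSumSq_mk {p : A} {q : S} (hp : IsSumSq p) (hq : IsSumSq (q : A)) :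
    IsSumSq (Localization.mk p q) := by
  have hmk : Localization.mk p q =
      Localization.mk p 1 * Localization.mk (q : A) 1 *
        (Localization.mk 1 q * Localization.mk 1 q) := by
    simp only [Localization.mk_mul, Localization.mk_eq_mk_iff, Localization.r_iff_exists]
    exact ⟨1, by push_cast; ring⟩
  rw [hmk]
  exact ((isSumSq_mk_one hp).mul (isSumSq_mk_one hq)).mul (.mul_self _)

end Localization

theorem exists_linearMap_add_nonneg {V W : Type*} [AddCommGroup V] [Module ℝ V] [AddCommGroup W]
    [Module ℝ W] (K : PointedCone ℝ (V × W)) (L : V →ₗ[ℝ] ℝ) (hL : ∀ v, (v, 0) ∈ K → 0 ≤ L v)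
    (hK : ∀ w, ∃ v, (v, w) ∈ K) :
    ∃ Λ : W →ₗ[ℝ] ℝ, ∀ z ∈ K, 0 ≤ L z.1 + Λ z.2 := by
  let F : V × W →ₗ.[ℝ] ℝ := ⟨Submodule.prod ⊤ ⊥, L ∘ₗ .fst ℝ V W ∘ₗ Submodule.subtype _⟩
  have hF_nonneg (x : F.domain) (hx : (x : V × W) ∈ K) : 0 ≤ F x := by
    obtain ⟨⟨v, w⟩, hxF⟩ := x
    obtain rfl : w = 0 := hxF.2
    exact hL v hx
  have hF_cofinal (z : V × W) : ∃ x : F.domain, (x : V × W) + z ∈ K := by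
    obtain ⟨v, hv⟩ := hK z.2
    refine ⟨⟨(v - z.1, 0), by simp [F]⟩, ?_⟩
    simpa [Prod.add_def] using hv
  obtain ⟨G, hGF, hGK⟩ := riesz_extension K F hF_nonneg hF_cofinal
  refine ⟨G ∘ₗ .inr ℝ V W, fun z hz ↦ ?_⟩
  have hGL : G (z.1, 0) = L z.1 := hGF ⟨(z.1, 0), by simp [F]⟩
  simpa [← hGL, ← map_add] using hGK z hz

section TruncatedQuotient

variable {ε δ a d t : ℝ}

/-- The truncation of `a / d` at level `1 / ε`, with a cutoff that vanishes once `1 / ε ≤ t ^ 2`.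
With `h = a / d` it is `h / (1 + ε * h) * max 0 (1 - ε * t ^ 2)`, in a form that also makes sense
for `d = 0` as long as `a ≠ 0`. -/
noncomputable def truncatedQuotient (ε a d t : ℝ) : ℝ :=
  a / (d + ε * a) * max 0 (1 - ε * t ^ 2)

lemma truncatedQuotient_nonneg (hε : 0 ≤ ε) (ha : 0 ≤ a) (hd : 0 ≤ d) :
    0 ≤ truncatedQuotient ε a d t := by
  unfold truncatedQuotient
  positivity

lemma truncatedQuotient_eq_zero (ht : 1 ≤ ε * t ^ 2) : truncatedQuotient ε a d t = 0 := by
  rw [truncatedQuotient, max_eq_left (sub_nonpos.2 ht), mul_zero]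

lemma truncatedQuotient_anti (hδ : 0 < δ) (hδε : δ ≤ ε) (ha : 0 < a) (hd : 0 ≤ d) :
    truncatedQuotient ε a d t ≤ truncatedQuotient δ a d t := by
  unfold truncatedQuotient
  gcongr

lemma truncatedQuotient_mul_le (hε : 0 < ε) (ha : 0 < a) (hd : 0 ≤ d) :
    truncatedQuotient ε a d t * d ≤ a := by
  have hcut : max 0 (1 - ε * t ^ 2) ≤ 1 := max_le zero_le_one (sub_le_self _ (by positivity))
  calc truncatedQuotient ε a d t * d
      ≤ a / (d + ε * a) * 1 * (d + ε * a) := by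
        unfold truncatedQuotient
        gcongr
        exact le_add_of_nonneg_right (by positivity)
    _ = a := by field_simp

lemma le_truncatedQuotient_mul_sq (hε : 0 < ε) (ha : 0 < a) (hd : 0 ≤ d) :
    a * d - ε * (a ^ 2 + a * d * t ^ 2) ≤ truncatedQuotient ε a d t * d ^ 2 := by
  obtain ⟨u, hu⟩ : ∃ u, u = a / (d + ε * a) := ⟨_, rfl⟩
  have hu_mul : u * d + ε * a * u = a := by rw [hu]; field_simp
  have hu_nonneg : 0 ≤ u := by rw [hu]; positivity
  have hud : u * d ≤ a := by linarith [show 0 ≤ ε * a * u by positivity]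
  calc a * d - ε * (a ^ 2 + a * d * t ^ 2)
      = a * d - ε * a * a - ε * t ^ 2 * d * a := by ring
    _ ≤ a * d - ε * a * (u * d) - ε * t ^ 2 * d * (u * d) := by gcongr
    _ = u * (1 - ε * t ^ 2) * d ^ 2 := by linear_combination -d * hu_mul
    _ ≤ u * max 0 (1 - ε * t ^ 2) * d ^ 2 := by gcongr; exact le_max_right ..
    _ = truncatedQuotient ε a d t * d ^ 2 := by rw [hu, truncatedQuotient]

lemma tendsto_ofReal_truncatedQuotient (ha : 0 < a) (hd : 0 ≤ d) {ε : ℕ → ℝ} (hε : ∀ n, 0 < ε n)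
    (hε_lim : Tendsto ε atTop (𝓝 0)) :
    Tendsto (fun n ↦ ENNReal.ofReal (truncatedQuotient (ε n) a d t)) atTop
      (𝓝 (ENNReal.ofReal a / ENNReal.ofReal d)) := by
  have hden : Tendsto (fun n ↦ ENNReal.ofReal (d + ε n * a)) atTop (𝓝 (ENNReal.ofReal d)) :=
    ENNReal.tendsto_ofReal (by simpa using (hε_lim.mul_const a).const_add d)
  have hcut : Tendsto (fun n ↦ ENNReal.ofReal (max 0 (1 - ε n * t ^ 2))) atTop (𝓝 1) := by
    simpa using ENNReal.tendsto_ofReal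
      ((tendsto_const_nhds (x := (0 : ℝ))).max ((hε_lim.mul_const (t ^ 2)).const_sub 1))
  have ha' : ENNReal.ofReal a ≠ 0 := by simpa using ha
  have hquot := ENNReal.Tendsto.div (tendsto_const_nhds (x := ENNReal.ofReal a)) (.inl ha') hden
    (.inr ENNReal.ofReal_ne_top)
  have hprod := ENNReal.Tendsto.mul hquot (.inr ENNReal.one_ne_top) hcut (.inl one_ne_zero)
  rw [mul_one] at hprod
  refine hprod.congr fun n ↦ ?_
  have hpos : 0 < d + ε n * a := add_pos_of_nonneg_of_pos hd (mul_pos (hε n) ha)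
  rw [truncatedQuotient, ENNReal.ofReal_mul (by positivity), ENNReal.ofReal_div_of_pos hpos]

end TruncatedQuotient

section Fractions

variable {X A : Type*} [TopologicalSpace X] [CommRing A] [Algebra ℝ A] {S : Submonoid A}

/-- The cone of pairs `(b, f)` with `b + f ≥ 0`, where `b` ranges over the fractions of functions
on `X` with denominator in `S`. The inequality is stated after multiplication by a nonnegative
denominator of `b`, so that it makes sense at the poles of `b`. -/
def fractionCone (φ : A →ₐ[ℝ] C(X, ℝ)) (S : Submonoid A) :
    PointedCone ℝ (Localization S × C_c(X, ℝ)) where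
  carrier := {z | ∃ (p : A) (q : S), (∀ x, 0 ≤ φ q x) ∧ z.1 = .mk p q ∧
    ∀ x, 0 ≤ φ p x + z.2 x * φ q x}
  zero_mem' := ⟨0, 1, by simp, by simp [Localization.mk_zero], by simp⟩
  add_mem' := by
    rintro ⟨_, f⟩ ⟨_, g⟩ ⟨p, q, hq, rfl, hp⟩ ⟨r, s, hs, rfl, hr⟩
    refine ⟨q * r + s * p, q * s, fun x ↦ ?_, Localization.add_mk .., fun x ↦ ?_⟩
    · simpa using mul_nonneg (hq x) (hs x)
    · have := add_nonneg (mul_nonneg (hs x) (hp x)) (mul_nonneg (hq x) (hr x))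
      simp only [map_add, map_mul, Submonoid.coe_mul, ContinuousMap.add_apply,
        ContinuousMap.mul_apply, Prod.mk_add_mk, CompactlySupportedContinuousMap.add_apply]
      linarith
  smul_mem' := by
    rintro ⟨c, hc⟩ ⟨_, f⟩ ⟨p, q, hq, rfl, hp⟩
    refine ⟨c • p, q, hq, Localization.smul_mk .., fun x ↦ ?_⟩
    have := mul_nonneg hc (hp x)
    simp only [Nonneg.mk_smul, Prod.smul_mk, map_smul, ContinuousMap.coe_smul, Pi.smul_apply,
      smul_eq_mul, CompactlySupportedContinuousMap.coe_smul]
    linarith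

variable {φ : A →ₐ[ℝ] C(X, ℝ)}

lemma mk_mem_fractionCone {p : A} {q : S} {f : C_c(X, ℝ)} (hq : ∀ x, 0 ≤ φ q x)
    (h : ∀ x, 0 ≤ φ p x + f x * φ q x) : (Localization.mk p q, f) ∈ fractionCone φ S :=
  ⟨p, q, hq, rfl, h⟩

/-- Integration of compactly supported functions against `μ` extends `L` to a linear functional on
`Localization S × C_c(X, ℝ)` that is nonnegative on `fractionCone φ S`. -/
def ExtendsNonneg [MeasurableSpace X] (φ : A →ₐ[ℝ] C(X, ℝ)) (L : Localization S →ₗ[ℝ] ℝ)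
    (μ : Measure X) : Prop :=
  ∀ z ∈ fractionCone φ S, 0 ≤ L z.1 + ∫ x, z.2 x ∂μ

lemma exists_measure_extendsNonneg [T2Space X] [LocallyCompactSpace X] [MeasurableSpace X]
    [BorelSpace X] {L : Localization S →ₗ[ℝ] ℝ}
    (hL : ∀ (p : A) (q : S), (∀ x, 0 ≤ φ p x) → (∀ x, 0 ≤ φ q x) → 0 ≤ L (.mk p q)) :
    ∃ μ : Measure X, IsFiniteMeasureOnCompacts μ ∧ ExtendsNonneg φ L μ := by
  have hL_cone (b : Localization S) (hb : (b, 0) ∈ fractionCone φ S) : 0 ≤ L b := by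
    obtain ⟨p, q, hq, rfl, hp⟩ := hb
    exact hL p q (by simpa using hp) hq
  have h_cofinal (f : C_c(X, ℝ)) : ∃ b, (b, f) ∈ fractionCone φ S := by
    obtain ⟨M, hM⟩ := f.hasCompactSupport.exists_bound_of_continuous f.continuous
    refine ⟨_, mk_mem_fractionCone (p := algebraMap ℝ A M) (q := 1) (by simp) fun x ↦ ?_⟩
    simpa [AlgHom.commutes] using neg_le_iff_add_nonneg'.1 (neg_le_of_abs_le (hM x))
  obtain ⟨Λ, hΛ⟩ := exists_linearMap_add_nonneg (fractionCone φ S) L hL_cone h_cofinal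
  have hΛ_nonneg (f : C_c(X, ℝ)) (hf : 0 ≤ f) : 0 ≤ Λ f := by
    have hmem := mk_mem_fractionCone (φ := φ) (S := S) (p := 0) (q := 1) (f := f) (by simp)
      fun x ↦ by simpa using hf x
    simpa [Localization.mk_zero] using hΛ _ hmem
  refine ⟨RealRMK.rieszMeasure (.mk₀ Λ hΛ_nonneg), inferInstance, fun z hz ↦ ?_⟩
  rw [RealRMK.integral_rieszMeasure]
  exact hΛ z hz

section TruncatedFraction

variable [R1Space X] {ε : ℝ} {a d t : C(X, ℝ)}

/-- The truncation of the quotient `a / d` as a compactly supported function, for a proper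
function `t`. -/
noncomputable def truncatedFraction (hε : 0 < ε) (ha : ∀ x, 0 < a x) (hd : ∀ x, 0 ≤ d x)
    (ht : Tendsto t (cocompact X) (cocompact ℝ)) : C_c(X, ℝ) where
  toFun x := truncatedQuotient ε (a x) (d x) (t x)
  continuous_toFun := by
    have hden (x : X) : d x + ε * a x ≠ 0 :=
      (add_pos_of_nonneg_of_pos (hd x) (mul_pos hε (ha x))).ne'
    unfold truncatedQuotient
    fun_prop (disch := exact hden _)
  hasCompactSupport' := by
    have ht_sq : Tendsto (fun x ↦ t x ^ 2) (cocompact X) atTop := by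
      simpa [Function.comp_def] using
        (tendsto_pow_atTop two_ne_zero).comp (tendsto_norm_cocompact_atTop.comp ht)
    rw [hasCompactSupport_iff_eventuallyEq, coclosedCompact_eq_cocompact]
    filter_upwards [ht_sq.eventually_ge_atTop (1 / ε)] with x hx
    exact truncatedQuotient_eq_zero ((div_le_iff₀' hε).1 hx)

@[simp]
lemma truncatedFraction_apply (hε : 0 < ε) (ha : ∀ x, 0 < a x) (hd : ∀ x, 0 ≤ d x)
    (ht : Tendsto t (cocompact X) (cocompact ℝ)) (x : X) :
    truncatedFraction hε ha hd ht x = truncatedQuotient ε (a x) (d x) (t x) :=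
  rfl

end TruncatedFraction

section Representation

variable [R1Space X] [MeasurableSpace X] {L : Localization S →ₗ[ℝ] ℝ} {μ : Measure X} {a t : A}
  {d : S}

lemma tendsto_integral_truncatedFraction (hμ : ExtendsNonneg φ L μ) (ha : ∀ x, 0 < φ a x)
    (hd : ∀ x, 0 ≤ φ d x) (ht : Tendsto (φ t) (cocompact X) (cocompact ℝ)) {ε : ℕ → ℝ}
    (hε : ∀ n, 0 < ε n) (hε_lim : Tendsto ε atTop (𝓝 0)) :
    Tendsto (fun n ↦ ∫ x, truncatedFraction (hε n) ha hd ht x ∂μ) atTop (𝓝 (L (.mk a d))) := by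
  set e : A := a ^ 2 + a * d * t ^ 2 with he
  have upper (n : ℕ) : ∫ x, truncatedFraction (hε n) ha hd ht x ∂μ ≤ L (.mk a d) := by
    have hmem := mk_mem_fractionCone (f := -truncatedFraction (hε n) ha hd ht) hd fun x ↦ by
      simpa using truncatedQuotient_mul_le (hε n) (ha x) (hd x)
    simpa [integral_neg] using hμ _ hmem
  have lower (n : ℕ) : L (.mk a d) - ε n * L (.mk e (d * d)) ≤
      ∫ x, truncatedFraction (hε n) ha hd ht x ∂μ := by
    have hmk : Localization.mk (ε n • e - a * d) (d * d) =
        ε n • Localization.mk e (d * d) - Localization.mk a d := by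
      rw [← mk_sub_mk_self, mk_mul_mul_self, Localization.smul_mk]
    have hmem := mk_mem_fractionCone (φ := φ) (p := ε n • e - a * d) (q := d * d)
      (f := truncatedFraction (hε n) ha hd ht) (fun x ↦ by simpa using mul_self_nonneg _)
      fun x ↦ by
        have := le_truncatedQuotient_mul_sq (t := φ t x) (hε n) (ha x) (hd x)
        simp only [he, map_sub, map_smul, map_add, map_mul, map_pow, Submonoid.coe_mul,
          ContinuousMap.sub_apply, ContinuousMap.smul_apply, ContinuousMap.add_apply,
          ContinuousMap.mul_apply, ContinuousMap.pow_apply, smul_eq_mul, truncatedFraction_apply]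
        linarith
    have := hμ _ hmem
    rw [hmk, map_sub, map_smul, smul_eq_mul] at this
    linarith
  refine tendsto_of_tendsto_of_tendsto_of_le_of_le ?_ tendsto_const_nhds lower upper
  simpa using (hε_lim.mul_const (L (.mk e (d * d)))).const_sub (L (.mk a d))

variable [BorelSpace X] [IsFiniteMeasureOnCompacts μ]

lemma lintegral_ofReal_div_ofReal_eq (hμ : ExtendsNonneg φ L μ) (ha : ∀ x, 0 < φ a x)
    (hd : ∀ x, 0 ≤ φ d x) (ht : Tendsto (φ t) (cocompact X) (cocompact ℝ)) :
    ∫⁻ x, ENNReal.ofReal (φ a x) / ENNReal.ofReal (φ d x) ∂μ =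
      ENNReal.ofReal (L (.mk a d)) := by
  obtain ⟨ε, hε_anti, hε, hε_lim⟩ := exists_seq_strictAnti_tendsto (0 : ℝ)
  let f (n : ℕ) : C_c(X, ℝ) := truncatedFraction (hε n) ha hd ht
  have hf_lintegral (n : ℕ) :
      ∫⁻ x, ENNReal.ofReal (f n x) ∂μ = ENNReal.ofReal (∫ x, f n x ∂μ) :=
    (ofReal_integral_eq_lintegral_ofReal
      ((f n).continuous.integrable_of_hasCompactSupport (f n).hasCompactSupport)
      (.of_forall fun x ↦ truncatedQuotient_nonneg (hε n).le (ha x).le (hd x))).symm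
  have hf_mono (x : X) : Monotone fun n ↦ ENNReal.ofReal (f n x) := fun m n hmn ↦
    ENNReal.ofReal_le_ofReal
      (truncatedQuotient_anti (hε n) (hε_anti.antitone hmn) (ha x) (hd x))
  have hf_lim : Tendsto (fun n ↦ ∫⁻ x, ENNReal.ofReal (f n x) ∂μ) atTop
      (𝓝 (∫⁻ x, ENNReal.ofReal (φ a x) / ENNReal.ofReal (φ d x) ∂μ)) :=
    lintegral_tendsto_of_tendsto_of_monotone
      (fun n ↦ (f n).continuous.measurable.ennreal_ofReal.aemeasurable) (.of_forall hf_mono)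
      (.of_forall fun x ↦ tendsto_ofReal_truncatedQuotient (ha x) (hd x) hε hε_lim)
  simp_rw [hf_lintegral] at hf_lim
  exact tendsto_nhds_unique hf_lim
    (ENNReal.tendsto_ofReal (tendsto_integral_truncatedFraction hμ ha hd ht hε hε_lim))

lemma ae_ne_zero_of_nonneg (hμ : ExtendsNonneg φ L μ) (hd : ∀ x, 0 ≤ φ d x)
    (ht : Tendsto (φ t) (cocompact X) (cocompact ℝ)) : ∀ᵐ x ∂μ, φ d x ≠ 0 := by
  have hlint := lintegral_ofReal_div_ofReal_eq (a := 1) hμ (by simp) hd ht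
  have hmeas : Measurable fun x ↦ ENNReal.ofReal (φ 1 x) / ENNReal.ofReal (φ d x) := by
    fun_prop
  filter_upwards [ae_lt_top hmeas (hlint ▸ ENNReal.ofReal_ne_top)] with x hx h0
  simp [h0] at hx

lemma integrable_div_and_map_mk_eq_integral_of_pos (hμ : ExtendsNonneg φ L μ) (ha : ∀ x, 0 < φ a x)
    (hd : ∀ x, 0 ≤ φ d x) (ht : Tendsto (φ t) (cocompact X) (cocompact ℝ)) :
    Integrable (fun x ↦ φ a x / φ d x) μ ∧ L (.mk a d) = ∫ x, φ a x / φ d x ∂μ := by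
  have hnonneg : 0 ≤ᵐ[μ] fun x ↦ φ a x / φ d x := .of_forall fun x ↦ div_nonneg (ha x).le (hd x)
  have hmeas : AEStronglyMeasurable (fun x ↦ φ a x / φ d x) μ := by
    have : Measurable fun x ↦ φ a x / φ d x := by fun_prop
    exact this.aestronglyMeasurable
  have hlint : ∫⁻ x, ENNReal.ofReal (φ a x / φ d x) ∂μ = ENNReal.ofReal (L (.mk a d)) := by
    rw [← lintegral_ofReal_div_ofReal_eq hμ ha hd ht]
    refine lintegral_congr_ae ?_
    filter_upwards [ae_ne_zero_of_nonneg hμ hd ht] with x hx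
    exact ENNReal.ofReal_div_of_pos ((hd x).lt_of_ne' hx)
  have hL_nonneg : 0 ≤ L (.mk a d) := by
    simpa using hμ _ (mk_mem_fractionCone (p := a) (f := 0) hd fun x ↦ by simpa using (ha x).le)
  refine ⟨⟨hmeas, ?_⟩, ?_⟩
  · rw [hasFiniteIntegral_iff_ofReal hnonneg, hlint]
    exact ENNReal.ofReal_lt_top
  · rw [integral_eq_lintegral_of_nonneg_ae hnonneg hmeas, hlint, ENNReal.toReal_ofReal hL_nonneg]

lemma integrable_div_and_map_mk_eq_integral (hμ : ExtendsNonneg φ L μ) (hd : ∀ x, 0 ≤ φ d x)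
    (ht : Tendsto (φ t) (cocompact X) (cocompact ℝ)) :
    Integrable (fun x ↦ φ a x / φ d x) μ ∧ L (.mk a d) = ∫ x, φ a x / φ d x ∂μ := by
  have hpos_left (x : X) : 0 < φ (a ^ 2 + a + 1) x := by
    simp only [map_add, map_pow, map_one, ContinuousMap.add_apply, ContinuousMap.pow_apply,
      ContinuousMap.one_apply]
    nlinarith [sq_nonneg (φ a x + 1 / 2)]
  have hpos_right (x : X) : 0 < φ (a ^ 2 + 1) x := by
    simp only [map_add, map_pow, map_one, ContinuousMap.add_apply, ContinuousMap.pow_apply,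
      ContinuousMap.one_apply]
    positivity
  obtain ⟨hint_left, hL_left⟩ := integrable_div_and_map_mk_eq_integral_of_pos hμ hpos_left hd ht
  obtain ⟨hint_right, hL_right⟩ := integrable_div_and_map_mk_eq_integral_of_pos hμ hpos_right hd ht
  have hdiff : a = (a ^ 2 + a + 1) - (a ^ 2 + 1) := by ring
  have hfun : (fun x ↦ φ a x / φ d x) =
      fun x ↦ φ (a ^ 2 + a + 1) x / φ d x - φ (a ^ 2 + 1) x / φ d x := by
    funext x
    rw [← sub_div, ← ContinuousMap.sub_apply, ← map_sub, ← hdiff]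
  rw [hfun, integral_sub hint_left hint_right, ← hL_left, ← hL_right, ← map_sub, mk_sub_mk_self,
    ← hdiff]
  exact ⟨hint_left.sub hint_right, rfl⟩

end Representation

/-- A version of Haviland's theorem for fractions: the proper function `φ t` replaces the growth of
the polynomials at infinity. -/
theorem exists_measure_forall_mk_eq_integral_div [T2Space X] [LocallyCompactSpace X]
    [MeasurableSpace X] [BorelSpace X] {L : Localization S →ₗ[ℝ] ℝ}
    (hL : ∀ (p : A) (q : S), (∀ x, 0 ≤ φ p x) → (∀ x, 0 ≤ φ q x) → 0 ≤ L (.mk p q)) {t : A}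
    (ht : Tendsto (φ t) (cocompact X) (cocompact ℝ)) :
    ∃ μ : Measure X, (∀ q : S, μ {x | φ q x = 0} = 0) ∧ ∀ (p : A) (q : S),
      Integrable (fun x ↦ φ p x / φ q x) μ ∧ L (.mk p q) = ∫ x, φ p x / φ q x ∂μ := by
  obtain ⟨μ, _, hμ⟩ := exists_measure_extendsNonneg hL
  have hsq (q : S) (x : X) : 0 ≤ φ ((q * q : S) : A) x := by
    simpa using mul_self_nonneg (φ q x)
  have hnull (q : S) : ∀ᵐ x ∂μ, φ q x ≠ 0 := by
    simpa using ae_ne_zero_of_nonneg hμ (hsq q) ht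
  refine ⟨μ, fun q ↦ by simpa using ae_iff.1 (hnull q), fun p q ↦ ?_⟩
  have hfun : (fun x ↦ φ p x / φ q x) = fun x ↦ φ (p * q) x / φ ((q * q : S) : A) x := by
    funext x
    rcases eq_or_ne (φ q x) 0 with h0 | h0
    · simp [h0]
    · simp [mul_div_mul_right _ _ h0]
  rw [hfun, ← mk_mul_mul_self]
  exact integrable_div_and_map_mk_eq_integral hμ (hsq q) ht

end Fractions

end RationalMomentProblem

open RationalMomentProblem

/-- **Proposition 3.4 (one-dimensional rational moment problem).**
Let `ℰ` be a multiplicative set in `ℝ[y]` (with `1 ∈ ℰ`, `0 ∉ ℰ`) and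
`B = ℰ⁻¹ℝ[y]`.  Every linear functional `L` on `B` that is nonnegative on
squares is given by a positive Borel measure `μ` on `ℝ` that vanishes on the
zero set of each `q ∈ ℰ`: `L(p/q) = ∫ p(y)/q(y) dμ(y)`. -/
theorem rational_moment_problem_one_dimensional
    (ℰ : Submonoid (Polynomial ℝ)) (hℰ : (0 : Polynomial ℝ) ∉ ℰ)
    (L : Localization ℰ →ₗ[ℝ] ℝ) (hL : ∀ b : Localization ℰ, 0 ≤ L (b ^ 2)) :
    ∃ μ : MeasureTheory.Measure ℝ,
      (∀ q ∈ ℰ, μ {y : ℝ | Polynomial.eval y q = 0} = 0) ∧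
      ∀ (p : Polynomial ℝ) (q : Polynomial ℝ) (hq : q ∈ ℰ),
        MeasureTheory.Integrable
          (fun y : ℝ => Polynomial.eval y p / Polynomial.eval y q) μ ∧
        L (Localization.mk p ⟨q, hq⟩) =
          ∫ y : ℝ, Polynomial.eval y p / Polynomial.eval y q ∂μ := by
  have hL_fraction (p : ℝ[X]) (q : ℰ) (hp : ∀ y, 0 ≤ toContinuousMapAlgHom p y)
      (hq : ∀ y, 0 ≤ toContinuousMapAlgHom (q : ℝ[X]) y) : 0 ≤ L (.mk p q) :=
    map_nonneg_of_isSumSq hL <| isSumSq_mk (isSumSq_of_forall_eval_nonneg p hp)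
      (isSumSq_of_forall_eval_nonneg q hq)
  have hX : Tendsto (toContinuousMapAlgHom (X : ℝ[X])) (cocompact ℝ) (cocompact ℝ) := by
    have hid : ⇑(toContinuousMapAlgHom (X : ℝ[X])) = id := by ext; simp
    exact hid ▸ tendsto_id
  obtain ⟨μ, hμ_null, hμ⟩ := exists_measure_forall_mk_eq_integral_div hL_fraction hX
  exact ⟨μ, fun q hq ↦ hμ_null ⟨q, hq⟩, fun p q hq ↦ hμ p ⟨q, hq⟩⟩
end

section
/- Let ℰ be a finitely generated multiplicative set in ℝ[y], B := ℰ⁻¹ℝ[y], and let C be a finite-dimensional commutative unital ℝ-algebra. Let L be a linear functional on the ℝ-algebra B ⊗_ℝ C with L(w²) ≥ 0 for all w ∈ B ⊗_ℝ C. Then there exist n ∈ ℕ, unital ℝ-algebra homomorphisms η₁,…,η_n : C → ℝ, and positive Borel measures μ₁,…,μ_n on ℝ with μ_j({y ∈ ℝ : q(y) = 0}) = 0 for all q ∈ ℰ and j = 1,…,n, such that for all p ∈ ℝ[y], q ∈ ℰ and c ∈ C, the function y ↦ p(y)/q(y) is μ_j-integrable for each j and L((p/q) ⊗ c) = Σ_{j=1}^{n}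 η_j(c) · ∫_ℝ p(y)/q(y) dμ_j(y). -/
open scoped TensorProduct

/-!
Let `L` be positive on the squares of `B ⊗ C`, where `B = ℰ⁻¹ℝ[y]`. For fixed `b`, the functional
`c ↦ L (b² ⊗ c)` is positive on the squares of the finite-dimensional algebra `C`, so by
Cauchy–Schwarz it kills nilpotents. An element of `C` that is nonnegative under all real characters
is a square modulo the nilradical, because the other residue fields are `ℂ`. Hence `L` only sees the
image of `C` in `ℝⁿ` under its characters `χ₁, …, χₙ`, and `L (b ⊗ c) = ∑ χⱼ(c) Mⱼ(b)` with each
`Mⱼ` positive on the squares of `B`.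

A fraction `p / q = (p q) (1 / q)²` that is nonnegative away from the poles is a sum of squares,
since a nonnegative real polynomial is. So each `Mⱼ` is a positive functional in the sense of
Haviland's theorem on the complement of the poles. If some `d ∈ ℰ` vanishes at all poles, then
`y² + 1 / d²` is a proper element of `B`, and `Mⱼ` is integration against a measure.
-/

/-! ### Functionals positive on squares -/

section PositiveOnSquares

variable {K A : Type*} [Field K] [LinearOrder K] [CommRing A] [Algebra K A]

/-- The positivity required of a moment functional: a linear functional on a commutative algebra
that is nonnegative on squares. -/
def PositiveOnSquares (L : A →ₗ[K] K) : Prop :=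
  ∀ a, 0 ≤ L (a ^ 2)

namespace PositiveOnSquares

variable [IsStrictOrderedRing K] {L : A →ₗ[K] K}

theorem sq_map_mul_le (hL : PositiveOnSquares L) (a b : A) :
    L (a * b) ^ 2 ≤ L (a ^ 2) * L (b ^ 2) := by
  have hquad (t : K) : 0 ≤ L (a ^ 2) * (t * t) + 2 * L (a * b) * t + L (b ^ 2) := by
    have hexp : (t • a + b) ^ 2 = (t * t) • a ^ 2 + (2 * t) • (a * b) + b ^ 2 := by
      simp only [Algebra.smul_def, map_mul, map_ofNat]
      ring
    calc 0 ≤ L ((t • a + b) ^ 2) := hL _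
      _ = L (a ^ 2) * (t * t) + 2 * L (a * b) * t + L (b ^ 2) := by
        simp only [hexp, map_add, map_smul, smul_eq_mul]
        ring
  have hdiscrim := discrim_le_zero hquad
  rw [discrim] at hdiscrim
  linarith

theorem map_eq_zero_of_map_sq_eq_zero (hL : PositiveOnSquares L) {a : A} (ha : L (a ^ 2) = 0) :
    L a = 0 := by
  simpa [ha] using hL.sq_map_mul_le a 1

theorem map_eq_zero_of_isNilpotent (hL : PositiveOnSquares L) {a : A} (ha : IsNilpotent a) :
    L a = 0 := by
  have hpow (k : ℕ) (a : A) (h : a ^ 2 ^ k = 0) : L a = 0 := by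
    induction k generalizing a with
    | zero => simpa using congrArg L h
    | succ k ih =>
      exact hL.map_eq_zero_of_map_sq_eq_zero (ih _ (by rwa [← pow_mul, ← pow_succ']))
  obtain ⟨n, hn⟩ := ha
  exact hpow n a (pow_eq_zero_of_le Nat.lt_two_pow_self.le hn)

theorem map_nonneg_of_isSumSq (hL : PositiveOnSquares L) {a : A} (ha : IsSumSq a) : 0 ≤ L a := by
  induction ha with
  | zero => simp
  | sq_add a _ ih =>
    rw [map_add, ← sq]
    exact add_nonneg (hL a) ih

end PositiveOnSquares

end PositiveOnSquares

theorem pi_algHom_surjective (K A : Type*) [Field K] [Ring A] [Algebra K A]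
    [Finite (A →ₐ[K] K)] :
    Function.Surjective (LinearMap.pi fun χ : A →ₐ[K] K => χ.toLinearMap) := by
  have hindep : LinearIndependent K fun (χ : A →ₐ[K] K) (a : A) => χ a :=
    (linearIndependent_monoidHom A K).comp (fun χ : A →ₐ[K] K => (χ : A →* K))
      fun _ _ h => AlgHom.ext (DFunLike.congr_fun (F := A →* K) h)
  have hspan := span_flip_eq_top_iff_linearIndependent.2 hindep
  rw [← LinearMap.range_eq_top, eq_top_iff, ← hspan, Submodule.span_le]
  rintro _ ⟨a, rfl⟩
  exact ⟨a, rfl⟩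

theorem isSquare_of_forall_algHom_nonneg {F : Type*} [Field F] [Algebra ℝ F]
    [Algebra.IsAlgebraic ℝ F] {x : F} (hx : ∀ χ : F →ₐ[ℝ] ℝ, 0 ≤ χ x) : IsSquare x := by
  rcases Real.nonempty_algEquiv_or F with ⟨⟨φ⟩⟩ | ⟨⟨φ⟩⟩
  · simpa using (Real.isSquare_iff.2 (hx φ)).map φ.symm
  · simpa using (Complex.isSquare (φ x)).map φ.symm

section FiniteDimensional

variable {B C : Type*} [CommRing B] [Algebra ℝ B] [CommRing C] [Algebra ℝ C]
  [FiniteDimensional ℝ C]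

theorem exists_isNilpotent_sq_sub_of_forall_algHom_nonneg {c : C}
    (hc : ∀ χ : C →ₐ[ℝ] ℝ, 0 ≤ χ c) : ∃ s : C, IsNilpotent (s ^ 2 - c) := by
  have : IsArtinianRing C := .of_finite ℝ C
  have hroot (I : MaximalSpectrum C) : ∃ s : C, s ^ 2 - c ∈ I.asIdeal := by
    let := Ideal.Quotient.field I.asIdeal
    obtain ⟨t, ht⟩ := isSquare_of_forall_algHom_nonneg (x := Ideal.Quotient.mkₐ ℝ I.asIdeal c)
      fun χ => hc (χ.comp (Ideal.Quotient.mkₐ ℝ I.asIdeal))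
    obtain ⟨s, rfl⟩ := Ideal.Quotient.mk_surjective t
    refine ⟨s, Ideal.Quotient.eq.1 ?_⟩
    rw [sq, map_mul]
    exact ht.symm
  choose s hs using hroot
  obtain ⟨r, hr⟩ := Ideal.exists_forall_sub_mem_ideal
    (fun _ _ => MaximalSpectrum.isCoprime_of_ne) s
  refine ⟨r, ?_⟩
  rw [← mem_nilradical, IsArtinianRing.nilradical_eq_iInf, Ideal.mem_iInf]
  intro I
  have hsplit : r ^ 2 - c = (r + s I) * (r - s I) + (s I ^ 2 - c) := by ring
  rw [hsplit]
  exact I.asIdeal.add_mem (I.asIdeal.mul_mem_left _ (hr I)) (hs I)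

theorem PositiveOnSquares.map_nonneg_of_forall_algHom_nonneg {M : C →ₗ[ℝ] ℝ}
    (hM : PositiveOnSquares M) {c : C} (hc : ∀ χ : C →ₐ[ℝ] ℝ, 0 ≤ χ c) : 0 ≤ M c := by
  obtain ⟨s, hs⟩ := exists_isNilpotent_sq_sub_of_forall_algHom_nonneg hc
  have hMs := hM.map_eq_zero_of_isNilpotent hs
  rw [map_sub, sub_eq_zero] at hMs
  exact hMs ▸ hM s

namespace PositiveOnSquares

variable {L : B ⊗[ℝ] C →ₗ[ℝ] ℝ}

theorem comp_mk_flip (hL : PositiveOnSquares L) {c : C} (hc : ∀ χ : C →ₐ[ℝ] ℝ, 0 ≤ χ c) :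
    PositiveOnSquares (L ∘ₗ (TensorProduct.mk ℝ B C).flip c) := by
  intro b
  have hM : PositiveOnSquares (L ∘ₗ TensorProduct.mk ℝ B C (b ^ 2)) := fun c => by
    simpa [Algebra.TensorProduct.tmul_pow] using hL (b ⊗ₜ c)
  exact hM.map_nonneg_of_forall_algHom_nonneg hc

theorem map_tmul_eq_zero (hL : PositiveOnSquares L) (b : B) {c : C}
    (hc : ∀ χ : C →ₐ[ℝ] ℝ, χ c = 0) : L (b ⊗ₜ c) = 0 := by
  have hpos := hL.comp_mk_flip fun χ => (hc χ).ge
  have hneg := hL.comp_mk_flip (c := -c) fun χ => by simp [hc χ]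
  refine hpos.map_eq_zero_of_map_sq_eq_zero (le_antisymm ?_ (hpos b))
  simpa using hneg b

/-- `M χ b = L (b ⊗ e)` for any lift `e` of the coordinate idempotent at `χ` of the image of `C` in
`ℝⁿ` under its real characters. -/
theorem exists_eq_sum_algHom_mul [Fintype (C →ₐ[ℝ] ℝ)] (hL : PositiveOnSquares L) :
    ∃ M : (C →ₐ[ℝ] ℝ) → B →ₗ[ℝ] ℝ, (∀ χ, PositiveOnSquares (M χ)) ∧
      ∀ b c, L (b ⊗ₜ c) = ∑ χ, χ c * M χ b := by
  classical
  choose e he using fun χ : C →ₐ[ℝ] ℝ => pi_algHom_surjective ℝ C (Pi.single χ 1)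
  have he' (χ ψ : C →ₐ[ℝ] ℝ) : ψ (e χ) = Pi.single (M := fun _ => ℝ) χ 1 ψ := congrFun (he χ) ψ
  refine ⟨fun χ => L ∘ₗ (TensorProduct.mk ℝ B C).flip (e χ), fun χ => hL.comp_mk_flip fun ψ => ?_,
    fun b c => ?_⟩
  · rw [he']
    exact Pi.single_nonneg (α := fun _ => ℝ).2 zero_le_one ψ
  · have hker : L (b ⊗ₜ (c - ∑ χ : C →ₐ[ℝ] ℝ, χ c • e χ)) = 0 :=
      hL.map_tmul_eq_zero b fun ψ => by simp [he', Pi.single_apply]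
    simpa [TensorProduct.tmul_sub, TensorProduct.tmul_sum, sub_eq_zero] using hker

end PositiveOnSquares

end FiniteDimensional

open Polynomial MeasureTheory Filter Topology CompactlySupported

/-! ### Nonnegative real polynomials -/

theorem eval_nonneg_of_mul_nonneg {q s : ℝ[X]} (hq0 : q ≠ 0) (hq : ∀ x, 0 ≤ q.eval x)
    (hqs : ∀ x, 0 ≤ (q * s).eval x) (x : ℝ) : 0 ≤ s.eval x := by
  have hdense : Dense {x | q.IsRoot x}ᶜ := (finite_setOfPred_isRoot hq0).countable.dense_compl ℝ
  refine hdense.induction (fun x hx => ?_) (isClosed_le continuous_const s.continuous) x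
  have hqx : 0 < q.eval x := (hq x).lt_of_ne' hx
  exact nonneg_of_mul_nonneg_right (eval_mul (R := ℝ) ▸ hqs x) hqx

theorem sq_X_sub_C_dvd_of_isRoot_of_nonneg {p : ℝ[X]} {a : ℝ} (hp : ∀ x, 0 ≤ p.eval x)
    (ha : p.IsRoot a) : (X - C a) ^ 2 ∣ p := by
  rcases eq_or_ne p 0 with rfl | hp0
  · exact dvd_zero _
  have hmin : IsLocalMin (fun x => p.eval x) a := .of_forall fun x => ha.le.trans (hp x)
  have hderiv : p.derivative.IsRoot a := hmin.hasDerivAt_eq_zero (p.hasDerivAt a)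
  rw [← le_rootMultiplicity_iff hp0]
  exact (one_lt_rootMultiplicity_iff_isRoot hp0).2 ⟨ha, hderiv⟩

theorem exists_sq_add_sq_dvd_of_nonneg {p : ℝ[X]} (hp : ∀ x, 0 ≤ p.eval x)
    (hdeg : p.degree ≠ 0) : ∃ a b : ℝ, (X - C a) ^ 2 + C b ^ 2 ∣ p := by
  obtain ⟨z, hz⟩ := IsAlgClosed.exists_aeval_eq_zero ℂ p hdeg
  refine ⟨z.re, z.im, ?_⟩
  by_cases him : z.im = 0
  · have hroot : p.IsRoot z.re := by
      rw [← Complex.conj_eq_iff_im, Complex.conj_eq_iff_re] at him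
      have haeval := aeval_algebraMap_apply ℂ z.re p
      rw [Complex.coe_algebraMap, him, hz, coe_aeval_eq_eval] at haeval
      exact_mod_cast haeval.symm
    simpa [him] using sq_X_sub_C_dvd_of_isRoot_of_nonneg hp hroot
  · convert p.quadratic_dvd_of_aeval_eq_zero_im_ne_zero hz him using 1
    rw [← Complex.normSq_eq_norm_sq, Complex.normSq_apply]
    simp only [C_add, C_mul, map_ofNat]
    ring

theorem isSumSq_of_forall_eval_nonneg {p : ℝ[X]} (hp : ∀ x, 0 ≤ p.eval x) : IsSumSq p := by
  induction hn : p.natDegree using Nat.strong_induction_on generalizing p with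
  | _ n ih =>
    subst hn
    by_cases hdeg : p.natDegree = 0
    · obtain ⟨c, rfl⟩ := natDegree_eq_zero.1 hdeg
      have hc : IsSquare c := Real.isSquare_iff.2 (by simpa using hp 0)
      exact (hc.map C).isSumSq
    obtain ⟨a, b, s, hs⟩ := exists_sq_add_sq_dvd_of_nonneg hp fun h =>
      hdeg (natDegree_eq_of_degree_eq_some h)
    set q : ℝ[X] := (X - C a) ^ 2 + C b ^ 2 with hq
    have hqdeg : q.natDegree = 2 := by rw [hq]; compute_degree!
    have hq0 : q ≠ 0 := by intro h; simp [h] at hqdeg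
    have hs0 : s ≠ 0 := by rintro rfl; simp [hs] at hdeg
    have hqsq : IsSumSq q := (IsSquare.sq _).isSumSq.add (IsSquare.sq _).isSumSq
    have hsnonneg : ∀ x, 0 ≤ s.eval x :=
      eval_nonneg_of_mul_nonneg hq0 (fun x => by simp only [hq, eval_add, eval_pow]; positivity)
        (hs ▸ hp)
    have hlt : s.natDegree < p.natDegree := by rw [hs, natDegree_mul hq0 hs0]; omega
    exact hs ▸ hqsq.mul (ih _ hlt hsnonneg rfl)

/-! ### Haviland's theorem -/

theorem integrable_and_integral_eq_of_monotone {α : Type*} [MeasurableSpace α] {μ : Measure α}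
    {f : ℕ → α → ℝ} {F : α → ℝ} {l : ℝ} (hf : ∀ n, Integrable (f n) μ)
    (hf_nonneg : ∀ n, 0 ≤ᵐ[μ] f n) (hf_mono : ∀ᵐ x ∂μ, Monotone fun n => f n x)
    (hf_tendsto : ∀ᵐ x ∂μ, Tendsto (fun n => f n x) atTop (𝓝 (F x)))
    (hl : Tendsto (fun n => ∫ x, f n x ∂μ) atTop (𝓝 l)) :
    Integrable F μ ∧ ∫ x, F x ∂μ = l := by
  have hF_meas : AEStronglyMeasurable F μ :=
    aestronglyMeasurable_of_tendsto_ae atTop (fun n => (hf n).1) hf_tendsto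
  have hF_nonneg : 0 ≤ᵐ[μ] F := by
    filter_upwards [hf_tendsto, ae_all_iff.2 hf_nonneg] with x hx h0 using
      ge_of_tendsto' hx h0
  have hlint : Tendsto (fun n => ∫⁻ x, ENNReal.ofReal (f n x) ∂μ) atTop
      (𝓝 (∫⁻ x, ENNReal.ofReal (F x) ∂μ)) :=
    lintegral_tendsto_of_tendsto_of_monotone (fun n => (hf n).1.aemeasurable.ennreal_ofReal)
      (hf_mono.mono fun x hx => ENNReal.ofReal_mono.comp hx)
      (hf_tendsto.mono fun x hx => ENNReal.tendsto_ofReal hx)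
  simp_rw [← fun n => ofReal_integral_eq_lintegral_ofReal (hf n) (hf_nonneg n)] at hlint
  have hF_lint : ∫⁻ x, ENNReal.ofReal (F x) ∂μ = ENNReal.ofReal l :=
    tendsto_nhds_unique hlint (ENNReal.tendsto_ofReal hl)
  have hF : Integrable F μ := (lintegral_ofReal_ne_top_iff_integrable hF_meas hF_nonneg).1
    (hF_lint ▸ ENNReal.ofReal_ne_top)
  exact ⟨hF, tendsto_nhds_unique (integral_tendsto_of_tendsto_of_monotone hf hF hf_mono hf_tendsto)
    hl⟩

section Haviland

variable {X : Type*}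

/-- The cutoffs `(1 - f / (n + 1))⁺`, supported in sublevel sets of `f` and increasing to `1` where
`f` is nonnegative. -/
noncomputable def sublevelCutoff (f : X → ℝ) (n : ℕ) (x : X) : ℝ :=
  max 0 (1 - f x / (n + 1))

variable {f : X → ℝ}

theorem sublevelCutoff_nonneg (f : X → ℝ) (n : ℕ) (x : X) : 0 ≤ sublevelCutoff f n x :=
  le_max_left _ _

theorem one_sub_div_le_sublevelCutoff (f : X → ℝ) (n : ℕ) (x : X) :
    1 - f x / (n + 1) ≤ sublevelCutoff f n x :=
  le_max_right _ _

theorem sublevelCutoff_le_one {x : X} (hx : 0 ≤ f x) (n : ℕ) : sublevelCutoff f n x ≤ 1 :=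
  max_le zero_le_one (sub_le_self _ (by positivity))

theorem monotone_sublevelCutoff {x : X} (hx : 0 ≤ f x) :
    Monotone fun n => sublevelCutoff f n x := fun m n hmn => by
  have hdiv : f x / (n + 1) ≤ f x / (m + 1) := by gcongr
  exact max_le_max_left 0 (sub_le_sub_left hdiv 1)

theorem tendsto_sublevelCutoff (f : X → ℝ) (x : X) :
    Tendsto (fun n => sublevelCutoff f n x) atTop (𝓝 1) := by
  have hlim := (tendsto_one_div_add_atTop_nhds_zero_nat (𝕜 := ℝ)).const_mul (f x)
  simpa [sublevelCutoff, div_eq_mul_inv] using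
    (tendsto_const_nhds (x := (0 : ℝ))).max (hlim.const_sub 1)

variable [TopologicalSpace X]

theorem continuous_sublevelCutoff (hf : Continuous f) (n : ℕ) :
    Continuous (sublevelCutoff f n) := by
  unfold sublevelCutoff
  fun_prop

theorem hasCompactSupport_sublevelCutoff [R1Space X] (hf : ∀ r, IsCompact {x | f x ≤ r}) (n : ℕ) :
    HasCompactSupport (sublevelCutoff f n) := by
  refine .intro (hf (n + 1)) fun x hx => max_eq_left ?_
  rw [sub_nonpos, one_le_div (by positivity)]
  exact (not_le.1 hx).le

/-- M. Riesz extension along `b ↦ (0, b)` into `C_c(X, ℝ) × B`, ordered by `0 ≤ g + ev b`. Working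
with pairs rather than with functions makes it unnecessary for `ev` to be injective. -/
theorem exists_positiveLinearMap_le_and_le {B : Type*} [AddCommGroup B] [Module ℝ B]
    (ev : B →ₗ[ℝ] C(X, ℝ)) {u : B} (hu : ev u = 1) (L : B →ₗ[ℝ] ℝ)
    (hL : ∀ b, 0 ≤ ev b → 0 ≤ L b) :
    ∃ Λ : C_c(X, ℝ) →ₚ[ℝ] ℝ,
      (∀ g b, (∀ x, g x ≤ ev b x) → Λ g ≤ L b) ∧ ∀ g b, (∀ x, ev b x ≤ g x) → L b ≤ Λ g := by
  let s : PointedCone ℝ (C_c(X, ℝ) × B) :=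
    { carrier := {w | ∀ x, 0 ≤ w.1 x + ev w.2 x}
      add_mem' := fun {v w} hv hw x => by
        simpa [add_add_add_comm] using add_nonneg (hv x) (hw x)
      zero_mem' := fun x => by simp
      smul_mem' := fun ⟨r, hr⟩ w hw x => by
        simpa [Nonneg.mk_smul, ← mul_add] using mul_nonneg hr (hw x) }
  let L₀ : C_c(X, ℝ) × B →ₗ.[ℝ] ℝ :=
    ⟨LinearMap.range (LinearMap.inr ℝ C_c(X, ℝ) B), L ∘ₗ LinearMap.snd ℝ _ B ∘ₗ Submodule.subtype _⟩
  obtain ⟨G, hGL, hGs⟩ := riesz_extension s L₀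
    (by
      rintro ⟨_, b, rfl⟩ hb
      exact hL b fun x => by simpa using hb x)
    (by
      rintro ⟨g, b⟩
      obtain ⟨M, hM⟩ := g.hasCompactSupport.exists_bound_of_continuous g.continuous
      refine ⟨⟨_, M • u - b, rfl⟩, fun x => ?_⟩
      simpa [hu] using neg_le_iff_add_nonneg.1 (abs_le.1 (hM x)).1)
  have hG (g : C_c(X, ℝ)) (b : B) : G (g, b) = G (g, 0) + L b := by
    rw [← show G (0, b) = L b from hGL ⟨_, b, rfl⟩, ← map_add, Prod.mk_add_mk, add_zero, zero_add]
  refine ⟨.mk₀ (G ∘ₗ LinearMap.inl ℝ _ B) fun g hg => hGs (g, 0) fun x => by simpa using hg x,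
    fun g b h => ?_, fun g b h => ?_⟩
  · have := hGs (-g, b) fun x => by simpa using h x
    rwa [hG, show (-g, (0 : B)) = -(g, 0) by simp, map_neg, neg_add_eq_sub, sub_nonneg] at this
  · have := hGs (g, -b) fun x => by simpa using h x
    rwa [hG, map_neg, ← sub_eq_add_neg, sub_nonneg] at this

variable [T2Space X] [LocallyCompactSpace X] [MeasurableSpace X] [BorelSpace X]
  {B : Type*} [CommRing B] [Algebra ℝ B]

/-- Haviland's theorem: the cutoffs of a proper element `f` lose at most `L (b * f) / (n + 1)` of
the integral of `b`, so no mass escapes to infinity. -/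
theorem exists_measure_integral_eq_of_isCompact_sublevel (ev : B →ₐ[ℝ] C(X, ℝ)) (L : B →ₗ[ℝ] ℝ)
    (hL : ∀ b, 0 ≤ ev b → 0 ≤ L b) {f : B} (hf_nonneg : 0 ≤ ev f)
    (hf : ∀ r, IsCompact {x | ev f x ≤ r}) :
    ∃ μ : Measure X, ∀ b, Integrable (ev b) μ ∧ ∫ x, ev b x ∂μ = L b := by
  obtain ⟨Λ, hΛ_le, hΛ_ge⟩ := exists_positiveLinearMap_le_and_le ev.toLinearMap (map_one ev) L hL
  refine ⟨RealRMK.rieszMeasure Λ, ?_⟩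
  have of_nonneg (b : B) (hb : ∀ x, 0 ≤ ev b x) : Integrable (ev b) (RealRMK.rieszMeasure Λ) ∧
      ∫ x, ev b x ∂(RealRMK.rieszMeasure Λ) = L b := by
    let ψ (n : ℕ) : C_c(X, ℝ) :=
      ⟨⟨fun x => sublevelCutoff (ev f) n x * ev b x,
        (continuous_sublevelCutoff (ev f).continuous n).mul (ev b).continuous⟩,
        (hasCompactSupport_sublevelCutoff hf n).mul_right⟩
    have hψ_le (n : ℕ) : Λ (ψ n) ≤ L b := hΛ_le _ _ fun x =>
      mul_le_of_le_one_left (hb x) (sublevelCutoff_le_one (hf_nonneg x) n)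
    have hle_ψ (n : ℕ) : L b - L (b * f) * (1 / (n + 1)) ≤ Λ (ψ n) := by
      have hLb : L (b - (1 / (n + 1) : ℝ) • (b * f)) = L b - L (b * f) * (1 / (n + 1)) := by
        simp [mul_comm]
      rw [← hLb]
      refine hΛ_ge _ _ fun x => ?_
      calc ev (b - (1 / (n + 1) : ℝ) • (b * f)) x = (1 - ev f x / (n + 1)) * ev b x := by
            simp only [map_sub, map_smul, map_mul, ContinuousMap.sub_apply,
              ContinuousMap.smul_apply, ContinuousMap.mul_apply, smul_eq_mul]
            ring
        _ ≤ sublevelCutoff (ev f) n x * ev b x :=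
          mul_le_mul_of_nonneg_right (one_sub_div_le_sublevelCutoff (ev f) n x) (hb x)
    have hlim : Tendsto (fun n => Λ (ψ n)) atTop (𝓝 (L b)) := by
      refine tendsto_of_tendsto_of_tendsto_of_le_of_le ?_ tendsto_const_nhds hle_ψ hψ_le
      simpa using (tendsto_one_div_add_atTop_nhds_zero_nat.const_mul (L (b * f))).const_sub (L b)
    simp_rw [← RealRMK.integral_rieszMeasure Λ] at hlim
    exact integrable_and_integral_eq_of_monotone (fun n => (ψ n).integrable)
      (fun n => .of_forall fun x => mul_nonneg (sublevelCutoff_nonneg _ n x) (hb x))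
      (.of_forall fun x => (monotone_sublevelCutoff (hf_nonneg x)).mul_const (hb x))
      (.of_forall fun x => by simpa [ψ] using (tendsto_sublevelCutoff (ev f) x).mul_const (ev b x))
      hlim
  intro b
  obtain ⟨hi, hI⟩ := of_nonneg (b ^ 2 + b + 1) fun x => by
    simp only [map_add, map_pow, map_one, ContinuousMap.add_apply, ContinuousMap.pow_apply,
      ContinuousMap.one_apply]
    nlinarith [sq_nonneg (ev b x + 1)]
  obtain ⟨hi', hI'⟩ := of_nonneg (b ^ 2 + 1) fun x => by
    simp only [map_add, map_pow, map_one, ContinuousMap.add_apply, ContinuousMap.pow_apply,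
      ContinuousMap.one_apply]
    positivity
  have hb : b = (b ^ 2 + b + 1) - (b ^ 2 + 1) := by ring
  rw [hb, map_sub, map_sub, ← hI, ← hI']
  exact ⟨hi.sub hi', integral_sub hi hi'⟩

end Haviland

/-! ### Rational functions on the line -/

theorem isSumSq_map {R S : Type*} [NonAssocSemiring R] [NonAssocSemiring S] (φ : R →+* S) {a : R}
    (ha : IsSumSq a) : IsSumSq (φ a) := by
  induction ha with
  | zero => simp
  | sq_add a _ ih => simpa using .sq_add (φ a) ih

theorem isCompact_setOf_add_one_div_sq_le {X : Type*} [TopologicalSpace X] {f g : X → ℝ}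
    (hf : Continuous f) (hg : Continuous g) (hf_compact : ∀ r, IsCompact {x | f x ≤ r})
    {s : Set X} (hs : ∀ x, x ∈ s ↔ g x ≠ 0) (r : ℝ) :
    IsCompact {x : s | f x + (1 / g x) ^ 2 ≤ r} := by
  have himage : Subtype.val '' {x : s | f x + (1 / g x) ^ 2 ≤ r} =
      {x | f x ≤ r} ∩ {x | f x * g x ^ 2 + 1 ≤ r * g x ^ 2} := by
    have hclear {x : X} (hx : g x ≠ 0) :
        f x + (1 / g x) ^ 2 ≤ r ↔ f x * g x ^ 2 + 1 ≤ r * g x ^ 2 := by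
      rw [← mul_le_mul_iff_left₀ (a := g x ^ 2) (by positivity), add_mul, div_pow, one_pow,
        one_div_mul_cancel (pow_ne_zero 2 hx)]
    ext x
    constructor
    · rintro ⟨⟨x, hx⟩, hle, rfl⟩
      have hfx : f x ≤ r := (le_add_of_nonneg_right (sq_nonneg _)).trans hle
      exact ⟨hfx, (hclear ((hs x).1 hx)).1 hle⟩
    · rintro ⟨-, hle⟩
      have hx : g x ≠ 0 := by
        intro h
        norm_num [h] at hle
      exact ⟨⟨x, (hs x).2 hx⟩, (hclear hx).2 hle, rfl⟩
  rw [Subtype.isCompact_iff, himage]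
  exact (hf_compact r).inter_right (isClosed_le (by fun_prop) (by fun_prop))

section RationalFunctions

/-- The common set of poles of the fractions in `Localization ℰ`, as functions on `ℝ`. -/
def realZeros (ℰ : Submonoid ℝ[X]) : Set ℝ :=
  {y | ∃ q ∈ ℰ, q.eval y = 0}

variable {ℰ : Submonoid ℝ[X]}

theorem setOf_eval_eq_zero_subset_realZeros {q : ℝ[X]} (hq : q ∈ ℰ) :
    {y | q.eval y = 0} ⊆ realZeros ℰ :=
  fun _ hy => ⟨q, hq, hy⟩

theorem eval_ne_zero_of_notMem_realZeros {q : ℝ[X]} (hq : q ∈ ℰ) {y : ℝ} (hy : y ∉ realZeros ℰ) :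
    q.eval y ≠ 0 :=
  fun h => hy ⟨q, hq, h⟩

theorem finite_realZeros_of_fg (hℰ : 0 ∉ ℰ) (hfg : ℰ.FG) : (realZeros ℰ).Finite := by
  obtain ⟨S, rfl⟩ := hfg
  have hroots : (⋃ g ∈ S, {y | g.IsRoot y}).Finite := S.finite_toSet.biUnion fun g hg =>
    finite_setOfPred_isRoot (ne_of_mem_of_not_mem (Submonoid.subset_closure hg) hℰ)
  refine hroots.subset fun y ⟨q, hq, hqy⟩ => ?_
  by_contra hy
  have hle : Submonoid.closure (S : Set ℝ[X]) ≤ (nonZeroDivisors ℝ).comap (evalRingHom y) :=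
    Submonoid.closure_le.2 fun g hg => mem_nonZeroDivisors_of_ne_zero fun hgy =>
      hy (Set.mem_biUnion hg hgy)
  exact nonZeroDivisors.ne_zero (hle hq) hqy

theorem exists_mem_forall_eval_eq_zero (hZ : (realZeros ℰ).Finite) :
    ∃ d ∈ ℰ, ∀ y ∈ realZeros ℰ, d.eval y = 0 := by
  choose! q hq hqy using fun y (hy : y ∈ realZeros ℰ) => hy
  refine ⟨∏ y ∈ hZ.toFinset, q y, Submonoid.prod_mem _ fun y hy => hq y (hZ.mem_toFinset.1 hy),
    fun y hy => ?_⟩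
  rw [eval_prod]
  exact Finset.prod_eq_zero (hZ.mem_toFinset.2 hy) (hqy y hy)

/-- Evaluation of the fractions in `Localization ℰ` as continuous functions away from their
poles. -/
noncomputable def rationalEval (ℰ : Submonoid ℝ[X]) :
    Localization ℰ →ₐ[ℝ] C(((realZeros ℰ)ᶜ : Set ℝ), ℝ) :=
  IsLocalization.liftAlgHom (M := ℰ) (f := toContinuousMapOnAlgHom (realZeros ℰ)ᶜ) fun q =>
    (ContinuousMap.isUnit_iff_forall_ne_zero _).2 fun y => eval_ne_zero_of_notMem_realZeros q.2 y.2

theorem rationalEval_mk (p : ℝ[X]) (q : ℰ) (y : ((realZeros ℰ)ᶜ : Set ℝ)) :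
    rationalEval ℰ (Localization.mk p q) y = p.eval y.1 / (q : ℝ[X]).eval y.1 := by
  have hpoly (r : ℝ[X]) : rationalEval ℰ (algebraMap _ _ r) y = r.eval y.1 := by
    simp [rationalEval]
  rw [eq_div_iff (eval_ne_zero_of_notMem_realZeros q.2 y.2), ← hpoly, ← hpoly,
    ← ContinuousMap.mul_apply, ← map_mul, Localization.mk_eq_mk', IsLocalization.mk'_spec]

theorem isSumSq_of_rationalEval_nonneg (hZ : Dense (realZeros ℰ)ᶜ) {b : Localization ℰ}
    (hb : 0 ≤ rationalEval ℰ b) : IsSumSq b := by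
  induction b using Localization.induction_on with
  | H w =>
    obtain ⟨p, q⟩ := w
    have hnonneg (y : ℝ) : 0 ≤ (p * q).eval y := by
      refine hZ.induction (fun y hy => ?_) (isClosed_le continuous_const (p * q).continuous) y
      have hfrac : 0 ≤ p.eval y / (q : ℝ[X]).eval y := rationalEval_mk p q ⟨y, hy⟩ ▸ hb ⟨y, hy⟩
      rw [eval_mul]
      exact mul_nonneg_iff.2 (div_nonneg_iff.1 hfrac)
    have hb_eq : Localization.mk p q =
        algebraMap ℝ[X] (Localization ℰ) (p * q) * Localization.mk 1 q ^ 2 := by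
      rw [← Localization.mk_one_eq_algebraMap, Localization.mk_pow, Localization.mk_mul,
        Localization.mk_eq_mk_iff, Localization.r_iff_exists]
      refine ⟨1, ?_⟩
      simp only [OneMemClass.coe_one, one_mul, SubmonoidClass.coe_pow, one_pow, mul_one]
      ring
    rw [hb_eq]
    exact (isSumSq_map _ (isSumSq_of_forall_eval_nonneg hnonneg)).mul (IsSquare.sq _).isSumSq

theorem exists_isCompact_rationalEval_le (hZ : (realZeros ℰ).Finite) :
    ∃ f : Localization ℰ, 0 ≤ rationalEval ℰ f ∧ ∀ r, IsCompact {y | rationalEval ℰ f y ≤ r} := by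
  obtain ⟨d, hd, hd_zero⟩ := exists_mem_forall_eval_eq_zero hZ
  let f : Localization ℰ := Localization.mk X 1 ^ 2 + Localization.mk 1 ⟨d, hd⟩ ^ 2
  have heval (y : ((realZeros ℰ)ᶜ : Set ℝ)) :
      rationalEval ℰ f y = y.1 ^ 2 + (1 / d.eval y.1) ^ 2 := by
    simp [f, rationalEval_mk]
  have hcompact (r : ℝ) : IsCompact {y : ℝ | y ^ 2 ≤ r} :=
    isCompact_Icc.of_isClosed_subset (isClosed_le (by fun_prop) (by fun_prop)) fun _ hy =>
      abs_le.1 (Real.abs_le_sqrt hy)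
  refine ⟨f, fun y => ?_, fun r => ?_⟩
  · exact (add_nonneg (sq_nonneg _) (sq_nonneg _)).trans_eq (heval y).symm
  simp_rw [heval]
  exact isCompact_setOf_add_one_div_sq_le (continuous_pow 2) d.continuous hcompact
    (fun y => ⟨eval_ne_zero_of_notMem_realZeros hd, mt (hd_zero y)⟩) r

theorem rational_moment_problem (hZ : (realZeros ℰ).Finite) {L : Localization ℰ →ₗ[ℝ] ℝ}
    (hL : PositiveOnSquares L) :
    ∃ μ : Measure ℝ, μ (realZeros ℰ) = 0 ∧ ∀ (p : ℝ[X]) (q : ℰ),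
      Integrable (fun y => p.eval y / (q : ℝ[X]).eval y) μ ∧
        ∫ y, p.eval y / (q : ℝ[X]).eval y ∂μ = L (Localization.mk p q) := by
  have hopen : IsOpen (realZeros ℰ)ᶜ := hZ.isClosed.isOpen_compl
  have hemb : MeasurableEmbedding (Subtype.val : ((realZeros ℰ)ᶜ : Set ℝ) → ℝ) :=
    .subtype_coe hopen.measurableSet
  have := hopen.locallyCompactSpace
  obtain ⟨f, hf_nonneg, hf⟩ := exists_isCompact_rationalEval_le hZ
  obtain ⟨μ, hμ⟩ := exists_measure_integral_eq_of_isCompact_sublevel (rationalEval ℰ) L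
    (fun b hb => hL.map_nonneg_of_isSumSq
      (isSumSq_of_rationalEval_nonneg (hZ.countable.dense_compl ℝ) hb)) hf_nonneg hf
  refine ⟨μ.map Subtype.val, by simp [hemb.map_apply], fun p q => ?_⟩
  rw [hemb.integrable_map_iff, hemb.integral_map]
  simpa only [Function.comp_def, ← rationalEval_mk] using hμ (Localization.mk p q)

end RationalFunctions

theorem rational_moment_problem_tensor_finite_general
    (ℰ : Submonoid (Polynomial ℝ)) (hZ : (realZeros ℰ).Finite)
    (C : Type*) [CommRing C] [Algebra ℝ C] [FiniteDimensional ℝ C]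
    (L : (Localization ℰ ⊗[ℝ] C) →ₗ[ℝ] ℝ)
    (hL : ∀ w : Localization ℰ ⊗[ℝ] C, 0 ≤ L (w ^ 2)) :
    ∃ (n : ℕ) (η : Fin n → (C →ₐ[ℝ] ℝ)) (μ : Fin n → MeasureTheory.Measure ℝ),
      (∀ (j : Fin n), ∀ q ∈ ℰ, μ j {y : ℝ | Polynomial.eval y q = 0} = 0) ∧
      ∀ (p : Polynomial ℝ) (q : Polynomial ℝ) (hq : q ∈ ℰ) (c : C),
        (∀ j : Fin n,
          MeasureTheory.Integrable
            (fun y : ℝ => Polynomial.eval y p / Polynomial.eval y q) (μ j)) ∧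
        L ((Localization.mk p ⟨q, hq⟩) ⊗ₜ[ℝ] c) =
          ∑ j : Fin n, η j c * ∫ y : ℝ, Polynomial.eval y p / Polynomial.eval y q ∂(μ j) := by
  have := Fintype.ofFinite (C →ₐ[ℝ] ℝ)
  obtain ⟨M, hM, hLM⟩ := PositiveOnSquares.exists_eq_sum_algHom_mul hL
  choose μ hμ_zero hμ using fun χ => rational_moment_problem hZ (hM χ)
  let η := (Fintype.equivFin (C →ₐ[ℝ] ℝ)).symm
  refine ⟨_, fun j => η j, fun j => μ (η j), fun j q hq => ?_, fun p q hq c => ⟨fun j => ?_, ?_⟩⟩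
  · exact MeasureTheory.measure_mono_null (setOf_eval_eq_zero_subset_realZeros hq) (hμ_zero (η j))
  · exact (hμ (η j) p ⟨q, hq⟩).1
  · rw [hLM, ← η.sum_comp]
    exact Finset.sum_congr rfl fun j _ => by rw [(hμ (η j) p ⟨q, hq⟩).2]

/-- **Corollary 3.3.**  Let `ℰ` be a finitely generated multiplicative set in
`ℝ[y]`, `B = ℰ⁻¹ℝ[y]`, and let `C` be a finite-dimensional commutative unital
real algebra.  Every linear functional `L` on `B ⊗ C` that is nonnegative on
squares is of the form
`L((p/q) ⊗ c) = Σ_j η_j(c) ∫ p/q dμ_j` for finitely many characters `η_j` of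
`C` and measures `μ_j` on `ℝ` vanishing on the zero sets of elements of `ℰ`. -/
theorem rational_moment_problem_tensor_finite
    (ℰ : Submonoid (Polynomial ℝ)) (hℰ : (0 : Polynomial ℝ) ∉ ℰ) (hfg : ℰ.FG)
    (C : Type) [CommRing C] [Algebra ℝ C] [FiniteDimensional ℝ C]
    (L : (Localization ℰ ⊗[ℝ] C) →ₗ[ℝ] ℝ)
    (hL : ∀ w : Localization ℰ ⊗[ℝ] C, 0 ≤ L (w ^ 2)) :
    ∃ (n : ℕ) (η : Fin n → (C →ₐ[ℝ] ℝ)) (μ : Fin n → MeasureTheory.Measure ℝ),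
      (∀ (j : Fin n), ∀ q ∈ ℰ, μ j {y : ℝ | Polynomial.eval y q = 0} = 0) ∧
      ∀ (p : Polynomial ℝ) (q : Polynomial ℝ) (hq : q ∈ ℰ) (c : C),
        (∀ j : Fin n,
          MeasureTheory.Integrable
            (fun y : ℝ => Polynomial.eval y p / Polynomial.eval y q) (μ j)) ∧
        L ((Localization.mk p ⟨q, hq⟩) ⊗ₜ[ℝ] c) =
          ∑ j : Fin n, η j c * ∫ y : ℝ, Polynomial.eval y p / Polynomial.eval y q ∂(μ j) :=
  rational_moment_problem_tensor_finite_general ℰ (finite_realZeros_of_fg hℰ hfg) C L hL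
end

section
/- Let ℰ be a multiplicative set in ℝ[y] and B := ℰ⁻¹ℝ[y]. For p ∈ ℝ[y] and q ∈ ℰ, the element p/q of B is a sum of squares in B (i.e. there exist finitely many b₁,…,b_r ∈ B with p/q = b₁² + ⋯ + b_r²) if and only if p(y)/q(y) ≥ 0 for every y ∈ ℝ with q(y) ≠ 0. -/
/-!
Writing `p/q = s²pq/(sq)²` shows that, in a localization `M⁻¹A` of any commutative semiring, `p/q`
is a sum of squares exactly when `s²pq` is a sum of squares in `A` for some `s ∈ M`. Over `ℝ[y]` a
polynomial is a sum of squares exactly when it takes no negative values: a real root of such a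
polynomial is multiple and the nonreal roots come in conjugate pairs, so a factor `(y - a)² + b²`
can be split off. By density of the non-roots of `s`, the factor `s²` does not affect nonnegativity,
and `pq` has the same sign as `p/q`.
-/

open Polynomial

section SumsOfSquares

theorem isSumSq_iff_exists_sum_sq {R : Type*} [Semiring R] {x : R} :
    IsSumSq x ↔ ∃ (r : ℕ) (b : Fin r → R), x = ∑ i, b i ^ 2 := by
  constructor
  · intro hx
    induction hx with
    | zero => exact ⟨0, Fin.elim0, by simp⟩
    | sq_add a _ ih =>
      obtain ⟨r, b, rfl⟩ := ih
      exact ⟨r + 1, Fin.cons a b, by simp [Fin.sum_univ_succ, sq]⟩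
  · rintro ⟨r, b, rfl⟩
    simp only [sq, IsSumSq.sum_mul_self]

theorem isSumSq_map_s13 {R S F : Type*} [NonUnitalNonAssocSemiring R] [NonUnitalNonAssocSemiring S]
    [FunLike F R S] [NonUnitalRingHomClass F R S] (φ : F) {x : R} (hx : IsSumSq x) :
    IsSumSq (φ x) := by
  induction hx with
  | zero => simp only [map_zero, IsSumSq.zero]
  | sq_add a _ ih => simpa only [map_add, map_mul] using ih.sq_add (φ a)

variable {A S : Type*} [CommSemiring A] [CommSemiring S] [Algebra A S] {M : Submonoid A}
  [IsLocalization M S]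

theorem isSumSq_mk'_sq {a : A} (ha : IsSumSq a) (s : M) :
    IsSumSq (IsLocalization.mk' S a (s ^ 2)) := by
  have mk'_eq : IsLocalization.mk' S a (s ^ 2) =
      algebraMap A S a * IsLocalization.mk' S 1 s ^ 2 := by
    rw [← IsLocalization.mk'_pow, one_pow, ← IsLocalization.mk'_eq_mul_mk'_one]
  rw [mk'_eq]
  exact (isSumSq_map_s13 (algebraMap A S) ha).mul (IsSquare.sq _).isSumSq

theorem exists_mk'_sq_eq_of_isSumSq (M : Submonoid A) [IsLocalization M S] {x : S}
    (hx : IsSumSq x) :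
    ∃ (a : A) (s : M), IsSumSq a ∧ IsLocalization.mk' S a (s ^ 2) = x := by
  induction hx with
  | zero => exact ⟨0, 1, .zero, IsLocalization.mk'_zero _⟩
  | sq_add y _ ih =>
    obtain ⟨a, s, ha, rfl⟩ := ih
    obtain ⟨b, t, rfl⟩ := IsLocalization.exists_mk'_eq M y
    refine ⟨b * b * (s * s) + a * (t * t), t * s,
      ((IsSumSq.mul_self b).mul (.mul_self _)).add (ha.mul (.mul_self _)), ?_⟩
    rw [← IsLocalization.mk'_mul, ← IsLocalization.mk'_add, mul_pow]
    simp only [sq, Submonoid.coe_mul]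

theorem isSumSq_mk'_iff {p : A} {q : M} :
    IsSumSq (IsLocalization.mk' S p q) ↔ ∃ s : M, IsSumSq ((s : A) ^ 2 * (p * q)) := by
  constructor
  · intro hpq
    obtain ⟨a, s, ha, hmk⟩ := exists_mk'_sq_eq_of_isSumSq M hpq
    obtain ⟨c, hc⟩ := IsLocalization.eq.mp hmk
    refine ⟨c * s, ?_⟩
    have clear_denominators : ((c * s : M) : A) ^ 2 * (p * q) = (c * q : A) ^ 2 * a := by
      calc ((c * s : M) : A) ^ 2 * (p * q)
          = c * q * (c * ((s ^ 2 : M) * p)) := by push_cast; ring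
        _ = c * q * (c * (q * a)) := by rw [hc]
        _ = (c * q : A) ^ 2 * a := by ring
    rw [clear_denominators]
    exact (IsSquare.sq _).isSumSq.mul ha
  · rintro ⟨s, hs⟩
    have mk'_eq : IsLocalization.mk' S p q =
        IsLocalization.mk' S ((s : A) ^ 2 * (p * q)) ((s * q) ^ 2) :=
      IsLocalization.mk'_eq_of_eq (by push_cast; ring)
    rw [mk'_eq]
    exact isSumSq_mk'_sq hs (s * q)

end SumsOfSquares

section NonnegativePolynomials

theorem eval_nonneg_of_isSumSq {R : Type*} [CommSemiring R] [LinearOrder R] [IsStrictOrderedRing R]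
    [ExistsAddOfLE R] {f : R[X]} (hf : IsSumSq f) (y : R) : 0 ≤ f.eval y :=
  (isSumSq_map_s13 (evalRingHom y) hf).nonneg

theorem forall_eval_mul_nonneg_iff {K : Type*} [Field K] [LinearOrder K] [IsStrictOrderedRing K]
    {s f : K[X]} (hs₀ : s ≠ 0) (hs : ∀ y, 0 ≤ s.eval y) :
    (∀ y, 0 ≤ (s * f).eval y) ↔ ∀ y, 0 ≤ f.eval y := by
  simp only [eval_mul]
  refine ⟨fun hsf y ↦ ?_, fun hf y ↦ mul_nonneg (hs y) (hf y)⟩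
  let _ : TopologicalSpace K := Preorder.topology K
  have : OrderTopology K := ⟨rfl⟩
  have dense_nonroots : Dense {y | s.IsRoot y}ᶜ := by
    rw [Set.compl_eq_univ_sdiff]
    exact dense_univ.sdiff_finite (finite_setOfPred_isRoot hs₀)
  have nonneg_off_roots : {y | s.IsRoot y}ᶜ ⊆ {y | 0 ≤ f.eval y} := fun y hy ↦
    nonneg_of_mul_nonneg_right (hsf y) ((hs y).lt_of_ne' hy)
  exact (isClosed_le continuous_const f.continuous).closure_subset_iff.mpr nonneg_off_roots
    (dense_nonroots y)

theorem X_sub_C_sq_dvd_of_isRoot_of_isLocalExtr {f : ℝ[X]} {a : ℝ} (hroot : f.IsRoot a)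
    (hextr : IsLocalExtr (fun y ↦ f.eval y) a) : (X - C a) ^ 2 ∣ f := by
  rcases eq_or_ne f 0 with rfl | hf
  · exact dvd_zero _
  have hderiv : f.derivative.IsRoot a := by
    rw [IsRoot, ← f.deriv, hextr.deriv_eq_zero]
  exact (le_rootMultiplicity_iff hf).mp
    ((one_lt_rootMultiplicity_iff_isRoot hf).mpr ⟨hroot, hderiv⟩)

theorem exists_X_sub_C_sq_add_C_sq_dvd {f : ℝ[X]} (hdeg : f.natDegree ≠ 0)
    (hf : ∀ y, 0 ≤ f.eval y) : ∃ a b : ℝ, (X - C a) ^ 2 + C b ^ 2 ∣ f := by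
  obtain ⟨z, hz⟩ := IsAlgClosed.exists_aeval_eq_zero ℂ f (mt natDegree_eq_of_degree_eq_some hdeg)
  refine ⟨z.re, z.im, ?_⟩
  by_cases him : z.im = 0
  · have hroot : f.IsRoot z.re := by
      rw [← Complex.re_add_im z, him, Complex.ofReal_zero, zero_mul, add_zero] at hz
      exact (aeval_algebraMap_eq_zero_iff ℂ z.re f).mp hz
    have hmin : IsLocalMin (fun y ↦ f.eval y) z.re :=
      .of_forall fun y ↦ hroot.le.trans (hf y)
    rw [him, C_0, zero_pow two_ne_zero, add_zero]
    exact X_sub_C_sq_dvd_of_isRoot_of_isLocalExtr hroot (.inl hmin)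
  · have conj_factor : (X - C z.re) ^ 2 + C z.im ^ 2 =
        (X ^ 2 - C (2 * z.re) * X + C (‖z‖ ^ 2) : ℝ[X]) := by
      rw [← Complex.normSq_eq_norm_sq, Complex.normSq_apply]
      simp only [map_add, map_mul, C_ofNat]
      ring
    rw [conj_factor]
    exact f.quadratic_dvd_of_aeval_eq_zero_im_ne_zero hz him

theorem isSumSq_of_forall_eval_nonneg_s13 {f : ℝ[X]} (hf : ∀ y, 0 ≤ f.eval y) : IsSumSq f := by
  induction hn : f.natDegree using Nat.strong_induction_on generalizing f with
  | _ n ih =>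
  subst hn
  by_cases hdeg : f.natDegree = 0
  · obtain ⟨c, rfl⟩ := natDegree_eq_zero.mp hdeg
    have hc : 0 ≤ c := by simpa only [eval_C] using hf 0
    exact isSumSq_map_s13 C (Real.isSquare_iff.mpr hc).isSumSq
  obtain ⟨a, b, g, hfg⟩ := exists_X_sub_C_sq_add_C_sq_dvd hdeg hf
  set q : ℝ[X] := (X - C a) ^ 2 + C b ^ 2
  have hq_sumSq : IsSumSq q := (IsSquare.sq _).isSumSq.add (IsSquare.sq _).isSumSq
  have hq_deg : q.natDegree = 2 := by
    simp only [q]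
    compute_degree!
  have hq_ne : q ≠ 0 := ne_zero_of_natDegree_gt (hq_deg ▸ two_pos)
  have hg_ne : g ≠ 0 := by
    rintro rfl
    exact hdeg (by rw [hfg, mul_zero, natDegree_zero])
  have hg_nonneg : ∀ y, 0 ≤ g.eval y :=
    (forall_eval_mul_nonneg_iff hq_ne (eval_nonneg_of_isSumSq hq_sumSq)).mp (hfg ▸ hf)
  have hg_deg : g.natDegree < f.natDegree := by
    rw [hfg, natDegree_mul hq_ne hg_ne, hq_deg]
    lia
  rw [hfg]
  exact hq_sumSq.mul (ih _ hg_deg hg_nonneg rfl)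

theorem isSumSq_iff_forall_eval_nonneg {f : ℝ[X]} : IsSumSq f ↔ ∀ y, 0 ≤ f.eval y :=
  ⟨eval_nonneg_of_isSumSq, isSumSq_of_forall_eval_nonneg_s13⟩

theorem isSumSq_sq_mul_iff {s f : ℝ[X]} (hs : s ≠ 0) : IsSumSq (s ^ 2 * f) ↔ IsSumSq f := by
  simp only [isSumSq_iff_forall_eval_nonneg]
  exact forall_eval_mul_nonneg_iff (pow_ne_zero 2 hs)
    (eval_nonneg_of_isSumSq (IsSquare.sq s).isSumSq)

end NonnegativePolynomials

/-- **Lemma 3.5.**  Let `ℰ` be a multiplicative set in `ℝ[y]` (with `1 ∈ ℰ`,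
`0 ∉ ℰ`) and `B = ℰ⁻¹ℝ[y]`.  An element `p/q` of `B` (with `p ∈ ℝ[y]`,
`q ∈ ℰ`) is a sum of squares in `B` if and only if `p(y)/q(y) ≥ 0` for every
`y ∈ ℝ` with `q(y) ≠ 0`. -/
theorem sum_of_squares_iff_nonneg_in_localization
    (ℰ : Submonoid (Polynomial ℝ)) (hℰ : (0 : Polynomial ℝ) ∉ ℰ)
    (p : Polynomial ℝ) (q : Polynomial ℝ) (hq : q ∈ ℰ) :
    (∃ (r : ℕ) (b : Fin r → Localization ℰ),
        Localization.mk p ⟨q, hq⟩ = ∑ i : Fin r, (b i) ^ 2) ↔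
      ∀ y : ℝ, Polynomial.eval y q ≠ 0 →
        0 ≤ Polynomial.eval y p / Polynomial.eval y q := by
  have denominator_ne_zero (s : ℰ) : (s : ℝ[X]) ≠ 0 := ne_of_mem_of_not_mem s.2 hℰ
  have mul_nonneg_iff_div_nonneg (y : ℝ) :
      0 ≤ (p * q).eval y ↔ (q.eval y ≠ 0 → 0 ≤ p.eval y / q.eval y) := by
    rw [eval_mul, div_nonneg_iff, ← mul_nonneg_iff]
    by_cases hy : q.eval y = 0 <;> simp [hy]
  calc _ ↔ IsSumSq (IsLocalization.mk' (Localization ℰ) p ⟨q, hq⟩) := by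
        rw [isSumSq_iff_exists_sum_sq, Localization.mk_eq_mk']
    _ ↔ ∃ s : ℰ, IsSumSq ((s : ℝ[X]) ^ 2 * (p * q)) := isSumSq_mk'_iff
    _ ↔ IsSumSq (p * q) := by
        simp only [isSumSq_sq_mul_iff (denominator_ne_zero _), exists_const]
    _ ↔ _ := by
        simp only [isSumSq_iff_forall_eval_nonneg, mul_nonneg_iff_div_nonneg]
end

section
/- Let 𝔻 be a multiplicative set in ℝ[x₁,…,x_d], A := 𝔻⁻¹ℝ[x₁,…,x_d], and let C_c(ℝ^d) denote the space of continuous compactly supported real functions on ℝ^d. Let L be a linear functional on the real vector space A × C_c(ℝ^d) such that L(p/q, φ) ≥ 0 whenever p ∈ ℝ[x₁,…,x_d], q ∈ 𝔻 and φ ∈ C_c(ℝ^d) satisfy p(x)/q(x) + φ(x) ≥ 0 for all x ∈ ℝ^d with q(x) ≠ 0. Then there exists a positive Borel measure μ on ℝ^d with μ(Z(q)) = 0 for every q ∈ 𝔻 such that for all p ∈ ℝ[x₁,…,x_d] and q ∈ 𝔻 the function x ↦ p(x)/q(x) is μ-integrable and L(p/q, 0) = ∫_{ℝ^d} p(x)/q(x)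 dμ(x). -/
/-!
By Riesz–Markov–Kakutani, the restriction of `L` to `C_c` is integration against a regular
measure `μ`. Fix a denominator `q` and write `p / q = p q / q ^ 2`. With a cutoff `χ_ε ∈ C_c`
increasing to `1` as `ε → 0`, the function `a χ_ε / (q ^ 2 + ε ^ 2)` lies in `C_c`.

* For `a > 0` it stays below `a / q ^ 2`, hence has integral at most `L (a / q ^ 2, 0)`, and it
  converges to `a / q ^ 2` in `[0, ∞]`, with limit `∞` on `Z(q)`. Fatou's lemma shows that
  `a / q ^ 2` is integrable and that `Z(q)` is a null set.
* For `a = p q` it differs from `p / q` by at most `ε N / q ^ 2`, where `N > 0` does not depend on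
  `ε`. So both `L (p / q, 0)` and `∫ p / q ∂μ` are limits of the integrals of these functions.
-/

open MeasureTheory Filter Topology CompactlySupported

section RealEstimates

lemma abs_le_one_add_sq (t : ℝ) : |t| ≤ 1 + t ^ 2 := by
  nlinarith [sq_abs t, sq_nonneg (|t| - 1)]

lemma mul_div_sq_self (p s : ℝ) : p * s / s ^ 2 = p / s := by
  rw [sq]
  rcases eq_or_ne s 0 with rfl | hs
  · simp
  · exact mul_div_mul_right p s hs

lemma tendsto_of_abs_sub_le_one_div_mul {u : ℕ → ℝ} {a C : ℝ}
    (h : ∀ n : ℕ, |a - u n| ≤ 1 / ((n : ℝ) + 1) * C) : Tendsto u atTop (𝓝 a) := by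
  refine tendsto_iff_dist_tendsto_zero.2 (squeeze_zero (fun _ => dist_nonneg)
    (fun n => (dist_comm _ _).trans_le (h n)) ?_)
  simpa using tendsto_one_div_add_atTop_nhds_zero_nat.mul_const C

/-- The cutoff `max 0 (1 - ε r ^ 2)`, applied to the values `r` of a function tending to infinity
so as to obtain compactly supported functions increasing to `1` as `ε → 0`. -/
noncomputable def cutoff (ε r : ℝ) : ℝ := max 0 (1 - ε * r ^ 2)

lemma cutoff_nonneg (ε r : ℝ) : 0 ≤ cutoff ε r := le_max_left _ _

lemma one_sub_cutoff_le (ε r : ℝ) : 1 - cutoff ε r ≤ ε * r ^ 2 := by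
  linarith [le_max_right 0 (1 - ε * r ^ 2), cutoff.eq_1 ε r]

variable {ε : ℝ}

lemma cutoff_le_one (hε : 0 ≤ ε) (r : ℝ) : cutoff ε r ≤ 1 :=
  max_le zero_le_one (sub_le_self _ (by positivity))

/-- The numerator `N` of the error bound `ε * (N / s ^ 2)` for the truncations of `p / s`. It is
defined over a semiring so as to be both an algebra element and the value of that element at a
point. -/
def dominator {R : Type*} [CommSemiring R] (r p s : R) : R :=
  (1 + p ^ 2) * (1 + s ^ 2) * (1 + r ^ 2)

lemma dominator_pos (r p s : ℝ) : 0 < dominator r p s := by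
  unfold dominator
  positivity

lemma abs_mul_mul_add_one_le_dominator (r p s : ℝ) : |p| * (|s| * r ^ 2 + 1) ≤ dominator r p s := by
  have hs : |s| * r ^ 2 + 1 ≤ (1 + s ^ 2) * (1 + r ^ 2) := by
    nlinarith [mul_le_mul_of_nonneg_right (abs_le_one_add_sq s) (sq_nonneg r), sq_nonneg s]
  rw [dominator, mul_assoc]
  exact mul_le_mul (abs_le_one_add_sq p) hs (by positivity) (by positivity)

lemma abs_mul_le_dominator (r p s : ℝ) : |p * s| ≤ dominator r p s := by
  rw [abs_mul, dominator]
  calc |p| * |s| ≤ (1 + p ^ 2) * (1 + s ^ 2) := by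
        gcongr <;> exact abs_le_one_add_sq _
    _ ≤ (1 + p ^ 2) * (1 + s ^ 2) * (1 + r ^ 2) :=
        le_mul_of_one_le_right (by positivity) (by linarith [sq_nonneg r])

lemma abs_mul_one_sub_cutoff_mul_le (hε : 0 < ε) (r s : ℝ) :
    |s| * (1 - cutoff ε r * (s ^ 2 / (s ^ 2 + ε ^ 2))) ≤ ε * (|s| * r ^ 2 + 1) := by
  have hden : 0 < s ^ 2 + ε ^ 2 := by positivity
  have hspace : (1 - cutoff ε r) * (s ^ 2 / (s ^ 2 + ε ^ 2)) ≤ ε * r ^ 2 :=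
    (mul_le_of_le_one_right (sub_nonneg.2 (cutoff_le_one hε.le r))
      (div_le_one_of_le₀ (by linarith [sq_nonneg ε]) hden.le)).trans (one_sub_cutoff_le ε r)
  have hzeros : |s| * (ε ^ 2 / (s ^ 2 + ε ^ 2)) ≤ ε := by
    rw [← mul_div_assoc, div_le_iff₀ hden]
    have hmul : ε * |s| ≤ s ^ 2 + ε ^ 2 := by
      nlinarith [sq_nonneg (|s| - ε), mul_nonneg hε.le (abs_nonneg s), sq_abs s]
    nlinarith
  calc |s| * (1 - cutoff ε r * (s ^ 2 / (s ^ 2 + ε ^ 2)))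
      = |s| * ((1 - cutoff ε r) * (s ^ 2 / (s ^ 2 + ε ^ 2)))
        + |s| * (ε ^ 2 / (s ^ 2 + ε ^ 2)) := by
        field_simp
        ring
    _ ≤ |s| * (ε * r ^ 2) + ε :=
        add_le_add (mul_le_mul_of_nonneg_left hspace (abs_nonneg s)) hzeros
    _ = ε * (|s| * r ^ 2 + 1) := by ring

lemma abs_mul_div_sq_sub_le (hε : 0 < ε) (r p : ℝ) {s : ℝ} (hs : s ≠ 0) :
    |p * s / s ^ 2 - p * s * cutoff ε r / (s ^ 2 + ε ^ 2)| ≤ ε * (dominator r p s / s ^ 2) := by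
  have hratio : s ^ 2 / (s ^ 2 + ε ^ 2) ≤ 1 :=
    div_le_one_of_le₀ (by linarith [sq_nonneg ε]) (by positivity)
  have hnonneg : 0 ≤ 1 - cutoff ε r * (s ^ 2 / (s ^ 2 + ε ^ 2)) :=
    sub_nonneg.2 (mul_le_one₀ (cutoff_le_one hε.le r) (by positivity) hratio)
  calc |p * s / s ^ 2 - p * s * cutoff ε r / (s ^ 2 + ε ^ 2)|
      = |p * s * (1 - cutoff ε r * (s ^ 2 / (s ^ 2 + ε ^ 2))) / s ^ 2| := by
        congr 1
        field_simp
    _ = |p| * (|s| * (1 - cutoff ε r * (s ^ 2 / (s ^ 2 + ε ^ 2)))) / s ^ 2 := by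
        rw [abs_div, abs_mul, abs_mul, abs_of_nonneg hnonneg, abs_of_nonneg (sq_nonneg s),
          mul_assoc]
    _ ≤ |p| * (ε * (|s| * r ^ 2 + 1)) / s ^ 2 := by
        gcongr ?_ / _
        exact mul_le_mul_of_nonneg_left (abs_mul_one_sub_cutoff_mul_le hε r s) (abs_nonneg p)
    _ = ε * (|p| * (|s| * r ^ 2 + 1) / s ^ 2) := by ring
    _ ≤ ε * (dominator r p s / s ^ 2) := by
        gcongr
        exact abs_mul_mul_add_one_le_dominator r p s

end RealEstimates

section Truncation

variable {X : Type*} [TopologicalSpace X] [R1Space X] {ρ : C(X, ℝ)}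

lemma hasCompactSupport_cutoff (hρ : Tendsto ρ (cocompact X) atTop) {ε : ℝ} (hε : 0 < ε) :
    HasCompactSupport fun x => cutoff ε (ρ x) := by
  rw [hasCompactSupport_iff_eventuallyEq, coclosedCompact_eq_cocompact]
  have hsq : Tendsto (fun x => ε * ρ x ^ 2) (cocompact X) atTop :=
    ((tendsto_pow_atTop two_ne_zero).comp hρ).const_mul_atTop hε
  filter_upwards [hsq.eventually_ge_atTop 1] with x hx
  exact max_eq_left (sub_nonpos.2 hx)

/-- The compactly supported approximation `a χ_ε / (s ^ 2 + ε ^ 2)` of `a / s ^ 2`, where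
`ε = 1 / (n + 1)` and `χ_ε` is the cutoff along the function `ρ` tending to infinity. -/
noncomputable def truncation (hρ : Tendsto ρ (cocompact X) atTop) (a s : C(X, ℝ)) (n : ℕ) :
    C_c(X, ℝ) where
  toFun x := a x * cutoff (1 / ((n : ℝ) + 1)) (ρ x) / (s x ^ 2 + (1 / ((n : ℝ) + 1)) ^ 2)
  continuous_toFun := by
    refine Continuous.div ?_ (by fun_prop) fun x => by positivity
    unfold cutoff
    fun_prop
  hasCompactSupport' := by
    simp only [mul_div_right_comm _ (cutoff _ _)]
    exact (hasCompactSupport_cutoff hρ (by positivity)).mul_left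

variable (hρ : Tendsto ρ (cocompact X) atTop) (a s : C(X, ℝ)) (n : ℕ) {x : X}

lemma truncation_apply (x : X) : truncation hρ a s n x =
    a x * cutoff (1 / ((n : ℝ) + 1)) (ρ x) / (s x ^ 2 + (1 / ((n : ℝ) + 1)) ^ 2) := rfl

variable {a} in
lemma truncation_nonneg (ha : 0 ≤ a x) : 0 ≤ truncation hρ a s n x :=
  div_nonneg (mul_nonneg ha (cutoff_nonneg _ _)) (by positivity)

variable {a s} in
lemma truncation_le (ha : 0 ≤ a x) (hs : s x ≠ 0) : truncation hρ a s n x ≤ a x / s x ^ 2 :=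
  div_le_div₀ ha (mul_le_of_le_one_right ha (cutoff_le_one (by positivity) _)) (by positivity)
    (le_add_of_nonneg_right (by positivity))

variable {s} in
lemma abs_div_sub_truncation_le (p : C(X, ℝ)) (hs : s x ≠ 0) :
    |p x / s x - truncation hρ (p * s) s n x| ≤
      1 / ((n : ℝ) + 1) * (dominator (ρ x) (p x) (s x) / s x ^ 2) := by
  rw [← mul_div_sq_self]
  exact abs_mul_div_sq_sub_le (by positivity) (ρ x) (p x) hs

variable {a} in
lemma tendsto_ofReal_truncation (ha : 0 < a x) :
    Tendsto (fun n => ENNReal.ofReal (truncation hρ a s n x)) atTop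
      (𝓝 (ENNReal.ofReal (a x) / ENNReal.ofReal (s x ^ 2))) := by
  have hε : Tendsto (fun n : ℕ => 1 / ((n : ℝ) + 1)) atTop (𝓝 0) :=
    tendsto_one_div_add_atTop_nhds_zero_nat
  have hnum : Tendsto (fun n : ℕ => a x * cutoff (1 / ((n : ℝ) + 1)) (ρ x)) atTop (𝓝 (a x)) := by
    have hcont : Continuous fun ε => a x * cutoff ε (ρ x) := by
      unfold cutoff
      fun_prop
    simpa [cutoff, Function.comp_def] using (hcont.tendsto 0).comp hε
  have hden : Tendsto (fun n : ℕ => s x ^ 2 + (1 / ((n : ℝ) + 1)) ^ 2) atTop (𝓝 (s x ^ 2)) := by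
    simpa using (hε.pow 2).const_add (s x ^ 2)
  refine (ENNReal.Tendsto.div (ENNReal.tendsto_ofReal hnum) (.inl (by simpa using ha))
    (ENNReal.tendsto_ofReal hden) (.inl ENNReal.ofReal_ne_top)).congr fun n => ?_
  rw [truncation_apply, ENNReal.ofReal_div_of_pos (by positivity)]

end Truncation

section FixedDenominator

variable {X : Type*} [TopologicalSpace X] {R : Type*} [CommRing R] [Algebra ℝ R]

/-- Nonnegativity of a functional on `R × C_c(X, ℝ)` on all pairs `(a, φ)` for which
`a / s ^ 2 + φ` is nonnegative off the zero set of `s`: the positivity of a functional on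
fractions, seen on the fractions with denominator `s ^ 2`. -/
def NonnegOverSq (ev : R →ₐ[ℝ] C(X, ℝ)) (s : R) (ℓ : R × C_c(X, ℝ) →ₗ[ℝ] ℝ) : Prop :=
  ∀ (a : R) (φ : C_c(X, ℝ)),
    (∀ x, ev s x ≠ 0 → 0 ≤ ev a x / ev s x ^ 2 + φ x) → 0 ≤ ℓ (a, φ)

variable {ev : R →ₐ[ℝ] C(X, ℝ)} {s : R} {ℓ : R × C_c(X, ℝ) →ₗ[ℝ] ℝ}

lemma map_dominator (ρ p s : R) (x : X) :
    ev (dominator ρ p s) x = dominator (ev ρ x) (ev p x) (ev s x) := by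
  simp [dominator]

lemma NonnegOverSq.apply_le_apply (hℓ : NonnegOverSq ev s ℓ) {a : R} {φ : C_c(X, ℝ)}
    (h : ∀ x, ev s x ≠ 0 → φ x ≤ ev a x / ev s x ^ 2) : ℓ (0, φ) ≤ ℓ (a, 0) := by
  have hnonneg : 0 ≤ ℓ (a, -φ) := hℓ a (-φ) fun x hx => by
    simpa [← sub_eq_add_neg] using h x hx
  have hsub : ((a, -φ) : R × C_c(X, ℝ)) = (a, 0) - (0, φ) := by simp
  rwa [hsub, map_sub, sub_nonneg] at hnonneg

lemma NonnegOverSq.abs_apply_sub_apply_le (hℓ : NonnegOverSq ev s ℓ) {a b : R} {φ : C_c(X, ℝ)}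
    {c : ℝ} (h : ∀ x, ev s x ≠ 0 →
      |ev a x / ev s x ^ 2 - φ x| ≤ c * (ev b x / ev s x ^ 2)) :
    |ℓ (a, 0) - ℓ (0, φ)| ≤ c * ℓ (b, 0) := by
  have hupper : ℓ (0, φ) ≤ ℓ (c • b + a, 0) := hℓ.apply_le_apply fun x hx => by
    have := (abs_le.1 (h x hx)).1
    simp only [map_add, map_smul, ContinuousMap.add_apply, ContinuousMap.smul_apply, smul_eq_mul,
      add_div, mul_div_assoc]
    linarith
  have hlower : ℓ (0, -φ) ≤ ℓ (c • b - a, 0) := hℓ.apply_le_apply fun x hx => by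
    have := (abs_le.1 (h x hx)).2
    simp only [map_sub, map_smul, ContinuousMap.sub_apply, ContinuousMap.smul_apply, smul_eq_mul,
      sub_div, mul_div_assoc, CompactlySupportedContinuousMap.neg_apply]
    linarith
  have hadd : ((c • b + a, 0) : R × C_c(X, ℝ)) = c • (b, 0) + (a, 0) := by simp
  have hsub : ((c • b - a, 0) : R × C_c(X, ℝ)) = c • (b, 0) - (a, 0) := by simp
  have hneg : ((0, -φ) : R × C_c(X, ℝ)) = -(0, φ) := by simp
  rw [hadd, map_add, map_smul, smul_eq_mul] at hupper
  rw [hsub, hneg, map_sub, map_neg, map_smul, smul_eq_mul] at hlower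
  exact abs_le.2 ⟨by linarith, by linarith⟩

variable [R1Space X] {ρ : R}

lemma NonnegOverSq.tendsto_apply_truncation (hℓ : NonnegOverSq ev s ℓ)
    (hρ : Tendsto (ev ρ) (cocompact X) atTop) (p : R) :
    Tendsto (fun n => ℓ (0, truncation hρ (ev p * ev s) (ev s) n)) atTop
      (𝓝 (ℓ (p * s, 0))) := by
  have hbound (n : ℕ) : |ℓ (p * s, 0) - ℓ (0, truncation hρ (ev p * ev s) (ev s) n)| ≤
      1 / ((n : ℝ) + 1) * ℓ (dominator ρ p s, 0) :=
    hℓ.abs_apply_sub_apply_le fun x hx => by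
      rw [map_mul, ContinuousMap.mul_apply, mul_div_sq_self, map_dominator]
      exact abs_div_sub_truncation_le hρ n (ev p) hx
  exact tendsto_of_abs_sub_le_one_div_mul hbound

variable [MeasurableSpace X] [OpensMeasurableSpace X] {μ : Measure X}
  [IsFiniteMeasureOnCompacts μ]

lemma NonnegOverSq.lintegral_div_sq_le (hℓ : NonnegOverSq ev s ℓ)
    (hμ : ∀ φ : C_c(X, ℝ), ∫ x, φ x ∂μ = ℓ (0, φ)) (hρ : Tendsto (ev ρ) (cocompact X) atTop)
    {a : R} (ha : ∀ x, 0 < ev a x) :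
    ∫⁻ x, ENNReal.ofReal (ev a x) / ENNReal.ofReal (ev s x ^ 2) ∂μ ≤
      ENNReal.ofReal (ℓ (a, 0)) := by
  have hbound (n : ℕ) : ∫⁻ x, ENNReal.ofReal (truncation hρ (ev a) (ev s) n x) ∂μ ≤
      ENNReal.ofReal (ℓ (a, 0)) := by
    rw [← ofReal_integral_eq_lintegral_ofReal (truncation hρ (ev a) (ev s) n).integrable
      (.of_forall fun x => truncation_nonneg hρ _ n (ha x).le), hμ]
    exact ENNReal.ofReal_le_ofReal
      (hℓ.apply_le_apply fun x hx => truncation_le hρ n (ha x).le hx)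
  calc ∫⁻ x, ENNReal.ofReal (ev a x) / ENNReal.ofReal (ev s x ^ 2) ∂μ
      = ∫⁻ x, liminf (fun n => ENNReal.ofReal (truncation hρ (ev a) (ev s) n x)) atTop ∂μ :=
        lintegral_congr fun x => (tendsto_ofReal_truncation hρ (ev s) (ha x)).liminf_eq.symm
    _ ≤ liminf (fun n => ∫⁻ x, ENNReal.ofReal (truncation hρ (ev a) (ev s) n x) ∂μ) atTop :=
        lintegral_liminf_le fun n =>
          (truncation hρ (ev a) (ev s) n).continuous.measurable.ennreal_ofReal
    _ ≤ ENNReal.ofReal (ℓ (a, 0)) :=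
        liminf_le_of_frequently_le' (Frequently.of_forall hbound)

lemma NonnegOverSq.ae_ne_zero (hℓ : NonnegOverSq ev s ℓ)
    (hμ : ∀ φ : C_c(X, ℝ), ∫ x, φ x ∂μ = ℓ (0, φ)) (hρ : Tendsto (ev ρ) (cocompact X) atTop) :
    ∀ᵐ x ∂μ, ev s x ≠ 0 := by
  have hfin := (hℓ.lintegral_div_sq_le hμ hρ (a := 1) (by simp)).trans_lt ENNReal.ofReal_lt_top
  have hmeas : Measurable fun x =>
      ENNReal.ofReal (ev 1 x) / ENNReal.ofReal (ev s x ^ 2) := by fun_prop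
  filter_upwards [ae_lt_top hmeas hfin.ne] with x hx hzero
  simp [hzero] at hx

lemma NonnegOverSq.integrable_div_sq (hℓ : NonnegOverSq ev s ℓ)
    (hμ : ∀ φ : C_c(X, ℝ), ∫ x, φ x ∂μ = ℓ (0, φ)) (hρ : Tendsto (ev ρ) (cocompact X) atTop)
    {a : R} (ha : ∀ x, 0 < ev a x) : Integrable (fun x => ev a x / ev s x ^ 2) μ := by
  have hmeas : Measurable fun x => ev a x / ev s x ^ 2 := by fun_prop
  rw [← lintegral_ofReal_ne_top_iff_integrable hmeas.aestronglyMeasurable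
    (.of_forall fun x => div_nonneg (ha x).le (sq_nonneg _))]
  refine ne_top_of_le_ne_top ENNReal.ofReal_ne_top
    ((lintegral_mono_ae ?_).trans (hℓ.lintegral_div_sq_le hμ hρ ha))
  filter_upwards [hℓ.ae_ne_zero hμ hρ] with x hx
  exact (ENNReal.ofReal_div_of_pos (by positivity)).le

lemma NonnegOverSq.integrable_dominator_div_sq (hℓ : NonnegOverSq ev s ℓ)
    (hμ : ∀ φ : C_c(X, ℝ), ∫ x, φ x ∂μ = ℓ (0, φ)) (hρ : Tendsto (ev ρ) (cocompact X) atTop)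
    (p : R) :
    Integrable (fun x => dominator (ev ρ x) (ev p x) (ev s x) / ev s x ^ 2) μ := by
  simpa only [map_dominator] using hℓ.integrable_div_sq hμ hρ (a := dominator ρ p s)
    fun x => by simpa only [map_dominator] using dominator_pos _ _ _

lemma NonnegOverSq.integrable_div (hℓ : NonnegOverSq ev s ℓ)
    (hμ : ∀ φ : C_c(X, ℝ), ∫ x, φ x ∂μ = ℓ (0, φ)) (hρ : Tendsto (ev ρ) (cocompact X) atTop)
    (p : R) : Integrable (fun x => ev p x / ev s x) μ := by
  have hmeas : Measurable fun x => ev p x / ev s x := by fun_prop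
  refine (hℓ.integrable_dominator_div_sq hμ hρ p).mono' hmeas.aestronglyMeasurable
    (.of_forall fun x => ?_)
  rw [← mul_div_sq_self, Real.norm_eq_abs, abs_div, abs_of_nonneg (sq_nonneg (ev s x))]
  gcongr
  exact abs_mul_le_dominator _ _ _

lemma NonnegOverSq.tendsto_integral_truncation (hℓ : NonnegOverSq ev s ℓ)
    (hμ : ∀ φ : C_c(X, ℝ), ∫ x, φ x ∂μ = ℓ (0, φ)) (hρ : Tendsto (ev ρ) (cocompact X) atTop)
    (p : R) :
    Tendsto (fun n => ∫ x, truncation hρ (ev p * ev s) (ev s) n x ∂μ) atTop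
      (𝓝 (∫ x, ev p x / ev s x ∂μ)) := by
  set N : X → ℝ := fun x => dominator (ev ρ x) (ev p x) (ev s x) / ev s x ^ 2
  refine tendsto_of_abs_sub_le_one_div_mul (C := ∫ x, N x ∂μ) fun n => ?_
  rw [← integral_sub (hℓ.integrable_div hμ hρ p) (truncation hρ _ _ n).integrable,
    ← integral_const_mul, ← Real.norm_eq_abs]
  apply norm_integral_le_of_norm_le ((hℓ.integrable_dominator_div_sq hμ hρ p).const_mul _)
  filter_upwards [hℓ.ae_ne_zero hμ hρ] with x hx
  exact abs_div_sub_truncation_le hρ n (ev p) hx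

lemma NonnegOverSq.apply_mul_eq_integral (hℓ : NonnegOverSq ev s ℓ)
    (hμ : ∀ φ : C_c(X, ℝ), ∫ x, φ x ∂μ = ℓ (0, φ)) (hρ : Tendsto (ev ρ) (cocompact X) atTop)
    (p : R) : ℓ (p * s, 0) = ∫ x, ev p x / ev s x ∂μ := by
  refine tendsto_nhds_unique (hℓ.tendsto_apply_truncation hρ p) ?_
  simpa only [hμ] using hℓ.tendsto_integral_truncation hμ hρ p

end FixedDenominator

section Localization

variable {R : Type*} [CommRing R] {𝔻 : Submonoid R}

lemma localization_mk_mul_sq (p : R) (q : 𝔻) :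
    Localization.mk (p * q) (q ^ 2) = Localization.mk p q := by
  rw [Localization.mk_eq_mk_iff, Localization.r_iff_exists]
  exact ⟨1, by push_cast; ring⟩

variable {X : Type*} [TopologicalSpace X] [Algebra ℝ R]

/-- The map `a ↦ a / q` for a fixed denominator `q`, as a linear map; compare
`Localization.mkAddMonoidHom`. -/
def fractionLinearMap (q : 𝔻) : R →ₗ[ℝ] Localization 𝔻 where
  __ := Localization.mkAddMonoidHom q
  map_smul' c a := (Localization.smul_mk c a q).symm

/-- The positivity of `L` for the order on `𝔻⁻¹R × C_c(X, ℝ)` in which `(p / q, φ)` is nonnegative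
when `p / q + φ` is so off the zero set of `q`. -/
def IsPointwisePositive (ev : R →ₐ[ℝ] C(X, ℝ)) (L : Localization 𝔻 × C_c(X, ℝ) →ₗ[ℝ] ℝ) : Prop :=
  ∀ (p : R) (q : 𝔻) (φ : C_c(X, ℝ)),
    (∀ x, ev q x ≠ 0 → 0 ≤ ev p x / ev q x + φ x) → 0 ≤ L (Localization.mk p q, φ)

variable {ev : R →ₐ[ℝ] C(X, ℝ)} {L : Localization 𝔻 × C_c(X, ℝ) →ₗ[ℝ] ℝ}

lemma IsPointwisePositive.nonnegOverSq (hL : IsPointwisePositive ev L) (q : 𝔻) :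
    NonnegOverSq ev (q : R) (L ∘ₗ (fractionLinearMap (q ^ 2)).prodMap LinearMap.id) :=
  fun a φ h => hL a (q ^ 2) φ fun x hx => by
    simp only [SubmonoidClass.coe_pow, map_pow, ContinuousMap.pow_apply, ne_eq,
      pow_eq_zero_iff two_ne_zero] at hx ⊢
    exact h x hx

lemma IsPointwisePositive.exists_regular_measure [T2Space X] [LocallyCompactSpace X]
    [MeasurableSpace X] [BorelSpace X] (hL : IsPointwisePositive ev L) :
    ∃ μ : Measure X, μ.Regular ∧ ∀ φ : C_c(X, ℝ), ∫ x, φ x ∂μ = L (0, φ) := by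
  let Λ : C_c(X, ℝ) →ₚ[ℝ] ℝ := .mk₀ (L ∘ₗ .inr ℝ _ _) fun φ hφ => by
    simpa [Localization.mk_zero] using hL 0 1 φ fun x _ => by simpa using hφ x
  exact ⟨RealRMK.rieszMeasure Λ, inferInstance, RealRMK.integral_rieszMeasure Λ⟩

end Localization

section Polynomial

variable {σ : Type*}

/-- Polynomials as continuous functions on affine space. -/
noncomputable def evalContinuousMap : MvPolynomial σ ℝ →ₐ[ℝ] C(σ → ℝ, ℝ) where
  toFun p := ⟨fun x => MvPolynomial.eval x p, MvPolynomial.continuous_eval p⟩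
  map_one' := by ext; simp
  map_mul' _ _ := by ext; simp
  map_zero' := by ext; simp
  map_add' _ _ := by ext; simp
  commutes' _ := by ext; simp

@[simp]
lemma evalContinuousMap_apply (p : MvPolynomial σ ℝ) (x : σ → ℝ) :
    evalContinuousMap p x = MvPolynomial.eval x p := rfl

lemma norm_le_one_add_sum_sq [Fintype σ] (x : σ → ℝ) : ‖x‖ ≤ 1 + ∑ i, x i ^ 2 := by
  refine (pi_norm_le_iff_of_nonneg (by positivity)).2 fun i => (abs_le_one_add_sq (x i)).trans ?_
  gcongr
  exact Finset.single_le_sum (f := fun i => x i ^ 2) (fun i _ => sq_nonneg _) (Finset.mem_univ i)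

lemma tendsto_eval_sum_X_sq_cocompact [Fintype σ] :
    Tendsto (evalContinuousMap (∑ i : σ, MvPolynomial.X i ^ 2)) (cocompact (σ → ℝ)) atTop := by
  refine tendsto_atTop_mono (f := fun x : σ → ℝ => -1 + ‖x‖) (fun x => ?_)
    (tendsto_atTop_add_const_left _ _ tendsto_norm_cocompact_atTop)
  have heval : evalContinuousMap (∑ i : σ, MvPolynomial.X i ^ 2) x = ∑ i, x i ^ 2 := by
    simp
  linarith [norm_le_one_add_sum_sq x]

end Polynomial

theorem positive_functional_on_A_plus_Cc_general {X : Type*} [TopologicalSpace X] [T2Space X]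
    [LocallyCompactSpace X] [MeasurableSpace X] [BorelSpace X] {R : Type*} [CommRing R]
    [Algebra ℝ R] (ev : R →ₐ[ℝ] C(X, ℝ)) {ρ : R}
    (hρ : Tendsto (ev ρ) (cocompact X) atTop) (𝔻 : Submonoid R)
    (L : Localization 𝔻 × C_c(X, ℝ) →ₗ[ℝ] ℝ) (hL : IsPointwisePositive ev L) :
    ∃ μ : Measure X, μ.Regular ∧ (∀ q : 𝔻, μ {x | ev q x = 0} = 0) ∧
      ∀ (p : R) (q : 𝔻), Integrable (fun x => ev p x / ev q x) μ ∧
        ∀ φ : C_c(X, ℝ), L (Localization.mk p q, φ) = ∫ x, ev p x / ev q x + φ x ∂μ := by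
  obtain ⟨μ, hreg, hμ⟩ := hL.exists_regular_measure
  have hμ' (q : 𝔻) (φ : C_c(X, ℝ)) : ∫ x, φ x ∂μ =
      (L ∘ₗ (fractionLinearMap (q ^ 2)).prodMap LinearMap.id) (0, φ) := by simp [hμ]
  refine ⟨μ, hreg, fun q => ?_, fun p q => ?_⟩
  · simpa [ae_iff] using (hL.nonnegOverSq q).ae_ne_zero (hμ' q) hρ
  have hint := (hL.nonnegOverSq q).integrable_div (hμ' q) hρ p
  refine ⟨hint, fun φ => ?_⟩
  have hfrac : L (Localization.mk p q, 0) = ∫ x, ev p x / ev q x ∂μ := by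
    rw [← localization_mk_mul_sq]
    exact (hL.nonnegOverSq q).apply_mul_eq_integral (hμ' q) hρ p
  rw [integral_add hint φ.integrable, ← hfrac, hμ, ← map_add, Prod.mk_add_mk, add_zero, zero_add]

/-- **Lemma 3.7.**  Let `𝔻` be a multiplicative set in `ℝ[x₁,…,x_d]` (with
`1 ∈ 𝔻`, `0 ∉ 𝔻`), `A = 𝔻⁻¹ℝ[x₁,…,x_d]`, and let `L` be a linear functional
on the ordered vector space `E = A ⊕ C_c(ℝ^d)` that is nonnegative on every
element `(p/q, φ)` with `p(x)/q(x) + φ(x) ≥ 0` off the zero set of `q`.  Then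
`L` restricted to `A` is given by a positive Borel measure `μ` on `ℝ^d`
vanishing on the zero set of each `q ∈ 𝔻`. -/
theorem positive_functional_on_A_plus_Cc {d : ℕ}
    (𝔻 : Submonoid (MvPolynomial (Fin d) ℝ)) (h𝔻 : (0 : MvPolynomial (Fin d) ℝ) ∉ 𝔻)
    (L : (Localization 𝔻 × CompactlySupportedContinuousMap (Fin d → ℝ) ℝ) →ₗ[ℝ] ℝ)
    (hL : ∀ (p : MvPolynomial (Fin d) ℝ) (q : MvPolynomial (Fin d) ℝ) (hq : q ∈ 𝔻)
        (φ : CompactlySupportedContinuousMap (Fin d → ℝ) ℝ),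
      (∀ x : Fin d → ℝ, MvPolynomial.eval x q ≠ 0 →
        0 ≤ MvPolynomial.eval x p / MvPolynomial.eval x q + φ x) →
      0 ≤ L (Localization.mk p ⟨q, hq⟩, φ)) :
    ∃ μ : MeasureTheory.Measure (Fin d → ℝ),
      (∀ q ∈ 𝔻, μ {x : Fin d → ℝ | MvPolynomial.eval x q = 0} = 0) ∧
      ∀ (p : MvPolynomial (Fin d) ℝ) (q : MvPolynomial (Fin d) ℝ) (hq : q ∈ 𝔻),
        MeasureTheory.Integrable
          (fun x : Fin d → ℝ => MvPolynomial.eval x p / MvPolynomial.eval x q) μ ∧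
        L (Localization.mk p ⟨q, hq⟩, 0) =
          ∫ x : Fin d → ℝ, MvPolynomial.eval x p / MvPolynomial.eval x q ∂μ := by
  obtain ⟨μ, -, hnull, hμ⟩ := positive_functional_on_A_plus_Cc_general
    evalContinuousMap tendsto_eval_sum_X_sq_cocompact 𝔻 L fun p q => hL p q q.2
  exact ⟨μ, fun q hq => hnull ⟨q, hq⟩, fun p q hq =>
    (hμ p ⟨q, hq⟩).imp_right fun h => by simpa using h 0⟩
end

section
/- Let 𝔻 be a finitely generated multiplicative set in ℝ[x₁,…,x_d] such that 1 + x_j² ∈ 𝔻 for every j = 1,…,d, and let A := 𝔻⁻¹ℝ[x₁,…,x_d]. Then every linear functional L on A with L(a²) ≥ 0 for all a ∈ A admits a positive Borel measure μ on ℝ^d such that μ(Z(q)) = 0 for every q ∈ 𝔻 and, for all p ∈ ℝ[x₁,…,x_d] and q ∈ 𝔻, the function x ↦ p(x)/q(x) is μ-integrable and L(p/q) = ∫_{ℝ^d} p(x)/q(x) dμ(x). -/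
/-!
With `y_j = 1 / (1 + x_j²)`, the elements `y_j` and `1/2 + x_j y_j` of `A` as well as their
complements to `1` are sums of squares, and every `p / q` is a quotient of polynomials in them. On
polynomials in these bounded coordinates `L` is therefore a functional nonnegative on all products
of coordinates `t` and `1 - t`; expanding in Bernstein polynomials, as for Hausdorff's moment
problem, shows that it is nonnegative on all polynomials nonnegative on the cube, so it is
integration against a unique measure `ν` there.

To reach fractions with an invertible denominator `W`, note that `a ↦ L (W⁻² a)` is again
nonnegative on squares, hence has a measure `ν'`, and `ν = W² ν'` by uniqueness. So `ν` does not
charge the zeros of `W`, and `L (P / W) = L (W⁻² P W) = ∫ P W dν' = ∫ P / W dν`. The theorem follows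
by pushing `ν` forward under `x_j = (x_j y_j) / y_j`.
-/

open MeasureTheory MvPolynomial Filter Topology

theorem exists_positiveLinearMap_comp_eq {V E : Type*} [AddCommGroup V] [Module ℝ V]
    [AddCommGroup E] [PartialOrder E] [IsOrderedAddMonoid E] [Module ℝ E] [PosSMulMono ℝ E]
    (T : V →ₗ[ℝ] E) (ℓ : V →ₗ[ℝ] ℝ) (hℓ : ∀ p, 0 ≤ T p → 0 ≤ ℓ p) (hT : ∀ y, ∃ p, y ≤ T p) :
    ∃ Λ : E →ₚ[ℝ] ℝ, ∀ p, Λ (T p) = ℓ p := by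
  have hker : LinearMap.ker T ≤ LinearMap.ker ℓ := fun p hp => by
    rw [LinearMap.mem_ker] at hp ⊢
    have hneg : 0 ≤ ℓ (-p) := hℓ (-p) (by rw [map_neg, hp, neg_zero])
    rw [map_neg] at hneg
    exact le_antisymm (neg_nonneg.mp hneg) (hℓ p hp.ge)
  let f : E →ₗ.[ℝ] ℝ :=
    ⟨LinearMap.range T, (LinearMap.ker T).liftQ ℓ hker ∘ₗ T.quotKerEquivRange.symm.toLinearMap⟩
  have hf : ∀ p, f ⟨T p, LinearMap.mem_range_self T p⟩ = ℓ p := fun p => by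
    change (LinearMap.ker T).liftQ ℓ hker (T.quotKerEquivRange.symm ⟨T p, _⟩) = ℓ p
    rw [LinearMap.quotKerEquivRange_symm_apply_image, Submodule.mkQ_apply, Submodule.liftQ_apply]
  obtain ⟨Λ, hΛf, hΛ⟩ := riesz_extension (PointedCone.positive ℝ E) f
    (by rintro ⟨_, p, rfl⟩ hp; exact (hf p).symm ▸ hℓ p hp)
    (fun y => by
      obtain ⟨p, hp⟩ := hT (-y)
      exact ⟨⟨T p, LinearMap.mem_range_self T p⟩, neg_le_iff_add_nonneg.mp hp⟩)
  exact ⟨PositiveLinearMap.mk₀ Λ hΛ, fun p => (hΛf ⟨T p, _⟩).trans (hf p)⟩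

section CompactMoment

open scoped CompactlySupported

variable {ι : Type*}

/-- The polynomial functions on a subset `K` of `ℝ^ι`, as an algebra homomorphism to `C(K, ℝ)`.
For compact `K` its range is dominating and separates points. -/
noncomputable def polynomialFunctionOn (K : Set (ι → ℝ)) : MvPolynomial ι ℝ →ₐ[ℝ] C(K, ℝ) :=
  aeval fun i => ⟨fun v => v.1 i, (continuous_apply i).comp continuous_subtype_val⟩

variable {K : Set (ι → ℝ)}

@[simp]
theorem polynomialFunctionOn_apply (P : MvPolynomial ι ℝ) (v : K) :
    polynomialFunctionOn K P v = eval v.1 P := by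
  induction P using MvPolynomial.induction_on with
  | C c => simp [polynomialFunctionOn]
  | add P Q hP hQ => simp [hP, hQ]
  | mul_X P i hP =>
    rw [map_mul, ContinuousMap.mul_apply, hP, map_mul, eval_X, polynomialFunctionOn, aeval_X]
    rfl

variable [Countable ι]

theorem measurable_eval_coe (P : MvPolynomial ι ℝ) : Measurable fun v : K => eval v.1 P :=
  ((continuous_eval P).comp continuous_subtype_val).measurable

theorem integrable_eval_coe [CompactSpace K] (ν : Measure K) [IsFiniteMeasure ν]
    (P : MvPolynomial ι ℝ) : Integrable (fun v : K => eval v.1 P) ν :=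
  ((continuous_eval P).comp continuous_subtype_val).integrable_of_hasCompactSupport
    (.of_compactSpace _)

variable [CompactSpace K]

theorem exists_measure_integral_eval_eq_of_nonneg (ℓ : MvPolynomial ι ℝ →ₗ[ℝ] ℝ)
    (hℓ : ∀ P, (∀ v ∈ K, 0 ≤ eval v P) → 0 ≤ ℓ P) :
    ∃ ν : Measure K, IsFiniteMeasure ν ∧ ∀ P, ∫ v : K, eval v.1 P ∂ν = ℓ P := by
  obtain ⟨Λ, hΛ⟩ := exists_positiveLinearMap_comp_eq (polynomialFunctionOn K).toLinearMap ℓ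
    (fun P hP => hℓ P fun v hv => by simpa using hP ⟨v, hv⟩)
    (fun f => ⟨C ‖f‖, fun v => by simpa using (le_abs_self _).trans (f.norm_coe_le_norm v)⟩)
  let Λc : C_c(K, ℝ) →ₚ[ℝ] ℝ := PositiveLinearMap.mk₀
    { toFun f := Λ f.toContinuousMap
      map_add' f g := map_add Λ _ _
      map_smul' c f := map_smul Λ c _ }
    fun f hf => by simpa using OrderHomClass.mono Λ (show 0 ≤ f.toContinuousMap from hf)
  refine ⟨RealRMK.rieszMeasure Λc, inferInstance, fun P => ?_⟩
  have h := RealRMK.integral_rieszMeasure Λc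
    (CompactlySupportedContinuousMap.continuousMapEquiv (polynomialFunctionOn K P))
  simpa using h.trans (hΛ P)

theorem measure_ext_of_forall_integral_eval_eq {μ ν : Measure K} [IsFiniteMeasure μ]
    [IsFiniteMeasure ν]
    (h : ∀ P : MvPolynomial ι ℝ, ∫ v : K, eval v.1 P ∂μ = ∫ v : K, eval v.1 P ∂ν) : μ = ν := by
  have : PolishSpace K := (isCompact_iff_compactSpace.mpr inferInstance).isClosed.polishSpace
  let A : StarSubalgebra ℝ (BoundedContinuousFunction K ℝ) :=
    { (polynomialFunctionOn K).range.comap (BoundedContinuousFunction.toContinuousMapₐ ℝ) with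
      star_mem' := fun h => h }
  refine ext_of_forall_mem_subalgebra_integral_eq_of_polish (A := A) ?_ ?_
  · intro v w hvw
    obtain ⟨i, hi⟩ := Function.ne_iff.mp (Subtype.coe_ne_coe.mpr hvw)
    refine ⟨polynomialFunctionOn K (X i), ⟨_, ⟨BoundedContinuousFunction.mkOfCompact
      (polynomialFunctionOn K (X i)), ⟨X i, rfl⟩, rfl⟩, rfl⟩, ?_⟩
    simpa using hi
  · rintro f ⟨P, hP⟩
    have hf : ∀ v, f v = eval v.1 P := fun v => by
      rw [← polynomialFunctionOn_apply]
      exact (DFunLike.congr_fun hP v).symm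
    simpa only [hf] using h P

end CompactMoment

section WithDensity

variable {Ω : Type*} [MeasurableSpace Ω] {μ : Measure Ω} {f : Ω → ℝ}

theorem integral_withDensity_ofReal_sq (hf : Measurable f) (g : Ω → ℝ) :
    ∫ x, g x ∂μ.withDensity (fun x => ENNReal.ofReal (f x ^ 2)) = ∫ x, f x ^ 2 * g x ∂μ := by
  rw [integral_withDensity_eq_integral_toReal_smul (by fun_prop)
    (.of_forall fun _ => ENNReal.ofReal_lt_top)]
  simp only [ENNReal.toReal_ofReal (sq_nonneg _), smul_eq_mul]

theorem integrable_withDensity_ofReal_sq_iff (hf : Measurable f) {g : Ω → ℝ} :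
    Integrable g (μ.withDensity fun x => ENNReal.ofReal (f x ^ 2)) ↔
      Integrable (fun x => f x ^ 2 * g x) μ := by
  rw [integrable_withDensity_iff_integrable_smul' (by fun_prop)
    (.of_forall fun _ => ENNReal.ofReal_lt_top)]
  simp only [ENNReal.toReal_ofReal (sq_nonneg _), smul_eq_mul]

theorem ae_ne_zero_withDensity_ofReal_sq (hf : Measurable f) :
    ∀ᵐ x ∂μ.withDensity (fun x => ENNReal.ofReal (f x ^ 2)), f x ≠ 0 := by
  rw [ae_withDensity_iff (by fun_prop)]
  exact .of_forall fun x hx hfx => hx (by rw [hfx, zero_pow two_ne_zero, ENNReal.ofReal_zero])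

end WithDensity

section Bernstein

theorem sum_choose_mul_bernsteinPolynomial (R : Type*) [CommRing R] {k m : ℕ} (hm : m ≤ k) :
    ∑ j ∈ Finset.range (k + 1), (j.choose m : Polynomial R) * bernsteinPolynomial R k j =
      (k.choose m : Polynomial R) * Polynomial.X ^ m := by
  have shift : ∀ i, ((m + i).choose m : Polynomial R) * bernsteinPolynomial R k (m + i) =
      (k.choose m : Polynomial R) * Polynomial.X ^ m * bernsteinPolynomial R (k - m) i := by
    intro i
    have hchoose : (k.choose (m + i) : Polynomial R) * ((m + i).choose m : Polynomial R) =
        k.choose m * (k - m).choose i := by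
      have := Nat.choose_mul (n := k) (Nat.le_add_right m i)
      rw [Nat.add_sub_cancel_left] at this
      simpa only [Nat.cast_mul] using congrArg (Nat.cast : ℕ → Polynomial R) this
    rw [bernsteinPolynomial, bernsteinPolynomial, ← Nat.sub_sub, pow_add]
    linear_combination Polynomial.X ^ m * Polynomial.X ^ i *
      (1 - Polynomial.X) ^ (k - m - i) * hchoose
  rw [show k + 1 = m + (k - m + 1) by lia, Finset.sum_range_add, Finset.sum_eq_zero, zero_add]
  · simp only [shift, ← Finset.mul_sum, bernsteinPolynomial.sum, mul_one]
  · intro j hj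
    rw [Nat.choose_eq_zero_of_lt (Finset.mem_range.mp hj), Nat.cast_zero, zero_mul]

theorem choose_succ_div_choose_succ {j k m : ℕ} (hm : m ≤ k) :
    (j.choose (m + 1) / k.choose (m + 1) : ℝ) =
      j.choose m / k.choose m * ((j - m : ℕ) / (k - m)) := by
  have hchoose : ∀ n : ℕ, (n.choose (m + 1) : ℝ) = n.choose m * (n - m : ℕ) / (m + 1) := by
    intro n
    rw [eq_div_iff (by positivity)]
    exact_mod_cast n.choose_succ_right_eq m
  rw [hchoose, hchoose, Nat.cast_sub hm]
  field_simp

theorem abs_div_sub_tsub_div_sub_le {j k m : ℕ} (hj : j ≤ k) (hm : m < k) :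
    |(j / k : ℝ) - (j - m : ℕ) / (k - m)| ≤ m / k := by
  have hk : (0 : ℝ) < k := Nat.cast_pos.mpr hm.bot_lt
  have hkm : (0 : ℝ) < k - m := sub_pos.mpr (Nat.cast_lt.mpr hm)
  rcases le_total m j with hmj | hjm
  · have hdiff : (j / k : ℝ) - (j - m : ℕ) / (k - m) = m / k * ((k - j) / (k - m)) := by
      rw [Nat.cast_sub hmj]
      field_simp
      ring
    rw [hdiff, abs_mul, abs_of_nonneg (by positivity),
      abs_of_nonneg (div_nonneg (sub_nonneg.mpr (Nat.cast_le.mpr hj)) hkm.le)]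
    refine mul_le_of_le_one_right (by positivity) ((div_le_one hkm).mpr ?_)
    gcongr
  · rw [Nat.sub_eq_zero_of_le hjm, Nat.cast_zero, zero_div, sub_zero,
      abs_of_nonneg (by positivity)]
    gcongr

theorem abs_div_pow_sub_choose_div_choose_le {j k m : ℕ} (hj : j ≤ k) (hm : m ≤ k) :
    |(j / k : ℝ) ^ m - j.choose m / k.choose m| ≤ m ^ 2 / k := by
  induction m with
  | zero => simp
  | succ m ih =>
    have hmk : m < k := hm
    have hle_one : (j.choose m / k.choose m : ℝ) ≤ 1 :=
      div_le_one_of_le₀ (Nat.cast_le.mpr (Nat.choose_le_choose m hj)) (Nat.cast_nonneg _)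
    have hj_le_one : (j / k : ℝ) ≤ 1 :=
      div_le_one_of_le₀ (Nat.cast_le.mpr hj) (Nat.cast_nonneg _)
    rw [choose_succ_div_choose_succ hmk.le, pow_succ]
    calc |(j / k : ℝ) ^ m * (j / k) - j.choose m / k.choose m * ((j - m : ℕ) / (k - m))|
        = |((j / k : ℝ) ^ m - j.choose m / k.choose m) * (j / k) +
            j.choose m / k.choose m * (j / k - (j - m : ℕ) / (k - m))| := by ring_nf
      _ ≤ |(j / k : ℝ) ^ m - j.choose m / k.choose m| * (j / k) +
            j.choose m / k.choose m * |(j / k : ℝ) - (j - m : ℕ) / (k - m)| := by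
          refine (abs_add_le _ _).trans_eq ?_
          rw [abs_mul, abs_mul, abs_of_nonneg (by positivity : (0 : ℝ) ≤ j / k),
            abs_of_nonneg (by positivity : (0 : ℝ) ≤ j.choose m / k.choose m)]
      _ ≤ m ^ 2 / k * 1 + 1 * (m / k) := by
          gcongr
          · exact ih hmk.le
          · exact abs_div_sub_tsub_div_sub_le hj hmk
      _ ≤ (m + 1 : ℕ) ^ 2 / k := by
          rw [mul_one, one_mul, ← add_div]
          gcongr
          push_cast
          nlinarith

theorem norm_prod_sub_prod_le {ι R : Type*} [NormedCommRing R] [NormOneClass R] (s : Finset ι)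
    {a b : ι → R} (ha : ∀ i ∈ s, ‖a i‖ ≤ 1) (hb : ∀ i ∈ s, ‖b i‖ ≤ 1) :
    ‖∏ i ∈ s, a i - ∏ i ∈ s, b i‖ ≤ ∑ i ∈ s, ‖a i - b i‖ := by
  induction s using Finset.cons_induction with
  | empty => simp
  | cons j s hj ih =>
    have ha' := fun i hi => ha i (Finset.mem_cons_of_mem hi)
    have hb' := fun i hi => hb i (Finset.mem_cons_of_mem hi)
    have hprod : ‖∏ i ∈ s, b i‖ ≤ 1 :=
      (Finset.norm_prod_le s b).trans (Finset.prod_le_one (fun i _ => norm_nonneg _) hb')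
    rw [Finset.prod_cons, Finset.prod_cons, Finset.sum_cons]
    calc ‖a j * ∏ i ∈ s, a i - b j * ∏ i ∈ s, b i‖
        = ‖(a j - b j) * ∏ i ∈ s, b i + a j * (∏ i ∈ s, a i - ∏ i ∈ s, b i)‖ := by ring_nf
      _ ≤ ‖a j - b j‖ * ‖∏ i ∈ s, b i‖ + ‖a j‖ * ‖∏ i ∈ s, a i - ∏ i ∈ s, b i‖ :=
          (norm_add_le _ _).trans (add_le_add (norm_mul_le _ _) (norm_mul_le _ _))
      _ ≤ ‖a j - b j‖ * 1 + 1 * ∑ i ∈ s, ‖a i - b i‖ := by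
          gcongr
          · exact ha j (Finset.mem_cons_self j s)
          · exact ih ha' hb'
      _ = ‖a j - b j‖ + ∑ i ∈ s, ‖a i - b i‖ := by rw [mul_one, one_mul]

end Bernstein

section UnitCube

/-- The cube `[0, 1]^ι`, on which the moment problem of the bounded coordinates is solved. -/
abbrev unitCube (ι : Type*) : Set (ι → ℝ) := Set.Icc 0 1

/-- The subsemiring generated by the `X i` and the `1 - X i`: finite sums of products of these
polynomials, all of them nonnegative on `[0, 1]^ι`. Nonnegativity of a functional on it replaces
Hausdorff's difference conditions on the moments. -/
noncomputable def cubeSemiring (ι : Type*) : Subsemiring (MvPolynomial ι ℝ) :=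
  Subsemiring.closure (Set.range X ∪ Set.range fun i => 1 - X i)

variable {ι : Type*}

theorem X_mem_cubeSemiring (i : ι) : X i ∈ cubeSemiring ι :=
  Subsemiring.subset_closure (Or.inl ⟨i, rfl⟩)

theorem one_sub_X_mem_cubeSemiring (i : ι) : 1 - X i ∈ cubeSemiring ι :=
  Subsemiring.subset_closure (Or.inr ⟨i, rfl⟩)

theorem cubeSemiring_le_iff {S : Subsemiring (MvPolynomial ι ℝ)} :
    cubeSemiring ι ≤ S ↔ (∀ i, X i ∈ S) ∧ ∀ i, 1 - X i ∈ S := by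
  rw [cubeSemiring, Subsemiring.closure_le, Set.union_subset_iff, Set.range_subset_iff,
    Set.range_subset_iff]
  rfl

theorem rename_mem_cubeSemiring {κ : Type*} (f : κ → ι) {P : MvPolynomial κ ℝ}
    (hP : P ∈ cubeSemiring κ) : rename f P ∈ cubeSemiring ι := by
  have h : cubeSemiring κ ≤ (cubeSemiring ι).comap (rename (R := ℝ) f) :=
    cubeSemiring_le_iff.mpr ⟨fun i => by simpa using X_mem_cubeSemiring (f i),
      fun i => by simpa using one_sub_X_mem_cubeSemiring (f i)⟩
  exact h hP

section Fintype

variable [Fintype ι]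

/-- The multivariate Bernstein polynomial `∏ i, b_{k, n i}(X i)`, of the same degree `k` in all
variables. -/
noncomputable def mvBernstein (k : ℕ) (n : ι → ℕ) : MvPolynomial ι ℝ :=
  ∏ i, Polynomial.aeval (X i) (bernsteinPolynomial ℝ k (n i))

theorem mvBernstein_mem_cubeSemiring (k : ℕ) (n : ι → ℕ) : mvBernstein k n ∈ cubeSemiring ι := by
  refine prod_mem fun i _ => ?_
  simp only [bernsteinPolynomial, map_mul, map_pow, map_sub, map_one, map_natCast,
    Polynomial.aeval_X]
  exact mul_mem (mul_mem (natCast_mem _ _) (pow_mem (X_mem_cubeSemiring i) _))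
    (pow_mem (one_sub_X_mem_cubeSemiring i) _)

/-- The indices `n` with all `n i ≤ k`; `n / k` then runs over the nodes of Bernstein approximation
in the cube. -/
def bernsteinGrid (ι : Type*) [Fintype ι] [DecidableEq ι] (k : ℕ) : Finset (ι → ℕ) :=
  Fintype.piFinset fun _ => Finset.range (k + 1)

variable [DecidableEq ι]

theorem le_of_mem_bernsteinGrid {k : ℕ} {n : ι → ℕ} (hn : n ∈ bernsteinGrid ι k) (i : ι) :
    n i ≤ k :=
  Finset.mem_range_succ_iff.mp (Fintype.mem_piFinset.mp hn i)

theorem sum_prod_choose_div_choose_smul_mvBernstein {k : ℕ} {m : ι →₀ ℕ} (hm : ∀ i, m i ≤ k) :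
    ∑ n ∈ bernsteinGrid ι k, (∏ i, ((n i).choose (m i) / k.choose (m i) : ℝ)) • mvBernstein k n =
      monomial m 1 := by
  have hX : ∀ i, ∑ j ∈ Finset.range (k + 1), C (j.choose (m i) / k.choose (m i) : ℝ) *
      Polynomial.aeval (X i : MvPolynomial ι ℝ) (bernsteinPolynomial ℝ k j) = X i ^ m i := by
    intro i
    have hpos : (k.choose (m i) : ℝ) ≠ 0 := by exact_mod_cast (Nat.choose_pos (hm i)).ne'
    calc ∑ j ∈ Finset.range (k + 1), C (j.choose (m i) / k.choose (m i) : ℝ) *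
          Polynomial.aeval (X i : MvPolynomial ι ℝ) (bernsteinPolynomial ℝ k j)
        = C (k.choose (m i) : ℝ)⁻¹ * Polynomial.aeval (X i) (∑ j ∈ Finset.range (k + 1),
            (j.choose (m i) : Polynomial ℝ) * bernsteinPolynomial ℝ k j) := by
          simp only [map_sum, map_mul, map_natCast, Finset.mul_sum, div_eq_inv_mul,
            mul_assoc]
      _ = C ((k.choose (m i) : ℝ)⁻¹ * k.choose (m i)) * X i ^ m i := by
          rw [sum_choose_mul_bernsteinPolynomial ℝ (hm i), map_mul, map_natCast, map_pow,
            Polynomial.aeval_X, ← mul_assoc, C_mul, map_natCast]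
      _ = X i ^ m i := by rw [inv_mul_cancel₀ hpos, C_1, one_mul]
  simp only [bernsteinGrid, mvBernstein, smul_eq_C_mul, map_prod, ← Finset.prod_mul_distrib]
  rw [← Finset.prod_univ_sum (fun _ => Finset.range (k + 1)) fun i j =>
    C (j.choose (m i) / k.choose (m i) : ℝ) * Polynomial.aeval (X i) (bernsteinPolynomial ℝ k j)]
  simp only [hX]
  rw [monomial_eq, C_1, one_mul, Finsupp.prod_fintype _ _ fun i => pow_zero _]

theorem abs_sum_prod_mul_mvBernstein_sub_le (ℓ : MvPolynomial ι ℝ →ₗ[ℝ] ℝ)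
    (hℓ : ∀ P ∈ cubeSemiring ι, 0 ≤ ℓ P) {k : ℕ} {m : ι →₀ ℕ} (hm : ∀ i, m i ≤ k) :
    |∑ n ∈ bernsteinGrid ι k, (∏ i, (n i / k : ℝ) ^ m i) * ℓ (mvBernstein k n) -
      ℓ (monomial m 1)| ≤ (∑ i, (m i : ℝ) ^ 2) / k * ℓ 1 := by
  have hone : ∑ n ∈ bernsteinGrid ι k, ℓ (mvBernstein k n) = ℓ 1 := by
    simpa using congrArg ℓ (sum_prod_choose_div_choose_smul_mvBernstein (m := 0) fun _ => k.zero_le)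
  have hmono : ℓ (monomial m 1) = ∑ n ∈ bernsteinGrid ι k,
      (∏ i, ((n i).choose (m i) / k.choose (m i) : ℝ)) * ℓ (mvBernstein k n) := by
    simp only [← sum_prod_choose_div_choose_smul_mvBernstein hm, map_sum, map_smul, smul_eq_mul]
  have hcoeff : ∀ n ∈ bernsteinGrid ι k, |∏ i, (n i / k : ℝ) ^ m i -
      ∏ i, ((n i).choose (m i) / k.choose (m i) : ℝ)| ≤ (∑ i, (m i : ℝ) ^ 2) / k := by
    intro n hn
    have hnk := le_of_mem_bernsteinGrid hn
    rw [Finset.sum_div]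
    refine (norm_prod_sub_prod_le Finset.univ (a := fun i => (n i / k : ℝ) ^ m i)
      (b := fun i => ((n i).choose (m i) / k.choose (m i) : ℝ))
      (fun i _ => ?_) fun i _ => ?_).trans
      (Finset.sum_le_sum fun i _ => abs_div_pow_sub_choose_div_choose_le (hnk i) (hm i))
    · rw [Real.norm_of_nonneg (by positivity)]
      exact pow_le_one₀ (by positivity)
        (div_le_one_of_le₀ (Nat.cast_le.mpr (hnk i)) (by positivity))
    · rw [Real.norm_of_nonneg (by positivity)]
      exact div_le_one_of_le₀ (Nat.cast_le.mpr (Nat.choose_le_choose _ (hnk i))) (by positivity)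
  rw [hmono, ← hone, ← Finset.sum_sub_distrib, Finset.mul_sum]
  refine (Finset.abs_sum_le_sum_abs _ _).trans (Finset.sum_le_sum fun n hn => ?_)
  have hb := hℓ _ (mvBernstein_mem_cubeSemiring k n)
  rw [← sub_mul, abs_mul, abs_of_nonneg hb]
  exact mul_le_mul_of_nonneg_right (hcoeff n hn) hb

theorem tendsto_sum_eval_mul_mvBernstein (ℓ : MvPolynomial ι ℝ →ₗ[ℝ] ℝ)
    (hℓ : ∀ P ∈ cubeSemiring ι, 0 ≤ ℓ P) (P : MvPolynomial ι ℝ) :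
    Tendsto (fun k : ℕ => ∑ n ∈ bernsteinGrid ι k,
      eval (fun i => (n i / k : ℝ)) P * ℓ (mvBernstein k n)) atTop (𝓝 (ℓ P)) := by
  induction P using MvPolynomial.induction_on' with
  | add P Q hP hQ => simpa only [map_add, add_mul, Finset.sum_add_distrib] using hP.add hQ
  | monomial m c =>
    have hlim : Tendsto (fun k : ℕ => (∑ i, (m i : ℝ) ^ 2) / k * ℓ 1) atTop (𝓝 0) := by
      simpa using (tendsto_const_div_atTop_nhds_zero_nat (∑ i, (m i : ℝ) ^ 2)).mul_const (ℓ 1)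
    have hmono : Tendsto (fun k : ℕ => ∑ n ∈ bernsteinGrid ι k,
        (∏ i, (n i / k : ℝ) ^ m i) * ℓ (mvBernstein k n)) atTop (𝓝 (ℓ (monomial m 1))) := by
      rw [tendsto_iff_norm_sub_tendsto_zero]
      refine squeeze_zero' (.of_forall fun _ => norm_nonneg _) ?_ hlim
      filter_upwards [eventually_all.mpr fun i => eventually_ge_atTop (m i)] with k hk
      exact abs_sum_prod_mul_mvBernstein_sub_le ℓ hℓ hk
    have hc : ℓ (monomial m c) = c * ℓ (monomial m 1) := by
      rw [← smul_eq_mul, ← map_smul, smul_monomial, smul_eq_mul, mul_one]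
    rw [hc]
    simpa only [eval_monomial, Finsupp.prod_fintype _ _ fun _ => pow_zero _, mul_assoc,
      ← Finset.mul_sum] using hmono.const_mul c

end Fintype

theorem nonneg_of_nonneg_on_unitCube_of_finite [Finite ι] {ℓ : MvPolynomial ι ℝ →ₗ[ℝ] ℝ}
    (hℓ : ∀ P ∈ cubeSemiring ι, 0 ≤ ℓ P) {P : MvPolynomial ι ℝ}
    (hP : ∀ v ∈ unitCube ι, 0 ≤ eval v P) : 0 ≤ ℓ P := by
  classical
  cases nonempty_fintype ι
  refine ge_of_tendsto' (tendsto_sum_eval_mul_mvBernstein ℓ hℓ P) fun k =>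
    Finset.sum_nonneg fun n hn => mul_nonneg (hP _ ⟨fun i => ?_, fun i => ?_⟩)
      (hℓ _ (mvBernstein_mem_cubeSemiring k n))
  · exact div_nonneg (Nat.cast_nonneg _) (Nat.cast_nonneg _)
  · exact div_le_one_of_le₀ (Nat.cast_le.mpr (le_of_mem_bernsteinGrid hn i)) (Nat.cast_nonneg _)

theorem extend_zero_mem_unitCube {κ : Type*} {f : κ → ι} (hf : f.Injective) {w : κ → ℝ}
    (hw : w ∈ unitCube κ) : Function.extend f w 0 ∈ unitCube ι := by
  have hmem : ∀ i, Function.extend f w 0 i ∈ Set.Icc (0 : ℝ) 1 := fun i => by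
    by_cases hi : ∃ j, f j = i
    · obtain ⟨j, rfl⟩ := hi
      rw [hf.extend_apply]
      exact ⟨hw.1 j, hw.2 j⟩
    · rw [Function.extend_apply' _ _ _ hi]
      exact ⟨le_rfl, zero_le_one⟩
  exact ⟨fun i => (hmem i).1, fun i => (hmem i).2⟩

theorem nonneg_of_nonneg_on_unitCube {ℓ : MvPolynomial ι ℝ →ₗ[ℝ] ℝ}
    (hℓ : ∀ P ∈ cubeSemiring ι, 0 ≤ ℓ P) {P : MvPolynomial ι ℝ}
    (hP : ∀ v ∈ unitCube ι, 0 ≤ eval v P) : 0 ≤ ℓ P := by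
  obtain ⟨s, Q, rfl⟩ := exists_finset_rename P
  refine nonneg_of_nonneg_on_unitCube_of_finite (ℓ := ℓ ∘ₗ (rename Subtype.val).toLinearMap)
    (fun R hR => hℓ _ (rename_mem_cubeSemiring _ hR)) fun w hw => ?_
  have h := hP _ (extend_zero_mem_unitCube Subtype.val_injective hw)
  rwa [eval_rename, Function.extend_comp Subtype.val_injective] at h

end UnitCube

section SumOfSquares

theorem isSumSq_algebraMap_of_nonneg {A : Type*} [CommSemiring A] [Algebra ℝ A] {c : ℝ}
    (hc : 0 ≤ c) : IsSumSq (algebraMap ℝ A c) := by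
  rw [← Real.mul_self_sqrt hc, map_mul]
  exact .mul_self _

theorem isSumSq_of_one_add_sq_mul_eq_one {A : Type*} [CommRing A] {x y : A}
    (hy : (1 + x ^ 2) * y = 1) : IsSumSq y := by
  have h : y = y * y + x * y * (x * y) := by linear_combination (-y) * hy
  exact h ▸ (IsSumSq.mul_self y).add (.mul_self (x * y))

theorem nonneg_of_isSumSq {A : Type*} [Semiring A] [Module ℝ A] {L : A →ₗ[ℝ] ℝ}
    (hL : ∀ a, 0 ≤ L (a ^ 2)) {a : A} (ha : IsSumSq a) : 0 ≤ L a := by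
  induction ha with
  | zero => rw [map_zero]
  | sq_add a _ ih => rw [map_add, ← sq]; exact add_nonneg (hL a) ih

end SumOfSquares

section MomentFunctional

variable {ι A : Type*} [Countable ι] [CommRing A] [Algebra ℝ A] {L : A →ₗ[ℝ] ℝ} {u : ι → A}

theorem exists_measure_integral_eval_eq_sq_mul (hL : ∀ a, 0 ≤ L (a ^ 2))
    (hu : ∀ i, IsSumSq (u i)) (hu' : ∀ i, IsSumSq (1 - u i)) (s : A) :
    ∃ ν : Measure (unitCube ι), IsFiniteMeasure ν ∧
      ∀ P : MvPolynomial ι ℝ, ∫ v, eval v.1 P ∂ν = L (s ^ 2 * aeval u P) := by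
  have hsumSq : cubeSemiring ι ≤
      (Subsemiring.sumSq A).comap (aeval u : MvPolynomial ι ℝ →ₐ[ℝ] A).toRingHom :=
    cubeSemiring_le_iff.mpr ⟨fun i => by simpa using hu i, fun i => by simpa using hu' i⟩
  let ℓ : MvPolynomial ι ℝ →ₗ[ℝ] ℝ :=
    L ∘ₗ LinearMap.mulLeft ℝ (s ^ 2) ∘ₗ (aeval u).toLinearMap
  refine exists_measure_integral_eval_eq_of_nonneg ℓ fun P hP =>
    nonneg_of_nonneg_on_unitCube (fun Q hQ => nonneg_of_isSumSq hL ?_) hP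
  exact (IsSquare.sq s).isSumSq.mul (Subsemiring.mem_sumSq.mp (hsumSq hQ))

theorem exists_eq_withDensity_sq (hL : ∀ a, 0 ≤ L (a ^ 2))
    (hu : ∀ i, IsSumSq (u i)) (hu' : ∀ i, IsSumSq (1 - u i))
    {ν : Measure (unitCube ι)} [IsFiniteMeasure ν]
    (hν : ∀ P : MvPolynomial ι ℝ, ∫ v, eval v.1 P ∂ν = L (aeval u P))
    {W : MvPolynomial ι ℝ} {s : A} (hs : aeval u W * s = 1) :
    ∃ ν' : Measure (unitCube ι), IsFiniteMeasure ν' ∧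
      (∀ P : MvPolynomial ι ℝ, ∫ v, eval v.1 P ∂ν' = L (s ^ 2 * aeval u P)) ∧
      ν = ν'.withDensity fun v => ENNReal.ofReal (eval v.1 W ^ 2) := by
  obtain ⟨ν', hfin, hν'⟩ := exists_measure_integral_eval_eq_sq_mul hL hu hu' s
  refine ⟨ν', hfin, hν', ?_⟩
  have : IsFiniteMeasure (ν'.withDensity fun v => ENNReal.ofReal (eval v.1 W ^ 2)) :=
    isFiniteMeasure_withDensity_ofReal
      ((integrable_eval_coe ν' (W ^ 2)).congr (.of_forall fun v => map_pow (eval v.1) W 2)).2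
  refine measure_ext_of_forall_integral_eval_eq fun P => ?_
  calc ∫ v, eval v.1 P ∂ν
      = L (s ^ 2 * aeval u (W ^ 2 * P)) := by
        rw [hν, map_mul (aeval u), map_pow]
        congr 1
        linear_combination (-(aeval u P) * (aeval u W * s + 1)) * hs
    _ = ∫ v, eval v.1 W ^ 2 * eval v.1 P ∂ν' := by
        rw [← hν']
        simp only [map_mul, map_pow]
    _ = ∫ v, eval v.1 P ∂ν'.withDensity fun v => ENNReal.ofReal (eval v.1 W ^ 2) :=
        (integral_withDensity_ofReal_sq (measurable_eval_coe W) _).symm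

theorem exists_measure_unitCube_integral_eval_div_eval_eq (hL : ∀ a, 0 ≤ L (a ^ 2))
    (hu : ∀ i, IsSumSq (u i)) (hu' : ∀ i, IsSumSq (1 - u i)) :
    ∃ ν : Measure (unitCube ι), ∀ W : MvPolynomial ι ℝ, IsUnit (aeval u W) →
      (∀ᵐ v ∂ν, eval v.1 W ≠ 0) ∧ ∀ (P : MvPolynomial ι ℝ) (a : A), a * aeval u W = aeval u P →
        Integrable (fun v : unitCube ι => eval v.1 P / eval v.1 W) ν ∧
          L a = ∫ v, eval v.1 P / eval v.1 W ∂ν := by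
  obtain ⟨ν, hfin, hν⟩ := exists_measure_integral_eval_eq_sq_mul hL hu hu' 1
  refine ⟨ν, fun W hW => ?_⟩
  obtain ⟨s, hs⟩ := hW.exists_right_inv
  obtain ⟨ν', hfin', hν', rfl⟩ :=
    exists_eq_withDensity_sq hL hu hu' (by simpa only [one_pow, one_mul] using hν) hs
  have hmeas : Measurable fun v : unitCube ι => eval v.1 W := measurable_eval_coe W
  refine ⟨ae_ne_zero_withDensity_ofReal_sq hmeas, fun P a ha => ?_⟩
  have hcancel : ∀ v : unitCube ι,
      eval v.1 W ^ 2 * (eval v.1 P / eval v.1 W) = eval v.1 (W * P) := fun v => by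
    rw [map_mul]
    rcases eq_or_ne (eval v.1 W) 0 with h | h
    · rw [h]; ring
    · field_simp
  rw [integrable_withDensity_ofReal_sq_iff hmeas, integral_withDensity_ofReal_sq hmeas]
  simp only [hcancel]
  refine ⟨integrable_eval_coe ν' _, ?_⟩
  rw [hν', map_mul (aeval u), ← ha]
  congr 1
  linear_combination (-a * (aeval u W * s + 1)) * hs

end MomentFunctional

section BoundedCoordinates

variable {σ A : Type*} [CommRing A] [Algebra ℝ A]

/-- The bounded elements `y j` and `1 / 2 + x j * y j` of an algebra, meant for `y j` the inverse of
`1 + x j ^ 2`: both then satisfy `0 ≤ u ≤ 1` in the sense of sums of squares, and they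
generate all the `x j` after inverting the `y j`. -/
noncomputable def boundedCoords (x y : σ → A) : σ ⊕ σ → A :=
  Sum.elim y fun j => algebraMap ℝ A 2⁻¹ + x j * y j

/-- The point `x` whose bounded coordinates `1 / (1 + x j ^ 2)` and `1 / 2 + x j / (1 + x j ^ 2)`
are `v`; coordinates with `v (inl j) = 0`, which correspond to no point, are sent to `0`. -/
noncomputable def ofBoundedCoords (v : σ ⊕ σ → ℝ) (j : σ) : ℝ :=
  (v (.inr j) - 2⁻¹) / v (.inl j)

theorem measurable_ofBoundedCoords : Measurable (ofBoundedCoords (σ := σ)) := by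
  unfold ofBoundedCoords
  fun_prop

variable {x y : σ → A}

theorem isSumSq_boundedCoords (hy : ∀ j, (1 + x j ^ 2) * y j = 1) (i : σ ⊕ σ) :
    IsSumSq (boundedCoords x y i) := by
  rcases i with j | j
  · exact isSumSq_of_one_add_sq_mul_eq_one (hy j)
  · have hhalf : algebraMap ℝ A 2⁻¹ * 2 = 1 := by
      rw [← map_ofNat (algebraMap ℝ A) 2, ← map_mul, inv_mul_cancel₀ two_ne_zero, map_one]
    have h : boundedCoords x y (.inr j) =
        algebraMap ℝ A 2⁻¹ * ((1 + x j) * (1 + x j)) * y j := by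
      rw [boundedCoords, Sum.elim_inr]
      linear_combination (-algebraMap ℝ A 2⁻¹) * hy j - x j * y j * hhalf
    exact h ▸ ((isSumSq_algebraMap_of_nonneg (by positivity)).mul (.mul_self _)).mul
      (isSumSq_of_one_add_sq_mul_eq_one (hy j))

theorem isSumSq_one_sub_boundedCoords (hy : ∀ j, (1 + x j ^ 2) * y j = 1) (i : σ ⊕ σ) :
    IsSumSq (1 - boundedCoords x y i) := by
  rcases i with j | j
  · have h : 1 - boundedCoords x y (.inl j) = x j * x j * y j := by
      rw [boundedCoords, Sum.elim_inl]
      linear_combination -hy j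
    exact h ▸ (IsSumSq.mul_self _).mul (isSumSq_of_one_add_sq_mul_eq_one (hy j))
  · have hhalf : algebraMap ℝ A 2⁻¹ + algebraMap ℝ A 2⁻¹ = 1 := by
      rw [← map_add, ← two_mul, mul_inv_cancel₀ two_ne_zero, map_one]
    have h : 1 - boundedCoords x y (.inr j) = boundedCoords (-x) y (.inr j) := by
      rw [boundedCoords, boundedCoords, Sum.elim_inr, Sum.elim_inr, Pi.neg_apply]
      linear_combination -hhalf
    exact h ▸ isSumSq_boundedCoords (fun j => by rw [Pi.neg_apply, neg_sq, hy j]) _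

theorem exists_eval_ofBoundedCoords_mul_eq (hy : ∀ j, (1 + x j ^ 2) * y j = 1)
    (p : MvPolynomial σ ℝ) :
    ∃ P N : MvPolynomial (σ ⊕ σ) ℝ, IsUnit (aeval (boundedCoords x y) N) ∧
      aeval x p * aeval (boundedCoords x y) N = aeval (boundedCoords x y) P ∧
      ∀ v, eval v N ≠ 0 → eval (ofBoundedCoords v) p * eval v N = eval v P := by
  induction p using MvPolynomial.induction_on with
  | C c => exact ⟨C c, 1, by simp, by simp, by simp⟩
  | add p q hp hq =>
    obtain ⟨P, M, hM, hPM, hPM'⟩ := hp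
    obtain ⟨Q, N, hN, hQN, hQN'⟩ := hq
    refine ⟨P * N + Q * M, M * N, by rw [map_mul]; exact hM.mul hN, ?_, fun v hv => ?_⟩
    · simp only [map_add, map_mul]
      linear_combination aeval (boundedCoords x y) N * hPM + aeval (boundedCoords x y) M * hQN
    · rw [map_mul] at hv
      simp only [map_add, map_mul]
      linear_combination eval v N * hPM' v (left_ne_zero_of_mul hv) +
        eval v M * hQN' v (right_ne_zero_of_mul hv)
  | mul_X p j hp =>
    obtain ⟨P, M, hM, hPM, hPM'⟩ := hp
    have hyj : IsUnit (aeval (boundedCoords x y) (X (.inl j) : MvPolynomial (σ ⊕ σ) ℝ)) := by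
      rw [aeval_X]
      exact .of_mul_eq_one_right _ (hy j)
    refine ⟨P * (X (.inr j) - C 2⁻¹), M * X (.inl j), by rw [map_mul]; exact hM.mul hyj, ?_,
      fun v hv => ?_⟩
    · simp only [map_mul, map_sub, aeval_X, aeval_C, boundedCoords, Sum.elim_inl,
        Sum.elim_inr] at hPM ⊢
      linear_combination x j * y j * hPM
    · rw [map_mul, eval_X] at hv
      have hcoord : ofBoundedCoords v j * v (.inl j) = v (.inr j) - 2⁻¹ :=
        div_mul_cancel₀ _ (right_ne_zero_of_mul hv)
      simp only [map_mul, map_sub, eval_X, eval_C]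
      linear_combination ofBoundedCoords v j * v (.inl j) * hPM' v (left_ne_zero_of_mul hv) +
        eval v P * hcoord

end BoundedCoordinates

section Transport

variable {σ A : Type*} [Countable σ] [CommRing A] [Algebra ℝ A]

theorem exists_measure_integral_eval_div_eval_eq (L : A →ₗ[ℝ] ℝ) (hL : ∀ a, 0 ≤ L (a ^ 2))
    {x : σ → A} (hx : ∀ j, IsUnit (1 + x j ^ 2)) :
    ∃ μ : Measure (σ → ℝ), ∀ q : MvPolynomial σ ℝ, IsUnit (aeval x q) →
      μ {t | eval t q = 0} = 0 ∧ ∀ (p : MvPolynomial σ ℝ) (a : A), a * aeval x q = aeval x p →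
        Integrable (fun t => eval t p / eval t q) μ ∧ L a = ∫ t, eval t p / eval t q ∂μ := by
  choose y hy using fun j => (hx j).exists_right_inv
  obtain ⟨ν, hν⟩ := exists_measure_unitCube_integral_eval_div_eval_eq hL (isSumSq_boundedCoords hy)
    (isSumSq_one_sub_boundedCoords hy)
  have hφ : Measurable fun v : unitCube (σ ⊕ σ) => ofBoundedCoords v.1 :=
    measurable_ofBoundedCoords.comp measurable_subtype_coe
  refine ⟨ν.map fun v => ofBoundedCoords v.1, fun q hq => ?_⟩
  obtain ⟨Q, N, hN, hQN, hQN'⟩ := exists_eval_ofBoundedCoords_mul_eq hy q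
  have hQ : IsUnit (aeval (boundedCoords x y) Q) := hQN ▸ hq.mul hN
  have hNae := (hν N hN).1
  have hQae := (hν Q hQ).1
  constructor
  · have hzero : MeasurableSet {t | eval t q = 0} :=
      measurableSet_eq_fun (continuous_eval q).measurable measurable_const
    rw [Measure.map_apply hφ hzero, ← compl_mem_ae_iff]
    filter_upwards [hNae, hQae] with v hNv hQv hqv
    exact hQv (by rw [← hQN' v.1 hNv, hqv, zero_mul])
  · intro p a ha
    obtain ⟨P, M, hM, hPM, hPM'⟩ := exists_eval_ofBoundedCoords_mul_eq hy p
    have hmeas : Measurable fun t : σ → ℝ => eval t p / eval t q :=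
      (continuous_eval p).measurable.div (continuous_eval q).measurable
    have hfrac : ∀ᵐ v ∂ν, eval v.1 (P * N) / eval v.1 (Q * M) =
        eval (ofBoundedCoords v.1) p / eval (ofBoundedCoords v.1) q := by
      filter_upwards [hNae, (hν M hM).1] with v hNv hMv
      rw [map_mul, map_mul, ← hPM' _ hMv, ← hQN' _ hNv]
      field_simp
    obtain ⟨hint, hLint⟩ := (hν (Q * M) (by rw [map_mul]; exact hQ.mul hM)).2 (P * N) a (by
      simp only [map_mul, ← hPM, ← hQN, ← ha]
      ring)
    constructor
    · rw [integrable_map_measure hmeas.aestronglyMeasurable hφ.aemeasurable]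
      exact hint.congr hfrac
    · rw [integral_map hφ.aemeasurable hmeas.aestronglyMeasurable, hLint]
      exact integral_congr_ae hfrac

end Transport

theorem rational_mp_denominators_all_coordinates_general {σ : Type*} [Countable σ]
    (𝔻 : Submonoid (MvPolynomial σ ℝ))
    (hq : ∀ j : σ, (1 + X j ^ 2 : MvPolynomial σ ℝ) ∈ 𝔻)
    (L : Localization 𝔻 →ₗ[ℝ] ℝ) (hL : ∀ a : Localization 𝔻, 0 ≤ L (a ^ 2)) :
    ∃ μ : Measure (σ → ℝ),
      (∀ q ∈ 𝔻, μ {x : σ → ℝ | eval x q = 0} = 0) ∧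
      ∀ (p : MvPolynomial σ ℝ) (q : MvPolynomial σ ℝ) (hq' : q ∈ 𝔻),
        Integrable (fun x : σ → ℝ => eval x p / eval x q) μ ∧
        L (Localization.mk p ⟨q, hq'⟩) = ∫ x : σ → ℝ, eval x p / eval x q ∂μ := by
  let x : σ → Localization 𝔻 := fun j => algebraMap (MvPolynomial σ ℝ) _ (X j)
  have haeval : ∀ p, aeval x p = algebraMap _ (Localization 𝔻) p := fun p =>
    (comp_aeval_apply X (Algebra.algHom ℝ (MvPolynomial σ ℝ) (Localization 𝔻)) p).symm.trans
      (congrArg _ (aeval_X_left_apply p))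
  have hunit : ∀ q ∈ 𝔻, IsUnit (aeval x q) := fun q hq =>
    haeval q ▸ IsLocalization.map_units (Localization 𝔻) ⟨q, hq⟩
  obtain ⟨μ, hμ⟩ := exists_measure_integral_eval_div_eval_eq L hL (x := x) fun j => by
    simpa using hunit _ (hq j)
  refine ⟨μ, fun q hq => (hμ q (hunit q hq)).1, fun p q hq => (hμ q (hunit q hq)).2 p _ ?_⟩
  rw [haeval, haeval, Localization.mk_eq_mk', IsLocalization.mk'_spec]

/-- **Example 3.9.**  Let `𝔻` be a finitely generated multiplicative set in
`ℝ[x₁,…,x_d]` (with `1 ∈ 𝔻`, `0 ∉ 𝔻`) containing the polynomials `1 + x_j²`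
for all `j = 1,…,d`.  Then every linear functional on `A = 𝔻⁻¹ℝ[x₁,…,x_d]`
that is nonnegative on squares is given by a positive Borel measure on `ℝ^d`
vanishing on the zero set of each `q ∈ 𝔻`. -/
theorem rational_mp_denominators_all_coordinates {d : ℕ}
    (𝔻 : Submonoid (MvPolynomial (Fin d) ℝ)) (h𝔻0 : (0 : MvPolynomial (Fin d) ℝ) ∉ 𝔻)
    (h𝔻fg : 𝔻.FG)
    (hq : ∀ j : Fin d, (1 + MvPolynomial.X j ^ 2 : MvPolynomial (Fin d) ℝ) ∈ 𝔻)
    (L : Localization 𝔻 →ₗ[ℝ] ℝ) (hL : ∀ a : Localization 𝔻, 0 ≤ L (a ^ 2)) :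
    ∃ μ : MeasureTheory.Measure (Fin d → ℝ),
      (∀ q ∈ 𝔻, μ {x : Fin d → ℝ | MvPolynomial.eval x q = 0} = 0) ∧
      ∀ (p : MvPolynomial (Fin d) ℝ) (q : MvPolynomial (Fin d) ℝ) (hq' : q ∈ 𝔻),
        MeasureTheory.Integrable
          (fun x : Fin d → ℝ => MvPolynomial.eval x p / MvPolynomial.eval x q) μ ∧
        L (Localization.mk p ⟨q, hq'⟩) =
          ∫ x : Fin d → ℝ, MvPolynomial.eval x p / MvPolynomial.eval x q ∂μ :=
  rational_mp_denominators_all_coordinates_general 𝔻 hq L hL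
end
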